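/- For the cardinality two-dimensional geometric knapsack problem with guillotine cuts and 90-degree rotations allowed (2GGK(R)-C) on an N×N knapsack, let OPT be an optimal solution. Then there is a universal constant C such that for every ε ∈ (0,1) there exists a subset APX of the input items and a guillotine-separable container packing of APX (items possibly rotated by 90 degrees) using a number of containers bounded by a constant depending only on ε, with |APX| ≥ (4/5 − C·ε)·|OPT|. -/

import Mathlib

/-- An axis-aligned rectangle, given by the coordinates of its corners. -/
structure Rect where
  x1 : ℝ
  x2 : ℝ
  y1 : ℝ
  y2 : ℝ

namespace Rect

def width (r : Rect) : ℝ := r.x2 - r.x1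

def height (r : Rect) : ℝ := r.y2 - r.y1

def area (r : Rect) : ℝ := r.width * r.height

/-- The open interior of an axis-aligned rectangle. -/
def toSet (r : Rect) : Set (ℝ × ℝ) :=
  {p : ℝ × ℝ | r.x1 < p.1 ∧ p.1 < r.x2 ∧ r.y1 < p.2 ∧ p.2 < r.y2}

/-- `r.SubRect s` : the rectangle `r` is contained in the rectangle `s`. -/
def SubRect (r s : Rect) : Prop :=
  s.x1 ≤ r.x1 ∧ r.x2 ≤ s.x2 ∧ s.y1 ≤ r.y1 ∧ r.y2 ≤ s.y2

noncomputable instance (r s : Rect) : Decidable (r.SubRect s) :=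
  inferInstanceAs (Decidable (s.x1 ≤ r.x1 ∧ r.x2 ≤ s.x2 ∧ s.y1 ≤ r.y1 ∧ r.y2 ≤ s.y2))

end Rect

/-- The square knapsack `[0,N] × [0,N]`. -/
def knapsack (N : ℝ) : Rect := ⟨0, N, 0, N⟩

/-- A placement of the items of `S` (with prescribed widths and heights) as
pairwise non-overlapping axis-aligned rectangles inside the piece `P`. -/
structure IsPacking {ι : Type*} (wd ht : ι → ℝ) (S : Finset ι)
    (place : ι → Rect) (P : Rect) : Prop where
  hw : ∀ i ∈ S, (place i).width = wd i
  hh : ∀ i ∈ S, (place i).height = ht i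
  hin : ∀ i ∈ S, (place i).SubRect P
  hdisj : ∀ i ∈ S, ∀ j ∈ S, i ≠ j → Disjoint (place i).toSet (place j).toSet

/-- Guillotine separability of the placed items of `S` inside the piece `P`:
either the piece contains at most one item, or some axis-parallel end-to-end cut
splits the piece into two rectangular subpieces, crossing the interior of no item,
and the items of each subpiece are recursively guillotine separable. -/
inductive GuillotineSep {ι : Type*} (place : ι → Rect) : Rect → Finset ι → Prop
  | base (P : Rect) (S : Finset ι) (hS : S.card ≤ 1) : GuillotineSep place P S
  | vcut (P : Rect) (S : Finset ι) (c : ℝ) (h1 : P.x1 < c) (h2 : c < P.x2)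
      (hcross : ∀ i ∈ S, (place i).x2 ≤ c ∨ c ≤ (place i).x1)
      (hL : GuillotineSep place ⟨P.x1, c, P.y1, P.y2⟩
              (S.filter fun i => (place i).x2 ≤ c))
      (hR : GuillotineSep place ⟨c, P.x2, P.y1, P.y2⟩
              (S.filter fun i => ¬ (place i).x2 ≤ c)) :
      GuillotineSep place P S
  | hcut (P : Rect) (S : Finset ι) (c : ℝ) (h1 : P.y1 < c) (h2 : c < P.y2)
      (hcross : ∀ i ∈ S, (place i).y2 ≤ c ∨ c ≤ (place i).y1)
      (hB : GuillotineSep place ⟨P.x1, P.x2, P.y1, c⟩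
              (S.filter fun i => (place i).y2 ≤ c))
      (hT : GuillotineSep place ⟨P.x1, P.x2, c, P.y2⟩
              (S.filter fun i => ¬ (place i).y2 ≤ c)) :
      GuillotineSep place P S

/-- A guillotine-separable packing of the items of `S` into the piece `P`. -/
def GuillotinePacking {ι : Type*} (wd ht : ι → ℝ) (S : Finset ι)
    (place : ι → Rect) (P : Rect) : Prop :=
  IsPacking wd ht S place P ∧ GuillotineSep place P S

/-- A placement of the items of `S` with 90 degree rotations allowed: each item is
placed with its prescribed dimensions or with width and height exchanged. -/
structure IsPackingRot {ι : Type*} (wd ht : ι → ℝ) (S : Finset ι)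
    (place : ι → Rect) (P : Rect) : Prop where
  hdims : ∀ i ∈ S, ((place i).width = wd i ∧ (place i).height = ht i) ∨
      ((place i).width = ht i ∧ (place i).height = wd i)
  hin : ∀ i ∈ S, (place i).SubRect P
  hdisj : ∀ i ∈ S, ∀ j ∈ S, i ≠ j → Disjoint (place i).toSet (place j).toSet

/-- Labels of containers. -/
inductive CLabel
  | large
  | horizontal
  | vertical
  | area

/-- The constraints of a container packing: a large container contains a single item,
in a horizontal container the items are stacked one above another, in a vertical
container the items are placed side by side, and every item placed in an area
container has width (resp. height) at most an `ε`-fraction of the container's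
width (resp. height). -/
def ContainerLabelOK {ι : Type*} (T : Finset ι) (place : ι → Rect)
    (k : ℕ) (cont : ℕ → Rect) (lab : ℕ → CLabel) (asg : ι → ℕ) (ε : ℝ) : Prop :=
  (∀ j < k, lab j = CLabel.large →
      ∀ i ∈ T, ∀ i' ∈ T, asg i = j → asg i' = j → i = i') ∧
  (∀ j < k, lab j = CLabel.horizontal →
      ∀ i ∈ T, ∀ i' ∈ T, asg i = j → asg i' = j → i ≠ i' →
        (place i).y2 ≤ (place i').y1 ∨ (place i').y2 ≤ (place i).y1) ∧
  (∀ j < k, lab j = CLabel.vertical →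
      ∀ i ∈ T, ∀ i' ∈ T, asg i = j → asg i' = j → i ≠ i' →
        (place i).x2 ≤ (place i').x1 ∨ (place i').x2 ≤ (place i).x1) ∧
  (∀ j < k, lab j = CLabel.area → ∀ i ∈ T, asg i = j →
      (place i).width ≤ ε * (cont j).width ∧ (place i).height ≤ ε * (cont j).height)

/-- A container packing of the items of `S` into the piece `P` with 90 degree
rotations allowed, using at most `k` pairwise non-overlapping containers. -/
def IsContainerPackingRot {ι : Type*} (wd ht : ι → ℝ) (ε : ℝ) (S : Finset ι)
    (place : ι → Rect) (P : Rect) (k : ℕ) : Prop :=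
  IsPackingRot wd ht S place P ∧
  ∃ (cont : ℕ → Rect) (lab : ℕ → CLabel) (asg : ι → ℕ),
    (∀ j < k, (cont j).SubRect P) ∧
    (∀ j < k, ∀ j' < k, j ≠ j' → Disjoint (cont j).toSet (cont j').toSet) ∧
    (∀ i ∈ S, asg i < k ∧ (place i).SubRect (cont (asg i))) ∧
    ContainerLabelOK S place k cont lab asg ε



namespace RCP

open Finset

variable {ι : Type} [DecidableEq ι]

/-- Position-free guillotine packings. -/
inductive Gp (w h : ι → ℝ) : ℝ → ℝ → Finset ι → Prop
  | nil (a b : ℝ) (ha : 0 ≤ a) (hb : 0 ≤ b) : Gp w h a b ∅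
  | single (a b : ℝ) (i : ι) (ha : 0 ≤ a) (hb : 0 ≤ b) (hw : w i ≤ a) (hh : h i ≤ b) :
      Gp w h a b {i}
  | vcut (a1 a2 b : ℝ) (S1 S2 : Finset ι) (hd : Disjoint S1 S2)
      (g1 : Gp w h a1 b S1) (g2 : Gp w h a2 b S2) : Gp w h (a1 + a2) b (S1 ∪ S2)
  | hcut (a b1 b2 : ℝ) (S1 S2 : Finset ι) (hd : Disjoint S1 S2)
      (g1 : Gp w h a b1 S1) (g2 : Gp w h a b2 S2) : Gp w h a (b1 + b2) (S1 ∪ S2)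

namespace Gp

variable {w h : ι → ℝ} {a b : ℝ} {S : Finset ι}

theorem nonneg (g : Gp w h a b S) : 0 ≤ a ∧ 0 ≤ b := by
  induction g with
  | nil a b ha hb => exact ⟨ha, hb⟩
  | single a b i ha hb hw hh => exact ⟨ha, hb⟩
  | vcut a1 a2 b S1 S2 hd g1 g2 ih1 ih2 => exact ⟨by linarith [ih1.1, ih2.1], ih1.2⟩
  | hcut a b1 b2 S1 S2 hd g1 g2 ih1 ih2 => exact ⟨ih1.1, by linarith [ih1.2, ih2.2]⟩

theorem mono (g : Gp w h a b S) : ∀ {a' b' : ℝ}, a ≤ a' → b ≤ b' → Gp w h a' b' S := by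
  induction g with
  | nil a b ha hb => intro a' b' h1 h2; exact .nil _ _ (by linarith) (by linarith)
  | single a b i ha hb hw hh =>
    intro a' b' h1 h2
    exact .single _ _ _ (by linarith) (by linarith) (by linarith) (by linarith)
  | vcut a1 a2 b S1 S2 hd g1 g2 ih1 ih2 =>
    intro a' b' h1 h2
    have := Gp.vcut a1 (a' - a1) b' S1 S2 hd (ih1 le_rfl h2) (ih2 (by linarith) h2)
    simpa using this
  | hcut a b1 b2 S1 S2 hd g1 g2 ih1 ih2 =>
    intro a' b' h1 h2
    have := Gp.hcut a' b1 (b' - b1) S1 S2 hd (ih1 h1 le_rfl) (ih2 h1 (by linarith))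
    simpa using this

theorem vcut' {a1 a2 : ℝ} {S1 S2 : Finset ι} (g1 : Gp w h a1 b S1) (g2 : Gp w h a2 b S2)
    (hd : Disjoint S1 S2) (hs : a1 + a2 ≤ a) : Gp w h a b (S1 ∪ S2) :=
  (Gp.vcut a1 a2 b S1 S2 hd g1 g2).mono hs le_rfl

theorem hcut' {b1 b2 : ℝ} {S1 S2 : Finset ι} (g1 : Gp w h a b1 S1) (g2 : Gp w h a b2 S2)
    (hd : Disjoint S1 S2) (hs : b1 + b2 ≤ b) : Gp w h a b (S1 ∪ S2) :=
  (Gp.hcut a b1 b2 S1 S2 hd g1 g2).mono le_rfl hs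

theorem subset (g : Gp w h a b S) : ∀ {S' : Finset ι}, S' ⊆ S → Gp w h a b S' := by
  induction g with
  | nil a b ha hb =>
    intro S' hs
    rw [subset_empty] at hs; subst hs; exact .nil _ _ ha hb
  | single a b i ha hb hw hh =>
    intro S' hs
    rcases subset_singleton_iff.1 hs with rfl | rfl
    · exact .nil _ _ ha hb
    · exact .single _ _ _ ha hb hw hh
  | vcut a1 a2 b S1 S2 hd g1 g2 ih1 ih2 =>
    intro S' hs
    have e : S' = (S' ∩ S1) ∪ (S' ∩ S2) := by
      rw [← inter_union_distrib_left]; exact (inter_eq_left.2 hs).symm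
    rw [e]
    exact .vcut _ _ _ _ _ (hd.mono inter_subset_right inter_subset_right)
      (ih1 inter_subset_right) (ih2 inter_subset_right)
  | hcut a b1 b2 S1 S2 hd g1 g2 ih1 ih2 =>
    intro S' hs
    have e : S' = (S' ∩ S1) ∪ (S' ∩ S2) := by
      rw [← inter_union_distrib_left]; exact (inter_eq_left.2 hs).symm
    rw [e]
    exact .hcut _ _ _ _ _ (hd.mono inter_subset_right inter_subset_right)
      (ih1 inter_subset_right) (ih2 inter_subset_right)

theorem swap (g : Gp w h a b S) : Gp h w b a S := by
  induction g with
  | nil a b ha hb => exact .nil _ _ hb ha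
  | single a b i ha hb hw hh => exact .single _ _ _ hb ha hh hw
  | vcut a1 a2 b S1 S2 hd g1 g2 ih1 ih2 => exact .hcut _ _ _ _ _ hd ih1 ih2
  | hcut a b1 b2 S1 S2 hd g1 g2 ih1 ih2 => exact .vcut _ _ _ _ _ hd ih1 ih2

theorem scale (g : Gp w h a b S) {c : ℝ} (hc : 0 ≤ c) :
    Gp (fun i => c * w i) (fun i => c * h i) (c * a) (c * b) S := by
  induction g with
  | nil a b ha hb => exact .nil _ _ (by positivity) (by positivity)
  | single a b i ha hb hw hh =>
    exact .single _ _ _ (by positivity) (by positivity) (mul_le_mul_of_nonneg_left hw hc)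
      (mul_le_mul_of_nonneg_left hh hc)
  | vcut a1 a2 b S1 S2 hd g1 g2 ih1 ih2 => rw [mul_add]; exact .vcut _ _ _ _ _ hd ih1 ih2
  | hcut a b1 b2 S1 S2 hd g1 g2 ih1 ih2 => rw [mul_add]; exact .hcut _ _ _ _ _ hd ih1 ih2

theorem area_le (g : Gp w h a b S) : (∀ i ∈ S, 0 ≤ w i ∧ 0 ≤ h i) →
    ∑ i ∈ S, w i * h i ≤ a * b := by
  induction g with
  | nil a b ha hb => intro _; simpa using mul_nonneg ha hb
  | single a b i ha hb hw hh =>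
    intro hp
    have := hp i (by simp)
    simpa using mul_le_mul hw hh this.2 ha
  | vcut a1 a2 b S1 S2 hd g1 g2 ih1 ih2 =>
    intro hp
    rw [sum_union hd, add_mul]
    exact add_le_add (ih1 fun i hi => hp i (mem_union_left _ hi))
      (ih2 fun i hi => hp i (mem_union_right _ hi))
  | hcut a b1 b2 S1 S2 hd g1 g2 ih1 ih2 =>
    intro hp
    rw [sum_union hd, mul_add]
    exact add_le_add (ih1 fun i hi => hp i (mem_union_left _ hi))
      (ih2 fun i hi => hp i (mem_union_right _ hi))

theorem dims (g : Gp w h a b S) : (∀ i ∈ S, w i ≤ a ∧ h i ≤ b) := by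
  induction g with
  | nil a b ha hb => simp
  | single a b i ha hb hw hh => simpa using ⟨hw, hh⟩
  | vcut a1 a2 b S1 S2 hd g1 g2 ih1 ih2 =>
    intro i hi
    have n1 := g1.nonneg
    have n2 := g2.nonneg
    rcases mem_union.1 hi with hi | hi
    · exact ⟨by linarith [(ih1 i hi).1], (ih1 i hi).2⟩
    · exact ⟨by linarith [(ih2 i hi).1], (ih2 i hi).2⟩
  | hcut a b1 b2 S1 S2 hd g1 g2 ih1 ih2 =>
    intro i hi
    have n1 := g1.nonneg
    have n2 := g2.nonneg
    rcases mem_union.1 hi with hi | hi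
    · exact ⟨(ih1 i hi).1, by linarith [(ih1 i hi).2]⟩
    · exact ⟨(ih2 i hi).1, by linarith [(ih2 i hi).2]⟩

theorem congr' (g : Gp w h a b S) {w' h' : ι → ℝ} : (∀ i ∈ S, w' i = w i ∧ h' i = h i) →
    Gp w' h' a b S := by
  induction g with
  | nil a b ha hb => intro _; exact .nil _ _ ha hb
  | single a b i ha hb hw hh =>
    intro hp
    have := hp i (by simp)
    exact .single _ _ _ ha hb (by rw [this.1]; exact hw) (by rw [this.2]; exact hh)
  | vcut a1 a2 b S1 S2 hd g1 g2 ih1 ih2 =>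
    intro hp
    exact .vcut _ _ _ _ _ hd (ih1 fun i hi => hp i (mem_union_left _ hi))
      (ih2 fun i hi => hp i (mem_union_right _ hi))
  | hcut a b1 b2 S1 S2 hd g1 g2 ih1 ih2 =>
    intro hp
    exact .hcut _ _ _ _ _ hd (ih1 fun i hi => hp i (mem_union_left _ hi))
      (ih2 fun i hi => hp i (mem_union_right _ hi))

end Gp

/-- Guillotine packings with recorded vertical positions. -/
inductive Gy (w h u : ι → ℝ) : ℝ → ℝ → ℝ → Finset ι → Prop
  | nil (a y0 y1 : ℝ) (ha : 0 ≤ a) (hb : y0 ≤ y1) : Gy w h u a y0 y1 ∅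
  | single (a y0 y1 : ℝ) (i : ι) (ha : 0 ≤ a) (hb : y0 ≤ y1) (hw : w i ≤ a)
      (h0 : y0 ≤ u i) (h1 : u i + h i ≤ y1) : Gy w h u a y0 y1 {i}
  | vcut (a1 a2 y0 y1 : ℝ) (S1 S2 : Finset ι) (hd : Disjoint S1 S2)
      (g1 : Gy w h u a1 y0 y1 S1) (g2 : Gy w h u a2 y0 y1 S2) :
      Gy w h u (a1 + a2) y0 y1 (S1 ∪ S2)
  | hcut (a y0 c y1 : ℝ) (S1 S2 : Finset ι) (hd : Disjoint S1 S2)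
      (g1 : Gy w h u a y0 c S1) (g2 : Gy w h u a c y1 S2) : Gy w h u a y0 y1 (S1 ∪ S2)

theorem Gy.congr_u {w h u u' : ι → ℝ} {a y0 y1 : ℝ} {S : Finset ι} (g : Gy w h u a y0 y1 S) :
    (∀ i ∈ S, u' i = u i) → Gy w h u' a y0 y1 S := by
  induction g with
  | nil a y0 y1 ha hb => intro _; exact .nil _ _ _ ha hb
  | single a y0 y1 i ha hb hw h0 h1 =>
    intro hp
    have := hp i (by simp)
    exact .single _ _ _ _ ha hb hw (by rw [this]; exact h0) (by rw [this]; exact h1)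
  | vcut a1 a2 y0 y1 S1 S2 hd g1 g2 ih1 ih2 =>
    intro hp
    exact .vcut _ _ _ _ _ _ hd (ih1 fun i hi => hp i (mem_union_left _ hi))
      (ih2 fun i hi => hp i (mem_union_right _ hi))
  | hcut a y0 c y1 S1 S2 hd g1 g2 ih1 ih2 =>
    intro hp
    exact .hcut _ _ _ _ _ _ hd (ih1 fun i hi => hp i (mem_union_left _ hi))
      (ih2 fun i hi => hp i (mem_union_right _ hi))

theorem Gp.toGy {w h : ι → ℝ} {a b : ℝ} {S : Finset ι} (g : Gp w h a b S) :
    ∀ y0 : ℝ, ∃ u, Gy w h u a y0 (y0 + b) S := by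
  induction g with
  | nil a b ha hb => intro y0; exact ⟨fun _ => 0, .nil _ _ _ ha (by linarith)⟩
  | single a b i ha hb hw hh =>
    intro y0
    exact ⟨fun _ => y0, .single _ _ _ _ ha (by linarith) hw le_rfl (by linarith)⟩
  | vcut a1 a2 b S1 S2 hd g1 g2 ih1 ih2 =>
    intro y0
    obtain ⟨u1, h1⟩ := ih1 y0
    obtain ⟨u2, h2⟩ := ih2 y0
    refine ⟨fun i => if i ∈ S1 then u1 i else u2 i, .vcut _ _ _ _ _ _ hd (h1.congr_u ?_)
      (h2.congr_u ?_)⟩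
    · intro i hi; simp [hi]
    · intro i hi; simp [disjoint_right.1 hd hi]
  | hcut a b1 b2 S1 S2 hd g1 g2 ih1 ih2 =>
    intro y0
    obtain ⟨u1, h1⟩ := ih1 y0
    obtain ⟨u2, h2⟩ := ih2 (y0 + b1)
    rw [add_assoc] at h2
    refine ⟨fun i => if i ∈ S1 then u1 i else u2 i, .hcut _ _ _ _ _ _ hd (h1.congr_u ?_)
      (h2.congr_u ?_)⟩
    · intro i hi; simp [hi]
    · intro i hi; simp [disjoint_right.1 hd hi]

namespace Gy

variable {w h u : ι → ℝ} {a y0 y1 : ℝ} {S : Finset ι}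

theorem toGp (g : Gy w h u a y0 y1 S) : Gp w h a (y1 - y0) S := by
  induction g with
  | nil a y0 y1 ha hb => exact .nil _ _ ha (by linarith)
  | single a y0 y1 i ha hb hw h0 h1 => exact .single _ _ _ ha (by linarith) hw (by linarith)
  | vcut a1 a2 y0 y1 S1 S2 hd g1 g2 ih1 ih2 => exact .vcut _ _ _ _ _ hd ih1 ih2
  | hcut a y0 c y1 S1 S2 hd g1 g2 ih1 ih2 => exact ih1.hcut' ih2 hd (by linarith)

theorem le (g : Gy w h u a y0 y1 S) : y0 ≤ y1 := by linarith [g.toGp.nonneg.2]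

theorem subset (g : Gy w h u a y0 y1 S) : ∀ {S' : Finset ι}, S' ⊆ S → Gy w h u a y0 y1 S' := by
  induction g with
  | nil a y0 y1 ha hb =>
    intro S' hs
    rw [subset_empty] at hs; subst hs; exact .nil _ _ _ ha hb
  | single a y0 y1 i ha hb hw h0 h1 =>
    intro S' hs
    rcases subset_singleton_iff.1 hs with rfl | rfl
    · exact .nil _ _ _ ha hb
    · exact .single _ _ _ _ ha hb hw h0 h1
  | vcut a1 a2 y0 y1 S1 S2 hd g1 g2 ih1 ih2 =>
    intro S' hs
    have e : S' = (S' ∩ S1) ∪ (S' ∩ S2) := by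
      rw [← inter_union_distrib_left]; exact (inter_eq_left.2 hs).symm
    rw [e]
    exact .vcut _ _ _ _ _ _ (hd.mono inter_subset_right inter_subset_right)
      (ih1 inter_subset_right) (ih2 inter_subset_right)
  | hcut a y0 c y1 S1 S2 hd g1 g2 ih1 ih2 =>
    intro S' hs
    have e : S' = (S' ∩ S1) ∪ (S' ∩ S2) := by
      rw [← inter_union_distrib_left]; exact (inter_eq_left.2 hs).symm
    rw [e]
    exact .hcut _ _ _ _ _ _ (hd.mono inter_subset_right inter_subset_right)
      (ih1 inter_subset_right) (ih2 inter_subset_right)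

theorem bounds (g : Gy w h u a y0 y1 S) : ∀ i ∈ S, w i ≤ a ∧ y0 ≤ u i ∧ u i + h i ≤ y1 := by
  induction g with
  | nil a y0 y1 ha hb => simp
  | single a y0 y1 i ha hb hw h0 h1 => simpa using ⟨hw, h0, h1⟩
  | vcut a1 a2 y0 y1 S1 S2 hd g1 g2 ih1 ih2 =>
    intro i hi
    have n1 := g1.toGp.nonneg.1
    have n2 := g2.toGp.nonneg.1
    rcases mem_union.1 hi with hi | hi
    · exact ⟨by linarith [(ih1 i hi).1], (ih1 i hi).2⟩
    · exact ⟨by linarith [(ih2 i hi).1], (ih2 i hi).2⟩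
  | hcut a y0 c y1 S1 S2 hd g1 g2 ih1 ih2 =>
    intro i hi
    have n1 := g1.le
    have n2 := g2.le
    rcases mem_union.1 hi with hi | hi
    · exact ⟨(ih1 i hi).1, (ih1 i hi).2.1, by linarith [(ih1 i hi).2.2]⟩
    · exact ⟨(ih2 i hi).1, by linarith [(ih2 i hi).2.1], (ih2 i hi).2.2⟩

/-- At every level the total width is at most `a`. -/
theorem level (g : Gy w h u a y0 y1 S) : (∀ i ∈ S, 0 ≤ w i) → ∀ y : ℝ,
    ∑ i ∈ S.filter (fun i => u i ≤ y ∧ y < u i + h i), w i ≤ a := by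
  induction g with
  | nil a y0 y1 ha hb => simpa using ha
  | single a y0 y1 i ha hb hw h0 h1 =>
    intro hp y
    rw [filter_singleton]
    split_ifs <;> simp [hw, ha]
  | vcut a1 a2 y0 y1 S1 S2 hd g1 g2 ih1 ih2 =>
    intro hp y
    rw [filter_union, sum_union (disjoint_filter_filter hd)]
    exact add_le_add (ih1 (fun i hi => hp i (mem_union_left _ hi)) y)
      (ih2 (fun i hi => hp i (mem_union_right _ hi)) y)
  | hcut a y0 c y1 S1 S2 hd g1 g2 ih1 ih2 =>
    intro hp y
    rw [filter_union, sum_union (disjoint_filter_filter hd)]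
    have b1 := g1.bounds
    have b2 := g2.bounds
    rcases lt_or_ge y c with hy | hy
    · have : S2.filter (fun i => u i ≤ y ∧ y < u i + h i) = ∅ := by
        apply filter_false_of_mem
        rintro i hi ⟨h1, h2⟩
        linarith [(b2 i hi).2.1]
      rw [this]
      simpa using ih1 (fun i hi => hp i (mem_union_left _ hi)) y
    · have : S1.filter (fun i => u i ≤ y ∧ y < u i + h i) = ∅ := by
        apply filter_false_of_mem
        rintro i hi ⟨h1, h2⟩
        linarith [(b1 i hi).2.2]
      rw [this]
      simpa using ih2 (fun i hi => hp i (mem_union_right _ hi)) y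

/-- Removing an untouched horizontal strip. -/
theorem squeeze (g : Gy w h u a y0 y1 S) (z s : ℝ) (hs : 0 ≤ s) :
    (∀ i ∈ S, 0 ≤ h i ∧ (u i + h i ≤ z ∨ z + s ≤ u i)) →
    Gp w h a (max (min y1 z) (y1 - s) - max (min y0 z) (y0 - s)) S := by
  have mono : ∀ x y : ℝ, x ≤ y → max (min x z) (x - s) ≤ max (min y z) (y - s) := by
    intro x y hxy
    exact max_le_max (min_le_min_right _ hxy) (by linarith)
  induction g with
  | nil a y0 y1 ha hb => intro _; exact .nil _ _ ha (by linarith [mono _ _ hb])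
  | single a y0 y1 i ha hb hw h0 h1 =>
    intro hp
    obtain ⟨hpos, hp⟩ := hp i (by simp)
    refine .single _ _ _ ha (by linarith [mono _ _ hb]) hw ?_
    have m1 := mono _ _ h0
    have m2 := mono _ _ h1
    rcases hp with hp | hp
    · have e1 : max (min (u i + h i) z) (u i + h i - s) = u i + h i := by
        rw [min_eq_left hp, max_eq_left (by linarith)]
      have e2 : max (min (u i) z) (u i - s) = u i := by
        rw [min_eq_left (by linarith), max_eq_left (by linarith)]
      linarith
    · have e1 : max (min (u i + h i) z) (u i + h i - s) = u i + h i - s := by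
        rw [min_eq_right (by linarith), max_eq_right (by linarith)]
      have e2 : max (min (u i) z) (u i - s) = u i - s := by
        rw [min_eq_right (by linarith), max_eq_right (by linarith)]
      linarith
  | vcut a1 a2 y0 y1 S1 S2 hd g1 g2 ih1 ih2 =>
    intro hp
    exact .vcut _ _ _ _ _ hd (ih1 fun i hi => hp i (mem_union_left _ hi))
      (ih2 fun i hi => hp i (mem_union_right _ hi))
  | hcut a y0 c y1 S1 S2 hd g1 g2 ih1 ih2 =>
    intro hp
    exact (ih1 fun i hi => hp i (mem_union_left _ hi)).hcut'
      (ih2 fun i hi => hp i (mem_union_right _ hi)) hd (by linarith)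

end Gy

/-- Contraction of a packing of flat items in the vertical direction. -/
theorem pure_contract {w h : ι → ℝ} {a b s : ℝ} {S : Finset ι} {L : ℕ} (hL : 0 < L)
    (g : Gp w h a b S) (hs : 0 < s) (hh : ∀ i ∈ S, 0 < h i ∧ h i ≤ s) (hb : 2 * L * s ≤ b) :
    ∃ E ⊆ S, L * E.card ≤ S.card ∧ Gp w h a (b - s) (S \ E) := by
  obtain ⟨u, gu⟩ := g.toGy 0
  rw [zero_add] at gu
  let E : ℕ → Finset ι := fun j =>
    S.filter (fun i => ¬ (u i + h i ≤ 2 * j * s ∨ 2 * j * s + s ≤ u i))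
  have hdis : ∀ j ∈ range L, ∀ k ∈ range L, j ≠ k → Disjoint (E j) (E k) := by
    have key : ∀ j k : ℕ, j < k → Disjoint (E j) (E k) := by
      intro j k hjk
      rw [disjoint_left]
      intro i hi hk
      simp only [E, mem_filter, not_or, not_le] at hi hk
      have h1 : (j : ℝ) + 1 ≤ k := by exact_mod_cast hjk
      have := hh i hi.1
      nlinarith [hi.2.2, hk.2.1]
    intro j _ k _ hjk
    rcases lt_or_gt_of_ne hjk with h | h
    · exact key _ _ h
    · exact (key _ _ h).symm
  have hsum : ∑ j ∈ range L, (E j).card ≤ S.card := by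
    rw [← card_biUnion hdis]
    exact card_le_card (biUnion_subset.2 fun j _ => filter_subset _ _)
  obtain ⟨j, hj, hjm⟩ : ∃ j ∈ range L, L * (E j).card ≤ S.card := by
    by_contra hcon
    push Not at hcon
    have : ∑ j ∈ range L, S.card < ∑ j ∈ range L, L * (E j).card :=
      sum_lt_sum_of_nonempty ⟨0, mem_range.2 hL⟩ hcon
    rw [← mul_sum, sum_const, card_range, smul_eq_mul] at this
    exact absurd (Nat.mul_le_mul_left L hsum) (not_le.2 this)
  refine ⟨E j, filter_subset _ _, hjm, ?_⟩
  have h1 : (j : ℝ) + 1 ≤ L := by exact_mod_cast mem_range.1 hj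
  have hj0 : (0 : ℝ) ≤ j := Nat.cast_nonneg j
  have := (gu.subset (sdiff_subset : S \ E j ⊆ S)).squeeze (2 * j * s) s hs.le (by
    intro i hi
    simp only [E, mem_sdiff, mem_filter, not_and, not_not] at hi
    exact ⟨(hh i hi.1).1.le, hi.2 hi.1⟩)
  have hz : 0 ≤ 2 * j * s := by positivity
  have hz2 : 2 * j * s + 2 * s ≤ b := by nlinarith
  rw [min_eq_right (by linarith : 2 * j * s ≤ b), max_eq_right (by linarith),
    min_eq_left hz, max_eq_left (by linarith)] at this
  exact this.mono le_rfl (by linarith)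

end RCP


namespace RCP

open Finset

variable {ι : Type} [DecidableEq ι]

/-- Long items: short side `p ≤ μ`, long side `q > δ`. -/
def Lng (w h p q : ι → ℝ) (δ μ : ℝ) (T : Finset ι) : Prop :=
  ∀ i ∈ T, 0 < p i ∧ p i ≤ μ ∧ δ < q i ∧ ((w i = q i ∧ h i = p i) ∨ (w i = p i ∧ h i = q i))

theorem Lng.swap {w h p q : ι → ℝ} {δ μ : ℝ} {T : Finset ι} (H : Lng w h p q δ μ T) :
    Lng h w p q δ μ T := by
  intro i hi
  obtain ⟨h1, h2, h3, h4⟩ := H i hi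
  exact ⟨h1, h2, h3, h4.symm.imp And.symm And.symm⟩

theorem Lng.mono {w h p q : ι → ℝ} {δ μ : ℝ} {T T' : Finset ι} (H : Lng w h p q δ μ T)
    (hs : T' ⊆ T) : Lng w h p q δ μ T' := fun i hi => H i (hs hi)

def Contr (w h p : ι → ℝ) (δ μ : ℝ) (L : ℕ) (a b : ℝ) (T Ch : Finset ι) (d : ι → ℝ) : Prop :=
  ∀ X0 Y0 t s : ℝ, 0 ≤ X0 → 0 ≤ Y0 → t ≤ δ / 2 → X0 + Y0 ≤ t → δ ≤ a + X0 → δ ≤ b + Y0 →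
    μ ≤ s → 8 * L * s ≤ t → ∀ R ⊆ T, (∀ i ∈ R, t < d i + if i ∈ Ch then X0 + Y0 else 0) →
    ∃ E ⊆ T, L * E.card ≤ T.card ∧
      (Gp w h (a + X0 - s) b (R \ E) ∨ Gp w h a (b + Y0 - s) (R \ E))

/-- The contraction claim. -/
def BC (w h p : ι → ℝ) (δ μ : ℝ) (L : ℕ) (a b : ℝ) (T : Finset ι) : Prop :=
  ∃ (Ch : Finset ι) (d : ι → ℝ), Ch ⊆ T ∧
    (∀ t ≤ δ / 2, δ * ∑ i ∈ Ch.filter (fun i => d i ≤ t), p i ≤ max t 0) ∧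
    (∀ t ≤ δ / 2, δ * ∑ i ∈ (T \ Ch).filter (fun i => d i ≤ t), p i
      ≤ (2 * (max a δ * max b δ) / δ ^ 2 - 2) * max t 0) ∧
    Contr w h p δ μ L a b T Ch d

theorem BC.swap {w h p : ι → ℝ} {δ μ : ℝ} {L : ℕ} {a b : ℝ} {T : Finset ι}
    (H : BC w h p δ μ L a b T) : BC h w p δ μ L b a T := by
  obtain ⟨Ch, d, h1, h2, h3, h4⟩ := H
  refine ⟨Ch, d, h1, h2, ?_, ?_⟩
  · rw [mul_comm (max b δ)]; exact h3
  · intro X0 Y0 t s a1 a2 a3 a4 a5 a6 a7 a8 R hR hR'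
    obtain ⟨E, e1, e2, e3⟩ := h4 Y0 X0 t s a2 a1 a3 (by linarith) a6 a5 a7 a8 R hR
      (by rw [add_comm Y0]; exact hR')
    exact ⟨E, e1, e2, e3.symm.imp Gp.swap Gp.swap⟩

theorem kappa_nonneg {δ a b : ℝ} (hδ : 0 < δ) : 0 ≤ 2 * (max a δ * max b δ) / δ ^ 2 - 2 := by
  have h1 : δ * δ ≤ max a δ * max b δ :=
    mul_le_mul (le_max_right _ _) (le_max_right _ _) hδ.le (hδ.le.trans (le_max_right _ _))
  have : 2 ≤ 2 * (max a δ * max b δ) / δ ^ 2 := by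
    rw [le_div_iff₀ (by positivity)]; nlinarith
  linarith

theorem kappa_mono {δ a b a' b' : ℝ} (hδ : 0 < δ) (ha : a ≤ a') (hb : b ≤ b') :
    2 * (max a δ * max b δ) / δ ^ 2 - 2 ≤ 2 * (max a' δ * max b' δ) / δ ^ 2 - 2 := by
  have h1 : max a δ * max b δ ≤ max a' δ * max b' δ :=
    mul_le_mul (max_le_max_right _ ha) (max_le_max_right _ hb)
      (hδ.le.trans (le_max_right _ _)) (hδ.le.trans (le_max_right _ _))
  gcongr

/-- The total thickness of vertical items in a piece. -/
theorem pure_thick {w h p q : ι → ℝ} {δ μ a b : ℝ} {T : Finset ι} (hδ : 0 < δ)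
    (H : Lng w h p q δ μ T) (g : Gp w h a b T) (hb : b ≤ 1) (hnoH : ∀ i ∈ T, ¬ δ < w i) :
    δ * ∑ i ∈ T, p i ≤ a := by
  have h1 : ∑ i ∈ T, w i * h i ≤ a * b := g.area_le (by
    intro i hi
    obtain ⟨h1, h2, h3, h4⟩ := H i hi
    rcases h4 with ⟨h4, h5⟩ | ⟨h4, h5⟩ <;> rw [h4, h5] <;> constructor <;> linarith)
  have h2 : δ * ∑ i ∈ T, p i ≤ ∑ i ∈ T, w i * h i := by
    rw [mul_sum]
    apply sum_le_sum
    intro i hi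
    obtain ⟨h1, h2, h3, h4⟩ := H i hi
    rcases h4 with ⟨h4, h5⟩ | ⟨h4, h5⟩
    · exact absurd (by rw [h4]; exact h3) (hnoH i hi)
    · rw [h4, h5]; nlinarith
  have := g.nonneg
  nlinarith

/-- the case without horizontal items -/
theorem BC_noH {w h p q : ι → ℝ} {δ μ a b : ℝ} {T : Finset ι} {L : ℕ} (hL : 0 < L)
    (hδ : 0 < δ) (hμ : 0 < μ) (H : Lng w h p q δ μ T) (g : Gp w h a b T)
    (hnoH : ∀ i ∈ T, ¬ δ < w i) : BC w h p δ μ L a b T := by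
  refine ⟨∅, fun _ => δ, empty_subset _, ?_, ?_, ?_⟩
  · intro t _; simp
  · intro t ht
    have : (T \ ∅).filter (fun _ => δ ≤ t) = ∅ := by
      apply filter_false_of_mem; intro i _; linarith
    rw [this]
    simpa using mul_nonneg (kappa_nonneg hδ) (le_max_right t 0)
  · intro X0 Y0 t s a1 a2 a3 a4 a5 a6 a7 a8 R hR hR'
    have hL1 : (1 : ℝ) ≤ L := by exact_mod_cast hL
    obtain ⟨E, e1, e2, e3⟩ := pure_contract hL g.swap (s := s) (by linarith) (by
      intro i hi
      obtain ⟨h1, h2, h3, h4⟩ := H i hi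
      rcases h4 with ⟨h4, h5⟩ | ⟨h4, h5⟩
      · exact absurd (by rw [h4]; exact h3) (hnoH i hi)
      · rw [h4]; exact ⟨h1, by linarith⟩) (by nlinarith)
    refine ⟨E, e1, e2, Or.inl ?_⟩
    exact (e3.swap.mono (by linarith) le_rfl).subset (sdiff_subset_sdiff hR le_rfl)

theorem BC_peel {w h p q : ι → ℝ} {δ μ a1 a2 b : ℝ} {T1 T2 : Finset ι} {L : ℕ} (hL : 0 < L)
    (hδ : 0 < δ) (hμ : 0 < μ) (hd : Disjoint T1 T2) (H1 : Lng w h p q δ μ T1)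
    (g1 : Gp w h a1 b T1) (g2 : Gp w h a2 b T2) (hb : b ≤ 1)
    (hnoH : ∀ i ∈ T1, ¬ δ < w i) (B2 : BC w h p δ μ L a2 b T2) :
    BC w h p δ μ L (a1 + a2) b (T1 ∪ T2) := by
  obtain ⟨Ch, d, h1, h2, h3, h4⟩ := B2
  have n1 := g1.nonneg
  have n2 := g2.nonneg
  have hT1 : ∀ i ∈ T2, i ∉ T1 := fun i hi => disjoint_right.1 hd hi
  let d' : ι → ℝ := fun i => if i ∈ T1 then a1 else if i ∈ Ch then a1 + d i else d i
  have hd1 : ∀ i ∈ T1, d' i = a1 := by intro i hi; simp [d', hi]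
  have hdC : ∀ i ∈ Ch, d' i = a1 + d i := by
    intro i hi; simp only [d', hT1 i (h1 hi), if_false, hi, if_true]
  have hdN : ∀ i ∈ T2 \ Ch, d' i = d i := by
    intro i hi
    rw [mem_sdiff] at hi
    simp only [d', hT1 i hi.1, if_false, hi.2]
  refine ⟨T1 ∪ Ch, d', union_subset_union_right h1, ?_, ?_, ?_⟩
  · intro t ht
    rw [filter_union, sum_union (disjoint_filter_filter (hd.mono_right h1)), mul_add]
    have e1 : Ch.filter (fun i => d' i ≤ t) = Ch.filter (fun i => d i ≤ t - a1) := by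
      apply filter_congr; intro i hi; rw [hdC i hi]; constructor <;> intro <;> linarith
    have k2 := h2 (t - a1) (by linarith)
    rw [e1]
    rcases le_or_gt a1 t with hat | hat
    · have e2 : T1.filter (fun i => d' i ≤ t) = T1 := by
        apply filter_true_of_mem; intro i hi; rw [hd1 i hi]; exact hat
      rw [e2]
      have := pure_thick hδ H1 g1 hb hnoH
      rw [max_eq_left (by linarith)] at k2 ⊢
      linarith
    · have e2 : T1.filter (fun i => d' i ≤ t) = ∅ := by
        apply filter_false_of_mem; intro i hi; rw [hd1 i hi]; linarith
      rw [e2]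
      rw [max_eq_right (by linarith)] at k2
      simp only [sum_empty, mul_zero, zero_add]
      exact k2.trans (le_max_right _ _)
  · intro t ht
    have e0 : (T1 ∪ T2) \ (T1 ∪ Ch) = T2 \ Ch := by
      ext i
      simp only [mem_sdiff, mem_union]
      constructor
      · rintro ⟨h | h, h'⟩ <;> tauto
      · rintro ⟨h, h'⟩; have := hT1 i h; tauto
    have e1 : (T2 \ Ch).filter (fun i => d' i ≤ t) = (T2 \ Ch).filter (fun i => d i ≤ t) := by
      apply filter_congr; intro i hi; rw [hdN i hi]
    rw [e0, e1]
    refine (h3 t ht).trans ?_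
    exact mul_le_mul_of_nonneg_right (kappa_mono hδ (by linarith) le_rfl) (le_max_right _ _)
  · intro X0 Y0 t s c1 c2 c3 c4 c5 c6 c7 c8 R hR hR'
    have hL1 : (1 : ℝ) ≤ L := by exact_mod_cast hL
    have hs0 : 0 < s := by linarith
    have hLs : s ≤ L * s := by nlinarith
    have gU : Gp w h (a1 + a2) b (T1 ∪ T2) := .vcut _ _ _ _ _ hd g1 g2
    rcases le_or_gt (X0 + Y0 + a1) t with hc | hc
    · -- continue with the child
      have hRT2 : R ⊆ T2 := by
        intro i hi
        rcases mem_union.1 (hR hi) with h | h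
        · have := hR' i hi
          rw [hd1 i h, if_pos (mem_union_left _ h)] at this
          linarith
        · exact h
      obtain ⟨E, e1, e2, e3⟩ := h4 (X0 + a1) Y0 t s (by linarith) c2 c3 (by linarith)
        (by linarith) c6 c7 c8 R hRT2 (by
          intro i hi
          have := hR' i hi
          by_cases hC : i ∈ Ch
          · rw [hdC i hC, if_pos (mem_union_right _ hC)] at this
            rw [if_pos hC]; linarith
          · have hi2 := hRT2 hi
            rw [hdN i (mem_sdiff.2 ⟨hi2, hC⟩), if_neg (by
              rw [mem_union]; have := hT1 i hi2; tauto)] at this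
            rw [if_neg hC]; exact this)
      refine ⟨E, e1.trans subset_union_right,
        e2.trans (card_le_card subset_union_right), ?_⟩
      rcases e3 with e3 | e3
      · exact Or.inl (e3.mono (by linarith) le_rfl)
      · exact Or.inr (e3.mono (by linarith) le_rfl)
    · rcases le_or_gt (t / 2) (X0 + Y0) with hh | hh
      · refine ⟨∅, empty_subset _, by simp, ?_⟩
        rw [sdiff_empty]
        rcases le_or_gt (t / 4) X0 with hx | hx
        · left; exact (gU.mono (by linarith) le_rfl).subset hR
        · right; exact (gU.mono le_rfl (by linarith)).subset hR
      · obtain ⟨E, e1, e2, e3⟩ := pure_contract hL g1.swap (s := s) hs0 (by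
          intro i hi
          obtain ⟨h1, h2, h3, h4⟩ := H1 i hi
          rcases h4 with ⟨h4, h5⟩ | ⟨h4, h5⟩
          · exact absurd (by rw [h4]; exact h3) (hnoH i hi)
          · rw [h4]; exact ⟨h1, by linarith⟩) (by nlinarith)
        refine ⟨E, e1.trans subset_union_left, e2.trans (card_le_card subset_union_left),
          Or.inl ?_⟩
        have := e3.swap.vcut' g2 (hd.mono_left sdiff_subset) (a := a1 + a2 + X0 - s)
          (by linarith)
        refine this.subset ?_
        intro i hi
        rw [mem_sdiff] at hi
        rcases mem_union.1 (hR hi.1) with h | h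
        · exact mem_union_left _ (mem_sdiff.2 ⟨h, hi.2⟩)
        · exact mem_union_right _ h

theorem BC_branch {w h p : ι → ℝ} {δ μ a1 a2 b : ℝ} {T1 T2 : Finset ι} {L : ℕ}
    (hδ : 0 < δ) (hd : Disjoint T1 T2)
    (g1 : Gp w h a1 b T1) (g2 : Gp w h a2 b T2) (ha1 : δ ≤ a1) (ha2 : δ ≤ a2) (hb : δ ≤ b)
    (hμ : 0 < μ)
    (B1 : BC w h p δ μ L a1 b T1) (B2 : BC w h p δ μ L a2 b T2) :
    BC w h p δ μ L (a1 + a2) b (T1 ∪ T2) := by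
  obtain ⟨C1, d1, p1, p2, p3, p4⟩ := B1
  obtain ⟨C2, d2, q1, q2, q3, q4⟩ := B2
  have hT1 : ∀ i ∈ T2, i ∉ T1 := fun i hi => disjoint_right.1 hd hi
  let d' : ι → ℝ := fun i => if i ∈ T1 then d1 i else d2 i
  have hd1 : ∀ i ∈ T1, d' i = d1 i := by intro i hi; simp [d', hi]
  have hd2 : ∀ i ∈ T2, d' i = d2 i := by intro i hi; simp [d', hT1 i hi]
  refine ⟨∅, d', empty_subset _, by simp, ?_, ?_⟩
  · intro t ht
    rw [sdiff_empty, filter_union, sum_union (disjoint_filter_filter hd)]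
    have e1 : T1.filter (fun i => d' i ≤ t) =
        C1.filter (fun i => d1 i ≤ t) ∪ (T1 \ C1).filter (fun i => d1 i ≤ t) := by
      rw [← filter_union, union_sdiff_of_subset p1]
      apply filter_congr; intro i hi; rw [hd1 i hi]
    have e2 : T2.filter (fun i => d' i ≤ t) =
        C2.filter (fun i => d2 i ≤ t) ∪ (T2 \ C2).filter (fun i => d2 i ≤ t) := by
      rw [← filter_union, union_sdiff_of_subset q1]
      apply filter_congr; intro i hi; rw [hd2 i hi]
    rw [e1, e2, sum_union (disjoint_filter_filter disjoint_sdiff),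
      sum_union (disjoint_filter_filter disjoint_sdiff)]
    have k1 := p2 t ht
    have k2 := p3 t ht
    have k3 := q2 t ht
    have k4 := q3 t ht
    rw [max_eq_left ha1, max_eq_left hb] at k2
    rw [max_eq_left ha2, max_eq_left hb] at k4
    rw [max_eq_left (by linarith : δ ≤ a1 + a2), max_eq_left hb]
    have : 2 * ((a1 + a2) * b) / δ ^ 2 = 2 * (a1 * b) / δ ^ 2 + 2 * (a2 * b) / δ ^ 2 := by ring
    rw [this]
    linarith
  · intro X0 Y0 t s c1 c2 c3 c4 c5 c6 c7 c8 R hR hR'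
    have hR'' : ∀ i ∈ R, t < d' i := by intro i hi; simpa using hR' i hi
    obtain ⟨E1, e1, e2, e3⟩ := p4 0 0 t s le_rfl le_rfl c3 (by linarith) (by linarith)
      (by linarith) c7 c8 (R ∩ T1) inter_subset_right (by
        intro i hi
        rw [mem_inter] at hi
        have := hR'' i hi.1
        rw [hd1 i hi.2] at this
        simpa using this)
    obtain ⟨E2, f1, f2, f3⟩ := q4 0 0 t s le_rfl le_rfl c3 (by linarith) (by linarith)
      (by linarith) c7 c8 (R ∩ T2) inter_subset_right (by
        intro i hi
        rw [mem_inter] at hi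
        have := hR'' i hi.1
        rw [hd2 i hi.2] at this
        simpa using this)
    refine ⟨E1 ∪ E2, union_subset_union e1 f1, ?_, ?_⟩
    · rw [card_union_of_disjoint hd]
      have := Nat.mul_le_mul_left L (card_union_le E1 E2)
      linarith
    have hsub : R \ (E1 ∪ E2) ⊆ ((R ∩ T1) \ E1) ∪ ((R ∩ T2) \ E2) := by
      intro i hi
      simp only [mem_sdiff, mem_union, mem_inter] at hi ⊢
      have := mem_union.1 (hR hi.1)
      tauto
    have hdd : Disjoint ((R ∩ T1) \ E1) ((R ∩ T2) \ E2) :=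
      hd.mono (sdiff_subset.trans inter_subset_right) (sdiff_subset.trans inter_subset_right)
    have g1' : Gp w h a1 b ((R ∩ T1) \ E1) :=
      g1.subset (sdiff_subset.trans inter_subset_right)
    have g2' : Gp w h a2 b ((R ∩ T2) \ E2) :=
      g2.subset (sdiff_subset.trans inter_subset_right)
    rcases e3 with e3 | e3
    · left; exact (e3.vcut' g2' hdd (by linarith)).subset hsub
    · rcases f3 with f3 | f3
      · left; exact (g1'.vcut' f3 hdd (by linarith)).subset hsub
      · right
        have := e3.vcut' f3 hdd (a := a1 + a2) le_rfl
        exact (this.mono le_rfl (by linarith)).subset hsub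

theorem BC_vcut {w h p q : ι → ℝ} {δ μ a1 a2 b : ℝ} {T1 T2 : Finset ι} {L : ℕ} (hL : 0 < L)
    (hδ : 0 < δ) (hμ : 0 < μ) (hd : Disjoint T1 T2) (H : Lng w h p q δ μ (T1 ∪ T2))
    (g1 : Gp w h a1 b T1) (g2 : Gp w h a2 b T2) (hb : b ≤ 1)
    (hV : ∃ i ∈ T1 ∪ T2, δ < h i)
    (B1 : BC w h p δ μ L a1 b T1) (B2 : BC w h p δ μ L a2 b T2) :
    BC w h p δ μ L (a1 + a2) b (T1 ∪ T2) := by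
  by_cases n1 : ∀ i ∈ T1, ¬ δ < w i
  · exact BC_peel hL hδ hμ hd (H.mono subset_union_left) g1 g2 hb n1 B2
  by_cases n2 : ∀ i ∈ T2, ¬ δ < w i
  · rw [add_comm, union_comm]
    exact BC_peel hL hδ hμ hd.symm (H.mono subset_union_right) g2 g1 hb n2 B1
  push Not at n1 n2
  obtain ⟨i, hi, hi'⟩ := n1
  obtain ⟨j, hj, hj'⟩ := n2
  obtain ⟨k, hk, hk'⟩ := hV
  have := (Gp.vcut _ _ _ _ _ hd g1 g2).dims k hk
  exact BC_branch hδ hd g1 g2 (hi'.le.trans (g1.dims i hi).1) (hj'.le.trans (g2.dims j hj).1)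
    (hk'.le.trans this.2) hμ B1 B2

theorem BC_main {w h p q : ι → ℝ} {δ μ a b : ℝ} {T : Finset ι} {L : ℕ} (hL : 0 < L)
    (hδ : 0 < δ) (hμ : 0 < μ) (hμδ : μ ≤ δ) (g : Gp w h a b T) : Lng w h p q δ μ T → a ≤ 1 → b ≤ 1 →
    BC w h p δ μ L a b T := by
  have noV : ∀ {a b : ℝ} {T : Finset ι}, Gp w h a b T → Lng w h p q δ μ T →
      (∀ i ∈ T, ¬ δ < h i) → BC w h p δ μ L a b T := by
    intro a b T g H hn
    exact (BC_noH hL hδ hμ H.swap g.swap hn).swap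
  induction g with
  | nil a b ha hb => intro H _ _; exact BC_noH hL hδ hμ H (.nil _ _ ha hb) (by simp)
  | single a b i ha hb hw hh =>
    intro H h1 h2
    by_cases hn : ∀ j ∈ ({i} : Finset ι), ¬ δ < w j
    · exact BC_noH hL hδ hμ H (.single _ _ _ ha hb hw hh) hn
    by_cases hn' : ∀ j ∈ ({i} : Finset ι), ¬ δ < h j
    · exact noV (.single _ _ _ ha hb hw hh) H hn'
    · exfalso
      simp only [mem_singleton, forall_eq, not_not] at hn hn'
      obtain ⟨j1, j2, j3, j4⟩ := H i (by simp)
      have hgg : δ < p i := by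
        rcases j4 with ⟨j4, j5⟩ | ⟨j4, j5⟩
        · rw [← j5]; exact hn'
        · rw [← j4]; exact hn
      linarith
  | vcut a1 a2 b S1 S2 hd g1 g2 ih1 ih2 =>
    intro H h1 h2
    have n1 := g1.nonneg
    have n2 := g2.nonneg
    by_cases hn : ∀ j ∈ S1 ∪ S2, ¬ δ < h j
    · exact noV (.vcut _ _ _ _ _ hd g1 g2) H hn
    push Not at hn
    exact BC_vcut hL hδ hμ hd H g1 g2 h2 hn (ih1 (H.mono subset_union_left) (by linarith) h2)
      (ih2 (H.mono subset_union_right) (by linarith) h2)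
  | hcut a b1 b2 S1 S2 hd g1 g2 ih1 ih2 =>
    intro H h1 h2
    have n1 := g1.nonneg
    have n2 := g2.nonneg
    by_cases hn : ∀ j ∈ S1 ∪ S2, ¬ δ < w j
    · exact BC_noH hL hδ hμ H (.hcut _ _ _ _ _ hd g1 g2) hn
    push Not at hn
    exact (BC_vcut hL hδ hμ hd H.swap g1.swap g2.swap h1 hn
      (ih1 (H.mono subset_union_left) h1 (by linarith)).swap
      (ih2 (H.mono subset_union_right) h1 (by linarith)).swap).swap

end RCP


namespace RCP

open Finset

variable {ι : Type} [DecidableEq ι]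


/-- Prefix lemma. -/
theorem prefix_lemma (κ g : ι → ℝ) {m : ℝ} (hm : 0 ≤ m) : ∀ (n : ℕ) (T : Finset ι), T.card = n →
    (∀ i ∈ T, g i ≤ m) → ∀ θ : ℝ, 0 ≤ θ → θ ≤ ∑ i ∈ T, g i →
    ∃ A ⊆ T, (∀ i ∈ A, ∀ j ∈ T \ A, κ j ≤ κ i) ∧ θ ≤ ∑ i ∈ A, g i ∧ ∑ i ∈ A, g i ≤ θ + m := by
  intro n
  induction n with
  | zero =>
    intro T hT hg θ h0 h1
    rw [card_eq_zero] at hT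
    subst hT
    exact ⟨∅, by simp, by simp, h1, by simp; linarith⟩
  | succ n ih =>
    intro T hT hg θ h0 h1
    have hne : T.Nonempty := by rw [← card_pos]; omega
    obtain ⟨x, hx, hmin⟩ := exists_min_image T κ hne
    by_cases hle : θ ≤ ∑ i ∈ T.erase x, g i
    · obtain ⟨A, hA, hA1, hA2, hA3⟩ := ih (T.erase x) (by rw [card_erase_of_mem hx]; omega)
        (fun i hi => hg i (erase_subset _ _ hi)) θ h0 hle
      refine ⟨A, hA.trans (erase_subset _ _), ?_, hA2, hA3⟩
      intro i hi j hj
      rw [mem_sdiff] at hj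
      by_cases hjx : j = x
      · rw [hjx]; exact hmin i (erase_subset _ _ (hA hi))
      · exact hA1 i hi j (by simp [hj.1, hj.2, hjx])
    · refine ⟨T, subset_rfl, by simp, h1, ?_⟩
      rw [← add_sum_erase _ _ hx]
      linarith [hg x hx]

/-- Assigning thin items to slots. -/
theorem assign_lemma {σ : Type} [DecidableEq σ] (p : ι → ℝ) (lam : σ → ℝ) {m : ℝ} (hm : 0 ≤ m)
    (Q : Finset σ) : (∀ s ∈ Q, 0 ≤ lam s) → ∀ (X : Finset ι), (∀ i ∈ X, 0 ≤ p i ∧ p i ≤ m) →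
    ∀ c : ℝ, 0 ≤ c → ∑ i ∈ X, p i ≤ ∑ s ∈ Q, lam s + c →
    ∃ asg : ι → Option σ, (∀ i s, asg i = some s → s ∈ Q) ∧
      (∀ s ∈ Q, ∑ i ∈ X.filter (fun i => asg i = some s), p i ≤ lam s) ∧
      ∑ i ∈ X.filter (fun i => asg i = none), p i ≤ c + Q.card * m := by
  induction Q using Finset.induction_on with
  | empty =>
    intro _ X hX c hc h
    exact ⟨fun _ => none, by simp, by simp, by simpa using h⟩
  | insert s Q hs ih =>
    intro hl X hX c hc h
    rw [sum_insert hs] at h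
    have key : ∃ A ⊆ X, ∑ i ∈ A, p i ≤ lam s ∧ ∑ i ∈ X \ A, p i ≤ ∑ s ∈ Q, lam s + (c + m) := by
      by_cases h1 : lam s ≤ m
      · exact ⟨∅, by simp, by simpa using hl s (by simp), by simp; linarith⟩
      by_cases h2 : ∑ i ∈ X, p i ≤ lam s
      · refine ⟨X, subset_rfl, h2, ?_⟩
        have := sum_nonneg (fun s hs' => hl s (mem_insert_of_mem hs') : ∀ s ∈ Q, 0 ≤ lam s)
        simp; linarith
      · obtain ⟨A, hA, -, h3, h4⟩ := prefix_lemma p p hm _ X rfl (fun i hi => (hX i hi).2)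
          (lam s - m) (by linarith) (by linarith)
        refine ⟨A, hA, by linarith, ?_⟩
        have := sum_sdiff (f := p) hA
        linarith
    obtain ⟨A, hA, h1, h2⟩ := key
    obtain ⟨asg, a1, a2, a3⟩ := ih (fun s hs' => hl s (mem_insert_of_mem hs')) (X \ A)
      (fun i hi => hX i (sdiff_subset hi)) (c + m) (by linarith) h2
    refine ⟨fun i => if i ∈ A then some s else asg i, ?_, ?_, ?_⟩
    · intro i s' hi
      dsimp only at hi
      split_ifs at hi with hiA
      · simp at hi; simp [hi]
      · exact mem_insert_of_mem (a1 i s' hi)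
    · intro s' hs'
      rcases mem_insert.1 hs' with rfl | hs'
      · refine le_trans (le_of_eq ?_) h1
        congr 1
        ext i
        simp only [mem_filter]
        constructor
        · rintro ⟨hi, hi'⟩
          split_ifs at hi' with hiA
          · exact hiA
          · exact absurd (a1 i s' hi') hs
        · intro hi; exact ⟨hA hi, by simp [hi]⟩
      · refine le_trans (le_of_eq ?_) (a2 s' hs')
        congr 1
        ext i
        have hne : s ≠ s' := fun h => hs (h ▸ hs')
        by_cases hiA : i ∈ A <;> simp [hiA, hne]
    · rw [card_insert_of_notMem hs]
      push_cast
      refine le_trans (le_of_eq ?_) (le_trans a3 (by linarith))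
      congr 1
      ext i
      by_cases hiA : i ∈ A <;> simp [hiA]

/-- Grouping. -/
theorem group_lemma (p q : ι → ℝ) {G m : ℝ} (hm : 0 ≤ m) (hG : 0 < G) : ∀ (J : ℕ) (T : Finset ι),
    (∀ i ∈ T, 0 ≤ p i ∧ p i ≤ m) → ∑ i ∈ T, p i ≤ J * G →
    ∃ grp : ι → ℕ, (∀ i ∈ T, grp i < J + 1) ∧ (∀ i ∈ T, ∀ j ∈ T, grp i < grp j → q j ≤ q i) ∧
      (∑ i ∈ T.filter (fun i => grp i = 0), p i ≤ G + m) ∧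
      (∀ n, ∑ i ∈ T.filter (fun i => grp i = n + 1), p i ≤
        ∑ i ∈ T.filter (fun i => grp i = n), p i + m) := by
  intro J
  induction J with
  | zero =>
    intro T hT hs
    refine ⟨fun _ => 0, by simp, by simp, ?_, ?_⟩
    · simp at hs ⊢; linarith
    · intro n
      have : 0 ≤ ∑ i ∈ T.filter (fun _ => 0 = n), p i :=
        sum_nonneg fun i hi => (hT i (mem_filter.1 hi).1).1
      simp at this ⊢; linarith
  | succ J ih =>
    intro T hT hs
    by_cases hle : ∑ i ∈ T, p i ≤ G
    · refine ⟨fun _ => 0, by simp, by simp, ?_, ?_⟩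
      · simp at hs ⊢; linarith
      · intro n
        have : 0 ≤ ∑ i ∈ T.filter (fun _ => 0 = n), p i :=
          sum_nonneg fun i hi => (hT i (mem_filter.1 hi).1).1
        simp at this ⊢; linarith
    obtain ⟨A, hA, h1, h2, h3⟩ := prefix_lemma q p hm _ T rfl (fun i hi => (hT i hi).2) G hG.le
      (by linarith)
    have hsd := sum_sdiff (f := p) hA
    obtain ⟨grp, g1, g2, g3, g4⟩ := ih (T \ A) (fun i hi => hT i (sdiff_subset hi))
      (by push_cast at hs; linarith)
    have e0 : T.filter (fun i => (if i ∈ A then 0 else grp i + 1) = 0) = A := by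
      ext i
      by_cases hi : i ∈ A <;> simp [hi]
      exact hA hi
    have e1 : ∀ n, T.filter (fun i => (if i ∈ A then 0 else grp i + 1) = n + 1) =
        (T \ A).filter (fun i => grp i = n) := by
      intro n
      ext i
      by_cases hi : i ∈ A <;> simp [hi]
    refine ⟨fun i => if i ∈ A then 0 else grp i + 1, ?_, ?_, ?_, ?_⟩
    · intro i hi
      by_cases hiA : i ∈ A
      · simp [hiA]
      · have := g1 i (by simp [hi, hiA])
        simp [hiA]; omega
    · intro i hi j hj hij
      by_cases hjA : j ∈ A
      · simp [hjA] at hij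
      by_cases hiA : i ∈ A
      · exact h1 i hiA j (by simp [hj, hjA])
      · simp [hiA, hjA] at hij
        exact g2 i (by simp [hi, hiA]) j (by simp [hj, hjA]) hij
    · rw [e0]; linarith
    · intro n
      rw [e1]
      cases n with
      | zero => rw [e0]; linarith
      | succ n => rw [e1]; exact g4 n

/-- Container packings of long items with free area `f`. -/
inductive Lp (p q : ι → ℝ) : ℕ → ℝ → ℝ → Finset ι → ℝ → Prop
  | free (a b : ℝ) (ha : 0 ≤ a) (hb : 0 ≤ b) : Lp p q 1 a b ∅ (a * b)
  | hcont (a b : ℝ) (S : Finset ι) (ha : 0 ≤ a) (hb : 0 ≤ b) (hq : ∀ i ∈ S, q i ≤ a)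
      (hp : ∑ i ∈ S, p i ≤ b) : Lp p q 1 a b S 0
  | vcont (a b : ℝ) (S : Finset ι) (ha : 0 ≤ a) (hb : 0 ≤ b) (hq : ∀ i ∈ S, q i ≤ b)
      (hp : ∑ i ∈ S, p i ≤ a) : Lp p q 1 a b S 0
  | vcut (k1 k2 : ℕ) (a1 a2 b f1 f2 : ℝ) (S1 S2 : Finset ι) (hd : Disjoint S1 S2)
      (g1 : Lp p q k1 a1 b S1 f1) (g2 : Lp p q k2 a2 b S2 f2) :
      Lp p q (k1 + k2) (a1 + a2) b (S1 ∪ S2) (f1 + f2)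
  | hcut (k1 k2 : ℕ) (a b1 b2 f1 f2 : ℝ) (S1 S2 : Finset ι) (hd : Disjoint S1 S2)
      (g1 : Lp p q k1 a b1 S1 f1) (g2 : Lp p q k2 a b2 S2 f2) :
      Lp p q (k1 + k2) a (b1 + b2) (S1 ∪ S2) (f1 + f2)
  | weaken (k k' : ℕ) (a b f f' : ℝ) (S : Finset ι) (hk : k ≤ k') (hf : f' ≤ f)
      (g : Lp p q k a b S f) : Lp p q k' a b S f'

namespace Lp
variable {p q : ι → ℝ} {k : ℕ} {a b f : ℝ} {S : Finset ι}

theorem nonneg (g : Lp p q k a b S f) : 0 ≤ a ∧ 0 ≤ b := by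
  induction g with
  | free a b ha hb => exact ⟨ha, hb⟩
  | hcont a b S ha hb hq hp => exact ⟨ha, hb⟩
  | vcont a b S ha hb hq hp => exact ⟨ha, hb⟩
  | vcut k1 k2 a1 a2 b f1 f2 S1 S2 hd g1 g2 ih1 ih2 =>
    exact ⟨by linarith [ih1.1, ih2.1], ih1.2⟩
  | hcut k1 k2 a b1 b2 f1 f2 S1 S2 hd g1 g2 ih1 ih2 =>
    exact ⟨ih1.1, by linarith [ih1.2, ih2.2]⟩
  | weaken k k' a b f f' S hk hf g ih => exact ih

theorem swap (g : Lp p q k a b S f) : Lp p q k b a S f := by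
  induction g with
  | free a b ha hb => rw [mul_comm]; exact .free _ _ hb ha
  | hcont a b S ha hb hq hp => exact .vcont _ _ _ hb ha hq hp
  | vcont a b S ha hb hq hp => exact .hcont _ _ _ hb ha hq hp
  | vcut k1 k2 a1 a2 b f1 f2 S1 S2 hd g1 g2 ih1 ih2 => exact .hcut _ _ _ _ _ _ _ _ _ hd ih1 ih2
  | hcut k1 k2 a b1 b2 f1 f2 S1 S2 hd g1 g2 ih1 ih2 => exact .vcut _ _ _ _ _ _ _ _ _ hd ih1 ih2
  | weaken k k' a b f f' S hk hf g ih => exact .weaken _ _ _ _ _ _ _ hk hf ih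

theorem weak (g : Lp p q k a b S f) {k' : ℕ} {f' : ℝ} (hk : k ≤ k') (hf : f' ≤ f) :
    Lp p q k' a b S f' := .weaken _ _ _ _ _ _ _ hk hf g

theorem extend (g : Lp p q k a b S f) {a' b' : ℝ} (ha : a ≤ a') (hb : b ≤ b') :
    Lp p q (k + 2) a' b' S (f + (a' * b' - a * b)) := by
  have n := g.nonneg
  have h1 := Lp.vcut _ _ _ _ _ _ _ _ _ (disjoint_empty_right _) g
    (Lp.free (p := p) (q := q) (a' - a) b (by linarith) n.2)
  have h2 := Lp.hcut _ _ _ _ _ _ _ _ _ (disjoint_empty_right _) h1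
    (Lp.free (p := p) (q := q) (a + (a' - a)) (b' - b) (by linarith) (by linarith))
  simp only [union_empty] at h2
  have e1 : a + (a' - a) = a' := by ring
  have e2 : b + (b' - b) = b' := by ring
  rw [e1, e2] at h2
  exact h2.weak (by omega) (le_of_eq (by ring))

theorem vstack {σ : Type} [DecidableEq σ] (Q : Finset σ) (k : ℕ) (b : ℝ) (hb : 0 ≤ b) (aa ff : σ → ℝ)
    (SS : σ → Finset ι) (hd : ∀ s ∈ Q, ∀ t ∈ Q, s ≠ t → Disjoint (SS s) (SS t))
    (hg : ∀ s ∈ Q, Lp p q k (aa s) b (SS s) (ff s)) :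
    Lp p q (1 + Q.card * k) (∑ s ∈ Q, aa s) b (Q.biUnion SS) (∑ s ∈ Q, ff s) := by
  induction Q using Finset.induction_on with
  | empty =>
    simp only [card_empty, zero_mul, add_zero, sum_empty, biUnion_empty]
    have := Lp.free (p := p) (q := q) 0 b le_rfl hb
    simpa using this
  | insert s Q hs ih =>
    have i1 := ih (fun s hs' t ht => hd s (mem_insert_of_mem hs') t (mem_insert_of_mem ht))
      (fun s hs' => hg s (mem_insert_of_mem hs'))
    rw [sum_insert hs, sum_insert hs, biUnion_insert, card_insert_of_notMem hs]
    refine (Lp.vcut _ _ _ _ _ _ _ _ _ ?_ (hg s (by simp)) i1).weak (le_of_eq (by ring)) le_rfl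
    rw [disjoint_biUnion_right]
    intro t ht
    exact hd s (by simp) t (mem_insert_of_mem ht) (fun h => hs (h ▸ ht))

theorem hstack {σ : Type} [DecidableEq σ] (Q : Finset σ) (k : ℕ) (a : ℝ) (ha : 0 ≤ a) (bb ff : σ → ℝ)
    (SS : σ → Finset ι) (hd : ∀ s ∈ Q, ∀ t ∈ Q, s ≠ t → Disjoint (SS s) (SS t))
    (hg : ∀ s ∈ Q, Lp p q k a (bb s) (SS s) (ff s)) :
    Lp p q (1 + Q.card * k) a (∑ s ∈ Q, bb s) (Q.biUnion SS) (∑ s ∈ Q, ff s) :=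
  (vstack Q k a ha bb ff SS hd (fun s hs => (hg s hs).swap)).swap

end Lp

end RCP


namespace RCP

open Finset

variable {ι : Type} [DecidableEq ι]

open MeasureTheory in
theorem level_decomp (T : Finset ι) (u p : ι → ℝ) {b : ℝ} (hb : 0 ≤ b)
    (hu : ∀ i ∈ T, 0 ≤ p i ∧ 0 ≤ u i ∧ u i + p i ≤ b) :
    ∃ lam : Finset ι → ℝ, (∀ A, 0 ≤ lam A) ∧
      (∀ A, lam A ≠ 0 → ∃ y, A = T.filter (fun i => u i ≤ y ∧ y < u i + p i)) ∧
      ∑ A ∈ T.powerset, lam A = b ∧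
      ∀ i ∈ T, ∑ A ∈ T.powerset.filter (fun A => i ∈ A), lam A = p i := by
  let f : ℝ → Finset ι := fun y => T.filter (fun i => u i ≤ y ∧ y < u i + p i)
  have hf : ∀ y, f y ∈ T.powerset := fun y => by simp [f]
  have hmeas : ∀ A ∈ T.powerset, MeasurableSet (f ⁻¹' {A}) := by
    intro A hA
    rw [mem_powerset] at hA
    have : f ⁻¹' {A} = ⋂ i ∈ T, (if i ∈ A then Set.Ico (u i) (u i + p i)
        else (Set.Ico (u i) (u i + p i))ᶜ) := by
      ext y
      simp only [Set.mem_preimage, Set.mem_singleton_iff, Set.mem_iInter]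
      constructor
      · intro h i hi
        split_ifs with hiA
        · rw [← h] at hiA; exact (mem_filter.1 hiA).2
        · rw [← h] at hiA
          intro hy
          exact hiA (mem_filter.2 ⟨hi, hy⟩)
      · intro h
        ext i
        simp only [f, mem_filter]
        constructor
        · rintro ⟨hi, hy⟩
          by_contra hiA
          have := h i hi
          rw [if_neg hiA] at this
          exact this hy
        · intro hiA
          have := h i (hA hiA)
          rw [if_pos hiA] at this
          exact ⟨hA hiA, this⟩
    rw [this]
    refine Finset.measurableSet_biInter _ (fun i _ => ?_)
    split_ifs
    · exact measurableSet_Ico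
    · exact measurableSet_Ico.compl
  have key : ∀ x z : ℝ, x ≤ z → ∑ A ∈ T.powerset, volume.real (Set.Ico x z ∩ f ⁻¹' {A}) = z - x := by
    intro x z hxz
    have hfin : ∀ A ∈ T.powerset, volume (Set.Ico x z ∩ f ⁻¹' {A}) ≠ ⊤ := by
      intro A hA
      exact ne_top_of_le_ne_top (by simp [Real.volume_Ico]) (measure_mono Set.inter_subset_left)
    rw [← measureReal_biUnion_finset (h := hfin)]
    · have : ⋃ A ∈ T.powerset, Set.Ico x z ∩ f ⁻¹' {A} = Set.Ico x z := by
        ext y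
        simp only [Set.mem_iUnion, Set.mem_inter_iff, Set.mem_preimage, Set.mem_singleton_iff]
        constructor
        · rintro ⟨A, _, h, _⟩; exact h
        · intro h; exact ⟨f y, hf y, h, rfl⟩
      rw [this]
      simp [Measure.real, Real.volume_Ico, hxz]
    · intro A _ B _ hAB
      rw [Function.onFun, Set.disjoint_left]
      rintro y ⟨_, h1⟩ ⟨_, h2⟩
      exact hAB (h1.symm.trans h2)
    · intro A hA
      exact measurableSet_Ico.inter (hmeas A hA)
  refine ⟨fun A => volume.real (Set.Ico 0 b ∩ f ⁻¹' {A}), fun A => measureReal_nonneg, ?_, ?_, ?_⟩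
  · intro A hA
    have : (Set.Ico 0 b ∩ f ⁻¹' {A}).Nonempty := by
      rw [Set.nonempty_iff_ne_empty]
      intro h
      apply hA
      simp only [h]; simp
    obtain ⟨y, _, hy⟩ := this
    exact ⟨y, hy.symm⟩
  · have := key 0 b hb
    simpa using this
  · intro i hi
    obtain ⟨h1, h2, h3⟩ := hu i hi
    have k := key (u i) (u i + p i) (by linarith)
    rw [add_sub_cancel_left] at k
    refine Eq.trans ?_ k
    rw [sum_filter]
    refine sum_congr rfl (fun A hA => ?_)
    split_ifs with hiA
    · congr 1
      ext y
      simp only [Set.mem_inter_iff, Set.mem_Ico, Set.mem_preimage, Set.mem_singleton_iff]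
      constructor
      · rintro ⟨_, hy⟩
        rw [← hy] at hiA
        exact ⟨(mem_filter.1 hiA).2, hy⟩
      · rintro ⟨⟨h4, h5⟩, hy⟩
        exact ⟨⟨by linarith, by linarith⟩, hy⟩
    · have : Set.Ico (u i) (u i + p i) ∩ f ⁻¹' {A} = ∅ := by
        ext y
        simp only [Set.mem_inter_iff, Set.mem_preimage, Set.mem_singleton_iff,
          Set.mem_empty_iff_false, iff_false]
        rintro ⟨h4, hy⟩
        apply hiA
        rw [← hy]
        exact mem_filter.2 ⟨hi, h4⟩
      simp [this]

end RCP


namespace RCP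

open Finset

/-- Lemma C property: pure boxes can be packed in `k` containers. -/
def CProp (ι : Type) [DecidableEq ι] (δ η μ : ℝ) (k : ℕ) : Prop :=
  ∀ (p q u : ι → ℝ) (a b : ℝ) (T : Finset ι), 0 ≤ a → a ≤ 1 → 0 ≤ b → b ≤ 1 →
    (∀ i ∈ T, 0 < p i ∧ p i ≤ μ ∧ δ < q i ∧ 0 ≤ u i ∧ u i + p i ≤ b) →
    (∀ y, ∑ i ∈ T.filter (fun i => u i ≤ y ∧ y < u i + p i), q i ≤ a) →
    ∃ F ⊆ T, ∑ i ∈ F, p i ≤ η ∧ ∃ f, Lp p q k a b (T \ F) f ∧ a * b - ∑ i ∈ T, p i * q i ≤ f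

section
variable {ι : Type} [DecidableEq ι]

theorem exists_W (q : ι → ℝ) (T : Finset ι) (hq : ∀ i ∈ T, 0 ≤ q i) (grp : ι → ℕ)
    (hg : ∀ i ∈ T, ∀ j ∈ T, grp i < grp j → q j ≤ q i) (n : ℕ) :
    ∃ W : ℝ, 0 ≤ W ∧ (∀ i ∈ T, grp i = n + 1 → q i ≤ W) ∧ (∀ i ∈ T, grp i = n → W ≤ q i) := by
  by_cases h : (T.filter (fun i => grp i = n + 1)).Nonempty
  · obtain ⟨x, hx, hm⟩ := exists_max_image _ q h
    rw [mem_filter] at hx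
    refine ⟨q x, hq x hx.1, ?_, ?_⟩
    · intro i hi hi'; exact hm i (by simp [hi, hi'])
    · intro i hi hi'; exact hg i hi x hx.1 (by omega)
  · refine ⟨0, le_rfl, ?_, ?_⟩
    · intro i hi hi'
      exact absurd ⟨i, by simp [hi, hi']⟩ h
    · intro i hi _; exact hq i hi

end

theorem lemC {δ η μ : ℝ} (hδ : 0 < δ) (hη : 0 < η) (hμ : 0 < μ) (J D N0 : ℕ)
    (hJ : 1 / δ ≤ J * (η / 2)) (hD : 1 / δ ≤ D)
    (hN : N0 = 2 ^ ((J + 1) * D) * ((J + 1) * D))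
    (hμ' : μ * (1 + (J + 1) * (1 + N0)) ≤ η / 2) (ι : Type) [DecidableEq ι] :
    CProp ι δ η μ (1 + 2 ^ ((J + 1) * D) * ((J + 1) * D + 2)) := by
  intro p q u a b T ha0 ha1 hb0 hb1 hT hlev
  obtain ⟨lam, l1, l2, l3, l4⟩ := level_decomp T u p hb0
    (fun i hi => ⟨(hT i hi).1.le, (hT i hi).2.2.2⟩)
  have hA : ∀ A, lam A ≠ 0 → ∑ i ∈ A, q i ≤ a := by
    intro A h
    obtain ⟨y, rfl⟩ := l2 A h
    exact hlev y
  have hx : ∀ x : ι → ℝ, ∑ A ∈ T.powerset, lam A * ∑ i ∈ A, x i = ∑ i ∈ T, x i * p i := by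
    intro x
    have : ∀ A ∈ T.powerset, lam A * ∑ i ∈ A, x i = ∑ i ∈ T, if i ∈ A then lam A * x i else 0 := by
      intro A hA
      rw [mul_sum, ← sum_filter]
      congr 1
      ext i
      simp only [mem_filter]
      exact ⟨fun h => ⟨mem_powerset.1 hA h, h⟩, fun h => h.2⟩
    rw [sum_congr rfl this, sum_comm]
    refine sum_congr rfl (fun i hi => ?_)
    rw [← l4 i hi, mul_sum, sum_filter]
    refine sum_congr rfl (fun A _ => ?_)
    split_ifs <;> ring
  have hpq : ∑ i ∈ T, q i * p i ≤ a * b := by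
    rw [← hx, ← l3, mul_sum]
    refine sum_le_sum (fun A _ => ?_)
    by_cases h : lam A = 0
    · simp [h]
    · nlinarith [hA A h, l1 A]
  have hp1 : ∑ i ∈ T, p i ≤ 1 / δ := by
    rw [le_div_iff₀ hδ, sum_mul]
    calc ∑ i ∈ T, p i * δ ≤ ∑ i ∈ T, q i * p i := by
          refine sum_le_sum (fun i hi => ?_)
          obtain ⟨h1, h2, h3, _⟩ := hT i hi
          nlinarith
      _ ≤ a * b := hpq
      _ ≤ 1 := by nlinarith
  obtain ⟨grp, g1, g2, g3, g4⟩ := group_lemma p q (G := η / 2) hμ.le (by linarith) J T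
    (fun i hi => ⟨(hT i hi).1.le, (hT i hi).2.1⟩) (hp1.trans hJ)
  have hqn : ∀ i ∈ T, 0 ≤ q i := fun i hi => hδ.le.trans (hT i hi).2.2.1.le
  choose W W0 W1 W2 using exists_W q T hqn grp g2
  let Sg : Finset (ℕ × ℕ) := range (J + 1) ×ˢ range D
  have hSg : Sg.card = (J + 1) * D := by simp [Sg]
  let c : Finset ι → Finset (ℕ × ℕ) := fun A =>
    Sg.filter (fun s => s.2 < (A.filter (fun i => grp i = s.1)).card)
  have hc : ∀ A, c A ∈ Sg.powerset := fun A => by simp [c]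
  let lamn : Finset (ℕ × ℕ) → ℝ := fun n => ∑ A ∈ T.powerset.filter (fun A => c A = n), lam A
  have lamn0 : ∀ n, 0 ≤ lamn n := fun n => sum_nonneg fun A _ => l1 A
  let cfg := Sg.powerset.filter (fun n => lamn n ≠ 0)
  have hcfg : cfg.card ≤ 2 ^ ((J + 1) * D) := by
    refine (card_filter_le _ _).trans ?_
    rw [card_powerset, hSg]
  have hφ : ∀ φ : Finset (ℕ × ℕ) → ℝ, ∑ n ∈ cfg, lamn n * φ n =
      ∑ A ∈ T.powerset, lam A * φ (c A) := by
    intro φ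
    have e1 : ∑ n ∈ cfg, lamn n * φ n = ∑ n ∈ Sg.powerset, lamn n * φ n := by
      refine sum_subset (filter_subset _ _) (fun n hn hn' => ?_)
      have : lamn n = 0 := by
        by_contra h
        exact hn' (mem_filter.2 ⟨hn, h⟩)
      rw [this, zero_mul]
    rw [e1, ← sum_fiberwise_of_maps_to (g := c) (t := Sg.powerset) (fun A _ => hc A)]
    refine sum_congr rfl (fun n _ => ?_)
    simp only [lamn]
    rw [sum_mul]
    refine sum_congr rfl (fun A hA => ?_)
    rw [(mem_filter.1 hA).2]
  have hAcard : ∀ A ∈ T.powerset, lam A ≠ 0 → A.card ≤ D := by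
    intro A hAT h
    have h1 := hA A h
    have h2 : (A.card : ℝ) * δ ≤ ∑ i ∈ A, q i := by
      rw [← nsmul_eq_mul]
      exact card_nsmul_le_sum _ _ _ (fun i hi => (hT i (mem_powerset.1 hAT hi)).2.2.1.le)
    have h3 : (A.card : ℝ) ≤ 1 / δ := by
      rw [le_div_iff₀ hδ]; linarith
    exact_mod_cast h3.trans hD
  have hcf : ∀ A ∈ T.powerset, lam A ≠ 0 → ∀ j < J + 1, ((c A).filter (fun s => s.1 = j)).card =
      (A.filter (fun i => grp i = j)).card := by
    intro A hAT h j hj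
    have h1 := hAcard A hAT h
    have h2 : (A.filter (fun i => grp i = j)).card ≤ A.card := card_filter_le _ _
    have : (c A).filter (fun s => s.1 = j) = ({j} : Finset ℕ) ×ˢ
        range (A.filter (fun i => grp i = j)).card := by
      ext ⟨x, y⟩
      simp only [c, Sg, mem_filter, mem_product, mem_range, mem_singleton]
      constructor
      · rintro ⟨⟨_, h4⟩, rfl⟩; exact ⟨rfl, h4⟩
      · rintro ⟨rfl, h4⟩; exact ⟨⟨⟨hj, by omega⟩, h4⟩, rfl⟩
    rw [this]; simp
  have hcW : ∀ A ∈ T.powerset, lam A ≠ 0 → ∑ s ∈ c A, W s.1 ≤ ∑ i ∈ A, q i := by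
    intro A hAT h
    have hAT' := mem_powerset.1 hAT
    rw [← sum_fiberwise_of_maps_to (s := c A) (g := Prod.fst) (t := range (J + 1))
        (fun s hs => by simp only [c, Sg, mem_filter, mem_product] at hs; exact hs.1.1),
      ← sum_fiberwise_of_maps_to (s := A) (g := grp) (t := range (J + 1))
        (fun i hi => mem_range.2 (g1 i (hAT' hi)))]
    refine sum_le_sum (fun j hj => ?_)
    calc ∑ s ∈ (c A).filter (fun s => s.1 = j), W s.1
        = ∑ s ∈ (c A).filter (fun s => s.1 = j), W j :=
          sum_congr rfl (fun s hs => by rw [(mem_filter.1 hs).2])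
      _ = (A.filter (fun i => grp i = j)).card • W j := by
          rw [sum_const, hcf A hAT h j (mem_range.1 hj)]
      _ ≤ _ := card_nsmul_le_sum _ _ _ (fun i hi => by
          rw [mem_filter] at hi
          exact W2 j i (hAT' hi.1) hi.2)
  have hcfgW : ∀ n ∈ cfg, ∑ s ∈ n, W s.1 ≤ a := by
    intro n hn
    obtain ⟨_, h1⟩ := mem_filter.1 hn
    obtain ⟨A, hA1, hA2⟩ := exists_ne_zero_of_sum_ne_zero h1
    obtain ⟨hA3, rfl⟩ := mem_filter.1 hA1
    exact (hcW A hA3 hA2).trans (hA A hA2)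
  let Q : ℕ → Finset (Finset (ℕ × ℕ) × (ℕ × ℕ)) := fun j =>
    (cfg ×ˢ Sg).filter (fun x => x.2 ∈ x.1 ∧ x.2.1 = j)
  have hQc : ∀ j, (Q j).card ≤ N0 := by
    intro j
    refine (card_filter_le _ _).trans ?_
    rw [card_product, hSg, hN]
    exact Nat.mul_le_mul_right _ hcfg
  have hQs : ∀ j < J + 1, ∑ x ∈ Q j, lamn x.1 = ∑ i ∈ T.filter (fun i => grp i = j), p i := by
    intro j hj
    have e1 : ∑ x ∈ Q j, lamn x.1 = ∑ n ∈ cfg, lamn n * ((n.filter (fun s => s.1 = j)).card : ℝ) := by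
      rw [sum_filter, sum_product]
      refine sum_congr rfl (fun n hn => ?_)
      rw [← sum_filter]
      dsimp only
      rw [sum_const, nsmul_eq_mul, mul_comm]
      congr 3
      ext s
      simp only [mem_filter]
      constructor
      · rintro ⟨_, h⟩; exact h
      · intro h
        exact ⟨mem_powerset.1 (mem_filter.1 hn).1 h.1, h⟩
    rw [e1, hφ (fun n => ((n.filter (fun s => s.1 = j)).card : ℝ))]
    have e2 : ∀ A ∈ T.powerset, lam A * (((c A).filter (fun s => s.1 = j)).card : ℝ) =
        lam A * ∑ i ∈ A, if grp i = j then 1 else 0 := by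
      intro A hA
      by_cases h : lam A = 0
      · simp [h]
      · rw [hcf A hA h j hj]; simp
    rw [sum_congr rfl e2, hx (fun i => if grp i = j then 1 else 0), sum_filter]
    refine sum_congr rfl (fun i _ => ?_)
    split_ifs <;> simp
  have hasg : ∀ j : ℕ, ∃ asg : ι → Option (Finset (ℕ × ℕ) × (ℕ × ℕ)), j < J + 1 →
      (∀ i s, asg i = some s → s ∈ Q j) ∧
      (∀ s ∈ Q j, ∑ i ∈ (T.filter (fun i => grp i = j + 1)).filter (fun i => asg i = some s), p i
        ≤ lamn s.1) ∧
      ∑ i ∈ (T.filter (fun i => grp i = j + 1)).filter (fun i => asg i = none), p i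
        ≤ μ + (Q j).card * μ := by
    intro j
    by_cases hj : j < J + 1
    · obtain ⟨asg, h⟩ := assign_lemma p (fun x : Finset (ℕ × ℕ) × (ℕ × ℕ) => lamn x.1) hμ.le (Q j)
        (fun s _ => lamn0 _) (T.filter (fun i => grp i = j + 1))
        (fun i hi => by
          have := hT i (mem_filter.1 hi).1
          exact ⟨this.1.le, this.2.1⟩) μ hμ.le (by rw [hQs j hj]; exact g4 j)
      exact ⟨asg, fun _ => h⟩
    · exact ⟨fun _ => none, fun h => absurd h hj⟩
  choose asgj hasgj using hasg
  let asg : ι → Option (Finset (ℕ × ℕ) × (ℕ × ℕ)) := fun i =>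
    if grp i = 0 then none else asgj (grp i - 1) i
  have has : ∀ i ∈ T, ∀ s, asg i = some s → s ∈ Q (grp i - 1) ∧ grp i = s.2.1 + 1 := by
    intro i hi s h
    simp only [asg] at h
    split_ifs at h with h0
    have := g1 i hi
    have h1 := (hasgj (grp i - 1) (by omega)).1 i s h
    refine ⟨h1, ?_⟩
    have := (mem_filter.1 h1).2.2
    omega
  refine ⟨T.filter (fun i => asg i = none), filter_subset _ _, ?_, ?_⟩
  · rw [← sum_fiberwise_of_maps_to (g := grp) (t := range (J + 1))
        (fun i hi => mem_range.2 (g1 i (mem_filter.1 hi).1)), sum_range_succ']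
    have b0 : ∑ i ∈ (T.filter (fun i => asg i = none)).filter (fun i => grp i = 0), p i ≤ η / 2 + μ := by
      refine le_trans (sum_le_sum_of_subset_of_nonneg ?_ ?_) g3
      · exact filter_subset_filter _ (filter_subset _ _)
      · intro i hi _; exact (hT i (mem_filter.1 hi).1).1.le
    have b1 : ∀ j ∈ range J, ∑ i ∈ (T.filter (fun i => asg i = none)).filter
        (fun i => grp i = j + 1), p i ≤ μ + N0 * μ := by
      intro j hj
      rw [mem_range] at hj
      have h1 := (hasgj j (by omega)).2.2
      have h2 : ((Q j).card : ℝ) ≤ N0 := by exact_mod_cast hQc j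
      have h3 : (T.filter (fun i => asg i = none)).filter (fun i => grp i = j + 1) =
          (T.filter (fun i => grp i = j + 1)).filter (fun i => asgj j i = none) := by
        ext i
        simp only [mem_filter, asg]
        constructor
        · rintro ⟨⟨h4, h5⟩, h6⟩
          refine ⟨⟨h4, h6⟩, ?_⟩
          simpa [h6] using h5
        · rintro ⟨⟨h4, h6⟩, h5⟩
          exact ⟨⟨h4, by simpa [h6] using h5⟩, h6⟩
      rw [h3]
      nlinarith
    have b2 := sum_le_sum b1
    rw [sum_const, card_range, nsmul_eq_mul] at b2
    have : (0 : ℝ) ≤ μ * (1 + N0) := by positivity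
    nlinarith
  · let SS : Finset (ℕ × ℕ) → ℕ × ℕ → Finset ι := fun n s => T.filter (fun i => asg i = some (n, s))
    have hslot : ∀ n ∈ cfg, ∀ s ∈ n, Lp p q 1 (W s.1) (lamn n) (SS n s) 0 := by
      intro n hn s hs
      have hs' : s ∈ Sg := mem_powerset.1 (mem_filter.1 hn).1 hs
      have hj : s.1 < J + 1 := by
        simp only [Sg, mem_product, mem_range] at hs'; exact hs'.1
      refine .hcont _ _ _ (W0 _) (lamn0 _) ?_ ?_
      · intro i hi
        obtain ⟨h1, h2⟩ := mem_filter.1 hi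
        exact W1 _ i h1 (has i h1 _ h2).2
      · have h1 := (hasgj s.1 hj).2.1 (n, s) (by simp [Q, hn, hs, hs'])
        refine le_trans (le_of_eq ?_) h1
        congr 1
        ext i
        simp only [SS, mem_filter]
        constructor
        · rintro ⟨h4, h5⟩
          have h6 := (has i h4 _ h5).2
          refine ⟨⟨h4, h6⟩, ?_⟩
          simpa [asg, h6] using h5
        · rintro ⟨⟨h4, h6⟩, h5⟩
          exact ⟨h4, by simpa [asg, h6] using h5⟩
    have hslab : ∀ n ∈ cfg, Lp p q ((J + 1) * D + 2) a (lamn n) (n.biUnion (SS n))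
        (lamn n * (a - ∑ s ∈ n, W s.1)) := by
      intro n hn
      have h1 := Lp.vstack n 1 (lamn n) (lamn0 n) (fun s => W s.1) (fun _ => 0) (SS n) ?_
        (hslot n hn)
      · have h2 := Lp.vcut _ _ _ _ _ _ _ _ _ (disjoint_empty_right _) h1
          (Lp.free (p := p) (q := q) (a - ∑ s ∈ n, W s.1) (lamn n) (by linarith [hcfgW n hn])
            (lamn0 n))
        rw [union_empty, add_sub_cancel] at h2
        refine h2.weak ?_ (le_of_eq (by simp [mul_comm]))
        have := card_le_card (mem_powerset.1 (mem_filter.1 hn).1)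
        rw [hSg] at this
        omega
      · intro s _ t _ hst
        rw [disjoint_left]
        intro i hi hi'
        have h1 := (mem_filter.1 hi).2
        rw [(mem_filter.1 hi').2] at h1
        simp at h1
        exact hst h1.symm
    have h1 := Lp.hstack cfg _ a ha0 lamn _ (fun n => n.biUnion (SS n)) ?_ hslab
    · have e1 : ∑ n ∈ cfg, lamn n = b := by
        have := hφ (fun _ => 1)
        simp only [mul_one] at this
        rw [this, l3]
      have e2 : cfg.biUnion (fun n => n.biUnion (SS n)) = T \ T.filter (fun i => asg i = none) := by
        ext i
        simp only [mem_biUnion, mem_sdiff, mem_filter, SS]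
        constructor
        · rintro ⟨n, _, s, _, h1, h2⟩
          exact ⟨h1, by simp [h2]⟩
        · rintro ⟨h1, h2⟩
          cases h : asg i with
          | none => exact absurd ⟨h1, h⟩ h2
          | some s =>
            have h3 := (has i h1 s h).1
            simp only [Q, mem_filter, mem_product] at h3
            exact ⟨s.1, h3.1.1, s.2, h3.2.1, h1, by simp⟩
      rw [e1, e2] at h1
      refine ⟨_, h1.weak ?_ le_rfl, ?_⟩
      · have := Nat.mul_le_mul_right ((J + 1) * D + 2) hcfg
        omega
      · rw [hφ (fun n => a - ∑ s ∈ n, W s.1)]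
        have e3 : a * b - ∑ i ∈ T, p i * q i = ∑ A ∈ T.powerset, lam A * (a - ∑ i ∈ A, q i) := by
          simp only [mul_sub]
          rw [sum_sub_distrib, hx q, ← sum_mul, l3]
          simp only [mul_comm]
        rw [e3]
        refine sum_le_sum (fun A hA => ?_)
        by_cases h : lam A = 0
        · simp [h]
        · exact mul_le_mul_of_nonneg_left (by linarith [hcW A hA h]) (l1 A)
    · intro n _ n' _ hnn
      rw [disjoint_left]
      intro i hi hi'
      simp only [mem_biUnion, SS, mem_filter] at hi hi'
      obtain ⟨s, _, _, h1⟩ := hi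
      obtain ⟨s', _, _, h2⟩ := hi'
      rw [h1] at h2
      simp at h2
      exact hnn h2.1

theorem lemC_exists {δ η : ℝ} (hδ : 0 < δ) (hη : 0 < η) : ∃ (k : ℕ) (μ0 : ℝ), 0 < μ0 ∧
    ∀ μ, 0 < μ → μ ≤ μ0 → ∀ (ι : Type) [DecidableEq ι], CProp ι δ η μ k := by
  obtain ⟨J, hJ⟩ := exists_nat_ge (1 / δ / (η / 2))
  obtain ⟨D, hD⟩ := exists_nat_ge (1 / δ)
  rw [div_le_iff₀ (by positivity)] at hJ
  let N0 : ℕ := 2 ^ ((J + 1) * D) * ((J + 1) * D)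
  refine ⟨(1 + 2 ^ ((J + 1) * D) * ((J + 1) * D + 2)), η / 2 / (1 + (J + 1) * (1 + N0)), by positivity, fun μ h1 h2 ι _ => ?_⟩
  rw [le_div_iff₀ (by positivity)] at h2
  exact lemC hδ hη h1 J D N0 hJ hD rfl h2 ι

end RCP


namespace RCP

open Finset

variable {ι : Type} [DecidableEq ι]

/-- Completed box: all of `C` but thickness `e` packed. -/
def AD (p q : ι → ℝ) (k : ℕ) (e a b : ℝ) (C : Finset ι) : Prop :=
  ∃ R ⊆ C, ∃ f, Lp p q k a b R f ∧ a * b - ∑ i ∈ C, p i * q i ≤ f ∧ ∑ i ∈ C \ R, p i ≤ e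

theorem AD.swap {p q : ι → ℝ} {k : ℕ} {e a b : ℝ} {C : Finset ι} (H : AD p q k e a b C) :
    AD p q k e b a C := by
  obtain ⟨R, h1, f, h2, h3, h4⟩ := H
  exact ⟨R, h1, f, h2.swap, by rw [mul_comm]; exact h3, h4⟩

theorem AD.weak {p q : ι → ℝ} {k k' : ℕ} {e e' a b : ℝ} {C : Finset ι} (H : AD p q k e a b C)
    (hk : k ≤ k') (he : e ≤ e') : AD p q k' e' a b C := by
  obtain ⟨R, h1, f, h2, h3, h4⟩ := H
  exact ⟨R, h1, f, h2.weak hk le_rfl, h3, h4.trans he⟩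

theorem AD.vcut {p q : ι → ℝ} {k1 k2 : ℕ} {e1 e2 a1 a2 b : ℝ} {C1 C2 : Finset ι}
    (hd : Disjoint C1 C2) (H1 : AD p q k1 e1 a1 b C1) (H2 : AD p q k2 e2 a2 b C2) :
    AD p q (k1 + k2) (e1 + e2) (a1 + a2) b (C1 ∪ C2) := by
  obtain ⟨R1, h1, f1, h2, h3, h4⟩ := H1
  obtain ⟨R2, j1, f2, j2, j3, j4⟩ := H2
  refine ⟨R1 ∪ R2, union_subset_union h1 j1, f1 + f2,
    .vcut _ _ _ _ _ _ _ _ _ (disjoint_of_subset_left h1 (disjoint_of_subset_right j1 hd)) h2 j2,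
    ?_, ?_⟩
  · rw [sum_union hd]; linarith [add_mul a1 a2 b]
  · have : (C1 ∪ C2) \ (R1 ∪ R2) = (C1 \ R1) ∪ (C2 \ R2) := by
      ext i
      have a1 := @h1 i
      have a2 := @j1 i
      have := fun hi : i ∈ C1 => disjoint_left.1 hd hi
      simp only [mem_sdiff, mem_union]
      tauto
    rw [this, sum_union (disjoint_of_subset_left sdiff_subset (disjoint_of_subset_right sdiff_subset hd))]
    linarith

theorem AD.hcut {p q : ι → ℝ} {k1 k2 : ℕ} {e1 e2 b1 b2 a : ℝ} {C1 C2 : Finset ι}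
    (hd : Disjoint C1 C2) (H1 : AD p q k1 e1 a b1 C1) (H2 : AD p q k2 e2 a b2 C2) :
    AD p q (k1 + k2) (e1 + e2) a (b1 + b2) (C1 ∪ C2) :=
  (AD.vcut hd H1.swap H2.swap).swap

theorem AD.empty {p q : ι → ℝ} {k : ℕ} {e a b : ℝ} (hk : 1 ≤ k) (he : 0 ≤ e) (ha : 0 ≤ a)
    (hb : 0 ≤ b) : AD p q k e a b ∅ :=
  ⟨∅, subset_rfl, a * b, (Lp.free a b ha hb).weak hk le_rfl, by simp, by simpa using he⟩

/-- Level structure in the horizontal direction. -/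
def VLev (w h v : ι → ℝ) (a b : ℝ) (X : Finset ι) : Prop :=
  (∀ i ∈ X, 0 ≤ v i ∧ v i + w i ≤ a) ∧
    ∀ x, ∑ i ∈ X.filter (fun i => v i ≤ x ∧ x < v i + w i), h i ≤ b

theorem VLev.append {w h v1 v2 : ι → ℝ} {a1 a2 b : ℝ} {X1 X2 : Finset ι} (hd : Disjoint X1 X2)
    (H1 : VLev w h v1 a1 b X1) (H2 : VLev w h v2 a2 b X2) (ha1 : 0 ≤ a1) (ha2 : 0 ≤ a2) :
    VLev w h (fun i => if i ∈ X1 then v1 i else a1 + v2 i) (a1 + a2) b (X1 ∪ X2) := by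
  constructor
  · intro i hi
    by_cases h1 : i ∈ X1
    · have := H1.1 i h1
      simp only [h1, if_true]
      exact ⟨this.1, by linarith⟩
    · have := H2.1 i ((mem_union.1 hi).resolve_left h1)
      simp only [h1, if_false]
      exact ⟨by linarith, by linarith⟩
  · intro x
    by_cases hx : x < a1
    · refine le_trans (le_of_eq ?_) (H1.2 x)
      congr 1
      ext i
      simp only [mem_filter, mem_union]
      by_cases h1 : i ∈ X1
      · simp [h1]
      · simp only [h1, if_false, false_or, false_and, iff_false]
        rintro ⟨h2, h3, h4⟩
        have := H2.1 i h2
        linarith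
    · refine le_trans (le_of_eq ?_) (H2.2 (x - a1))
      congr 1
      ext i
      simp only [mem_filter, mem_union]
      by_cases h1 : i ∈ X1
      · have h2 : i ∉ X2 := disjoint_left.1 hd h1
        simp only [h1, h2, if_true, true_or, true_and, false_and, iff_false]
        rintro ⟨h3, h4⟩
        have := H1.1 i h1
        linarith
      · simp only [h1, if_false, false_or]
        constructor
        · rintro ⟨h2, h3, h4⟩; exact ⟨h2, by linarith, by linarith⟩
        · rintro ⟨h2, h3, h4⟩; exact ⟨h2, by linarith, by linarith⟩

/-- The invariant of the recursion. -/
def AC (w h p q : ι → ℝ) (δ : ℝ) (k : ℕ) (e a b : ℝ) (C : Finset ι) : Prop :=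
  ∃ (aV aR : ℝ) (X : Finset ι) (v : ι → ℝ), 0 ≤ aV ∧ 0 ≤ aR ∧ aV + aR = a ∧ X ⊆ C ∧
    (∀ i ∈ X, δ < h i) ∧ VLev w h v aV b X ∧ AD p q k e aR b (C \ X)

theorem AC.of_AD {w h p q : ι → ℝ} {δ : ℝ} {k : ℕ} {e a b : ℝ} {C : Finset ι} (ha : 0 ≤ a)
    (hb : 0 ≤ b) (H : AD p q k e a b C) : AC w h p q δ k e a b C :=
  ⟨0, a, ∅, fun _ => 0, le_rfl, ha, by ring, by simp, by simp, ⟨by simp, by simpa using hb⟩,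
    by simpa using H⟩

theorem AC.complete {w h p q : ι → ℝ} {δ μ η : ℝ} {k kC : ℕ} {e a b : ℝ} {C : Finset ι}
    (hC : CProp ι δ η μ kC) (hμδ : μ ≤ δ) (hL : Lng w h p q δ μ C)
    (ha1 : a ≤ 1) (hb0 : 0 ≤ b) (hb1 : b ≤ 1) (H : AC w h p q δ k e a b C) :
    AD p q (kC + k) (η + e) a b C := by
  obtain ⟨aV, aR, X, v, h1, h2, rfl, h4, h5, h6, h7⟩ := H
  have hX : ∀ i ∈ X, w i = p i ∧ h i = q i := by
    intro i hi
    obtain ⟨l1, l2, l3, l4⟩ := hL i (h4 hi)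
    rcases l4 with l4 | l4
    · have := h5 i hi
      rw [l4.2] at this
      linarith
    · exact l4
  have h8 : AD p q kC η b aV X := by
    obtain ⟨F, f1, f2, f, f3, f4⟩ := hC p q v b aV X hb0 hb1 h1 (by linarith)
      (fun i hi => by
        obtain ⟨l1, l2, l3, l4⟩ := hL i (h4 hi)
        have := h6.1 i hi
        rw [(hX i hi).1] at this
        exact ⟨l1, l2, l3, this⟩)
      (fun y => by
        refine le_trans (le_of_eq ?_) (h6.2 y)
        refine sum_congr ?_ ?_
        · refine filter_congr (fun i hi => ?_)
          rw [(hX i hi).1]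
        · intro i hi
          rw [(hX i (mem_filter.1 hi).1).2])
    exact ⟨X \ F, sdiff_subset, f, f3, f4, by rw [Finset.sdiff_sdiff_eq_self f1]; exact f2⟩
  have := AD.vcut disjoint_sdiff h8.swap h7
  rwa [union_sdiff_of_subset h4] at this

noncomputable def core (h u : ι → ℝ) (δ g : ℝ) (r0 m : ℕ) (T : Finset ι) : Finset ι :=
  T.filter (fun i => δ < h i ∨ ((r0 : ℝ) * g ≤ u i ∧ u i + h i ≤ (r0 + m : ℝ) * g))

def Bk (kC : ℕ) : ℕ → ℕ
  | 0 => 3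
  | n + 1 => 2 * (kC + Bk kC n) + kC

noncomputable def Bf (η : ℝ) : ℕ → ℝ
  | 0 => 0
  | n + 1 => 2 * (η + Bf η n) + η

theorem Bk_ge (kC : ℕ) : ∀ n, 3 ≤ Bk kC n
  | 0 => le_rfl
  | n + 1 => by have := Bk_ge kC n; simp only [Bk]; omega

theorem Bf_nonneg {η : ℝ} (hη : 0 ≤ η) : ∀ n, 0 ≤ Bf η n
  | 0 => le_rfl
  | n + 1 => by have := Bf_nonneg hη n; simp only [Bf]; linarith

theorem Bf_le {η : ℝ} (hη : 0 ≤ η) : ∀ n, Bf η n ≤ 5 ^ n * η - η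
  | 0 => by simp [Bf]
  | n + 1 => by
    have := Bf_le hη n
    have h1 : (1 : ℝ) ≤ 5 ^ n := one_le_pow₀ (by norm_num)
    have h2 : η ≤ 5 ^ n * η := by nlinarith
    simp only [Bf, pow_succ]
    nlinarith

theorem noH_VLev {w h p q u : ι → ℝ} {δ μ a y0 y1 b : ℝ} {T C : Finset ι}
    (g : Gy w h u a y0 y1 T) (hL : Lng w h p q δ μ T) (hδ : 0 < δ) (hC : C ⊆ T)
    (hV : ∀ i ∈ C, δ < h i) (hb0 : 0 ≤ b) (hb : δ < y1 - y0 → y1 - y0 ≤ b) :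
    ∃ v, VLev w h v a b C := by
  obtain ⟨v, gv⟩ := ((g.subset hC).toGp.swap).toGy 0
  rw [zero_add] at gv
  refine ⟨v, fun i hi => (gv.bounds i hi).2, fun x => ?_⟩
  rcases C.eq_empty_or_nonempty with rfl | ⟨i, hi⟩
  · simpa using hb0
  · refine (gv.level (fun i hi => by linarith [hV i hi]) x).trans (hb ?_)
    linarith [hV i hi, (gv.bounds i hi).1]

end RCP


namespace RCP

open Finset

variable {ι : Type} [DecidableEq ι]

theorem core_union (h u : ι → ℝ) (δ g : ℝ) (r0 m : ℕ) (S T : Finset ι) :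
    core h u δ g r0 m (S ∪ T) = core h u δ g r0 m S ∪ core h u δ g r0 m T := filter_union _ _ _

theorem core_sub (h u : ι → ℝ) (δ g : ℝ) (r0 m : ℕ) (T : Finset ι) :
    core h u δ g r0 m T ⊆ T := filter_subset _ _

/-- vertical cut with one side free of horizontal core items -/
theorem AC.append {w h p q v : ι → ℝ} {δ e a1 a2 b : ℝ} {k : ℕ} {C1 C2 : Finset ι}
    (hd : Disjoint C1 C2) (ha1 : 0 ≤ a1) (hV : ∀ i ∈ C1, δ < h i) (H1 : VLev w h v a1 b C1)
    (H2 : AC w h p q δ k e a2 b C2) : AC w h p q δ k e (a1 + a2) b (C1 ∪ C2) := by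
  obtain ⟨aV, aR, X, v2, h1, h2, rfl, h4, h5, h6, h7⟩ := H2
  refine ⟨a1 + aV, aR, C1 ∪ X, _, by linarith, h2, by ring, union_subset_union subset_rfl h4, ?_,
    VLev.append (disjoint_of_subset_right h4 hd) H1 h6 ha1 h1, ?_⟩
  · intro i hi
    rcases mem_union.1 hi with hi | hi
    · exact hV i hi
    · exact h5 i hi
  · have : (C1 ∪ C2) \ (C1 ∪ X) = C2 \ X := by
      ext i
      have := fun hi : i ∈ C1 => disjoint_left.1 hd hi
      simp only [mem_sdiff, mem_union]
      tauto
    rwa [this]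

theorem set_aux {C1 C2 K : Finset ι} (s1 : C1 ⊆ K) (s2 : C2 ⊆ K) :
    C1 ∪ (K \ (C1 ∪ C2)) ∪ C2 = K := by
  ext i
  have a1 := @s1 i
  have a2 := @s2 i
  simp only [mem_sdiff, mem_union]
  tauto

set_option maxHeartbeats 1000000 in
theorem lemA {w h p q u : ι → ℝ} {δ μ η g g' : ℝ} {kC : ℕ} (hδ : 0 < δ) (hη : 0 < η)
    (hμδ : μ ≤ δ) (hg : 0 < g) (hgδ : g < δ) (hgg : g ≤ g')
    (hm : ∀ m : ℕ, δ ≤ (m + 2) * g → (m + 2) * g ≤ m * g')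
    (hC : CProp ι δ η μ kC) {a y0 y1 : ℝ} {T : Finset ι} (gy : Gy w h u a y0 y1 T) :
    ∀ r0 m n : ℕ, y0 ≤ r0 * g → r0 * g ≤ y0 + g → (r0 + m) * g ≤ y1 → y1 ≤ (r0 + m + 1) * g →
    Lng w h p q δ μ T →
    (∀ i ∈ T, ¬ δ < h i → ∃ r : ℕ, r * g ≤ u i ∧ u i + h i ≤ (r + 1) * g) →
    a ≤ 1 → m * g' ≤ 1 → m + ⌊a / δ⌋₊ ≤ n →
    AC w h p q δ (Bk kC n) (Bf η n) a (m * g') (core h u δ g r0 m T) := by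
  have hg' : 0 < g' := by linarith
  have yb : ∀ {y0 y1 : ℝ} {r0 m : ℕ}, y0 ≤ r0 * g → r0 * g ≤ y0 + g → (r0 + m) * g ≤ y1 →
      y1 ≤ (r0 + m + 1) * g → δ < y1 - y0 → y1 - y0 ≤ m * g' := by
    intro y0 y1 r0 m h1 h2 h3 h4 h5
    have : y1 - y0 ≤ (m + 2) * g := by nlinarith
    exact this.trans (hm m (by linarith))
  -- no horizontal core items
  have caseV : ∀ {a y0 y1 : ℝ} {T : Finset ι}, Gy w h u a y0 y1 T → ∀ r0 m n : ℕ,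
      y0 ≤ r0 * g → r0 * g ≤ y0 + g → (r0 + m) * g ≤ y1 → y1 ≤ (r0 + m + 1) * g →
      Lng w h p q δ μ T → (∀ i ∈ core h u δ g r0 m T, δ < h i) →
      AC w h p q δ (Bk kC n) (Bf η n) a (m * g') (core h u δ g r0 m T) := by
    intro a y0 y1 T gy r0 m n h1 h2 h3 h4 hL hV
    obtain ⟨v, hv⟩ := noH_VLev gy hL hδ (core_sub _ _ _ _ _ _ _) hV (b := m * g') (by positivity)
      (yb h1 h2 h3 h4)
    have := AC.append (disjoint_empty_right _) gy.toGp.nonneg.1 hV hv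
      (AC.of_AD (w := w) (h := h) (δ := δ) le_rfl (by positivity)
        (AD.empty (p := p) (q := q) (k := Bk kC n) (e := Bf η n) (a := 0)
          (by have := Bk_ge kC n; omega) (Bf_nonneg hη.le n) le_rfl (by positivity)))
    simpa using this
  have hfl : ∀ {a1 a : ℝ}, 0 ≤ a1 → a1 ≤ a → ⌊a1 / δ⌋₊ ≤ ⌊a / δ⌋₊ := by
    intro a1 a _ h2
    exact Nat.floor_mono (by gcongr)
  have hfl' : ∀ {a1 a : ℝ}, 0 ≤ a1 → a1 + δ ≤ a → ⌊a1 / δ⌋₊ + 1 ≤ ⌊a / δ⌋₊ := by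
    intro a1 a h1 h2
    rw [← Nat.floor_add_one (by positivity)]
    apply Nat.floor_mono
    rw [div_add_one hδ.ne']
    gcongr
  have isH : ∀ {T : Finset ι}, Lng w h p q δ μ T → ∀ i ∈ T, ¬ δ < h i → w i = q i ∧ h i = p i := by
    intro T hL i hi hn
    obtain ⟨l1, l2, l3, l4⟩ := hL i hi
    rcases l4 with l4 | l4
    · exact l4
    · rw [l4.2] at hn; exact absurd l3 hn
  induction gy with
  | nil a y0 y1 ha hb =>
    intro r0 m n h1 h2 h3 h4 hL _ _ _ _
    exact caseV (.nil _ _ _ ha hb) r0 m n h1 h2 h3 h4 hL (by simp [core])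
  | single a y0 y1 i ha hb hw h0 h1 =>
    intro r0 m n b1 b2 b3 b4 hL hrow ha1 hm1 hn
    by_cases hV : ∀ j ∈ core h u δ g r0 m {i}, δ < h j
    · exact caseV (.single _ _ _ _ ha hb hw h0 h1) r0 m n b1 b2 b3 b4 hL hV
    push Not at hV
    obtain ⟨j, hj, hj'⟩ := hV
    have hij : j = i := mem_singleton.1 (core_sub _ _ _ _ _ _ _ hj)
    subst hij
    have hc : core h u δ g r0 m {j} = {j} :=
      subset_antisymm (core_sub _ _ _ _ _ _ _) (singleton_subset_iff.2 hj)
    rw [hc]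
    apply AC.of_AD ha (by positivity)
    have hH := isH hL j (by simp) (not_lt.2 hj')
    have hcj := (mem_filter.1 hj).2.resolve_left (not_lt.2 hj')
    obtain ⟨l1, l2, l3, l4⟩ := hL j (by simp)
    refine ⟨{j}, subset_rfl, _, ((Lp.hcont (p := p) (q := q) (q j) (p j) {j} (by linarith) l1.le
      (by simp) (by simp)).extend (a' := a) (b' := m * g') (by linarith [hH.1]) ?_).weak
        (by have := Bk_ge kC n; omega) le_rfl, ?_, ?_⟩
    · have : h j ≤ m * g := by linarith [hcj.1, hcj.2, add_mul (r0 : ℝ) m g]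
      rw [hH.2] at this
      have : (m : ℝ) * g ≤ m * g' := by gcongr
      linarith
    · simp; linarith [mul_comm (p j) (q j)]
    · simpa using Bf_nonneg hη.le n
  | vcut a1 a2 y0 y1 S1 S2 hd g1 g2 ih1 ih2 =>
    intro r0 m n b1 b2 b3 b4 hL hrow ha1 hm1 hn
    have n1 := g1.toGp.nonneg.1
    have n2 := g2.toGp.nonneg.1
    have hL1 : Lng w h p q δ μ S1 := hL.mono subset_union_left
    have hL2 : Lng w h p q δ μ S2 := hL.mono subset_union_right
    have hr1 := fun i hi => hrow i (mem_union_left S2 hi)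
    have hr2 := fun i hi => hrow i (mem_union_right S1 hi)
    have hcd : Disjoint (core h u δ g r0 m S1) (core h u δ g r0 m S2) :=
      disjoint_of_subset_left (core_sub _ _ _ _ _ _ _)
        (disjoint_of_subset_right (core_sub _ _ _ _ _ _ _) hd)
    rw [core_union]
    by_cases hV1 : ∀ i ∈ core h u δ g r0 m S1, δ < h i
    · obtain ⟨v, hv⟩ := noH_VLev g1 hL1 hδ (core_sub _ _ _ _ _ _ _) hV1 (b := m * g')
        (by positivity) (yb b1 b2 b3 b4)
      exact AC.append hcd n1 hV1 hv (ih2 r0 m n b1 b2 b3 b4 hL2 hr2 (by linarith) hm1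
        (le_trans (by gcongr; linarith) hn))
    by_cases hV2 : ∀ i ∈ core h u δ g r0 m S2, δ < h i
    · obtain ⟨v, hv⟩ := noH_VLev g2 hL2 hδ (core_sub _ _ _ _ _ _ _) hV2 (b := m * g')
        (by positivity) (yb b1 b2 b3 b4)
      rw [union_comm, add_comm]
      exact AC.append hcd.symm n2 hV2 hv (ih1 r0 m n b1 b2 b3 b4 hL1 hr1 (by linarith) hm1
        (le_trans (by gcongr; linarith) hn))
    push Not at hV1 hV2
    have wd : ∀ {a : ℝ} {S : Finset ι}, Gy w h u a y0 y1 S → Lng w h p q δ μ S →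
        (∃ i ∈ core h u δ g r0 m S, h i ≤ δ) → δ ≤ a := by
      rintro a S gS hLS ⟨i, hi, hi'⟩
      have hiS := core_sub _ _ _ _ _ _ _ hi
      have := (isH hLS i hiS (not_lt.2 hi')).1
      have := (hLS i hiS).2.2.1
      have := (gS.bounds i hiS).1
      linarith
    have w1 := wd g1 hL1 hV1
    have w2 := wd g2 hL2 hV2
    have f1 := hfl' (a1 := a1) (a := a1 + a2) n1 (by linarith)
    have f2 := hfl' (a1 := a2) (a := a1 + a2) n2 (by linarith)
    obtain ⟨n', rfl⟩ : ∃ n', n = n' + 1 := ⟨n - 1, by omega⟩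
    have c1 := (ih1 r0 m n' b1 b2 b3 b4 hL1 hr1 (by linarith) hm1 (by omega)).complete hC hμδ
      (hL1.mono (core_sub _ _ _ _ _ _ _)) (by linarith) (by positivity) hm1
    have c2 := (ih2 r0 m n' b1 b2 b3 b4 hL2 hr2 (by linarith) hm1 (by omega)).complete hC hμδ
      (hL2.mono (core_sub _ _ _ _ _ _ _)) (by linarith) (by positivity) hm1
    refine AC.of_AD (by linarith) (by positivity) ((AD.vcut hcd c1 c2).weak ?_ ?_)
    · simp only [Bk]; omega
    · simp only [Bf]; linarith
  | hcut a y0 c y1 S1 S2 hd g1 g2 ih1 ih2 =>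
    intro r0 m n b1 b2 b3 b4 hL hrow ha1 hm1 hn
    have n1 := g1.toGp.nonneg.1
    have l1 := g1.le
    have l2 := g2.le
    have hL1 : Lng w h p q δ μ S1 := hL.mono subset_union_left
    have hL2 : Lng w h p q δ μ S2 := hL.mono subset_union_right
    have hr1 := fun i hi => hrow i (mem_union_left S2 hi)
    have hr2 := fun i hi => hrow i (mem_union_right S1 hi)
    by_cases hV : ∀ i ∈ core h u δ g r0 m (S1 ∪ S2), δ < h i
    · exact caseV (.hcut _ _ _ _ _ _ hd g1 g2) r0 m n b1 b2 b3 b4 hL hV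
    have hpos : ∀ i ∈ S1 ∪ S2, 0 < h i := by
      intro i hi
      obtain ⟨k1, k2, k3, k4⟩ := hL i hi
      rcases k4 with k4 | k4
      · rw [k4.2]; exact k1
      · rw [k4.2]; linarith
    by_cases hc0 : c ≤ r0 * g
    · have : core h u δ g r0 m S1 = ∅ := by
        rw [core, filter_eq_empty_iff]
        intro i hi hh
        have hb := g1.bounds i hi
        have hp := hpos i (mem_union_left _ hi)
        rcases hh with hh | hh
        · linarith
        · linarith
      rw [core_union, this, empty_union]
      exact ih2 r0 m n hc0 (by linarith) b3 b4 hL2 hr2 ha1 hm1 hn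
    by_cases hc1 : (r0 + m) * g ≤ c
    · have : core h u δ g r0 m S2 = ∅ := by
        rw [core, filter_eq_empty_iff]
        intro i hi hh
        have hb := g2.bounds i hi
        have hp := hpos i (mem_union_right _ hi)
        rcases hh with hh | hh
        · linarith
        · linarith
      rw [core_union, this, union_empty]
      exact ih1 r0 m n b1 b2 hc1 (by linarith) hL1 hr1 ha1 hm1 hn
    push Not at hc0 hc1
    have hcpos : 0 ≤ c := le_trans (by positivity) hc0.le
    have hρ1 : (⌊c / g⌋₊ : ℝ) * g ≤ c := by
      rw [← le_div_iff₀ hg]; exact Nat.floor_le (by positivity)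
    have hρ2 : c < (⌊c / g⌋₊ + 1 : ℝ) * g := by
      rw [← div_lt_iff₀ hg]; exact Nat.lt_floor_add_one _
    generalize ⌊c / g⌋₊ = ρ at hρ1 hρ2
    have hr0ρ : r0 ≤ ρ := by
      have h1 : (r0 : ℝ) * g < (ρ + 1 : ℝ) * g := by linarith
      have h2 := lt_of_mul_lt_mul_right h1 hg.le
      have : r0 < ρ + 1 := by exact_mod_cast h2
      omega
    have hρm : ρ < r0 + m := by
      have h1 : (ρ : ℝ) * g < (r0 + m : ℝ) * g := by linarith
      have h2 := lt_of_mul_lt_mul_right h1 hg.le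
      exact_mod_cast h2
    obtain ⟨m1, rfl⟩ := Nat.exists_eq_add_of_le hr0ρ
    obtain ⟨m2, hm2⟩ := Nat.exists_eq_add_of_le (show r0 + m1 + 1 ≤ r0 + m by omega)
    have hmm : m = m1 + 1 + m2 := by omega
    subst hmm
    push_cast at *
    obtain ⟨n', rfl⟩ : ∃ n', n = n' + 1 := ⟨n - 1, by omega⟩
    have p1 : 0 ≤ (m1 : ℝ) * g' := by positivity
    have p2 : 0 ≤ (m2 : ℝ) * g' := by positivity
    have hsum : ((m1 : ℝ) + 1 + m2) * g' = m1 * g' + g' + m2 * g' := by ring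
    rw [hsum] at hm1 ⊢
    have c1 := (ih1 r0 m1 n' b1 b2 hρ1 hρ2.le hL1 hr1 ha1 (by linarith) (by omega)).complete hC hμδ
      (hL1.mono (core_sub _ _ _ _ _ _ _)) ha1 p1 (by linarith)
    have c2 := (ih2 (r0 + m1 + 1) m2 n' (by push_cast; exact hρ2.le) (by push_cast; linarith)
      (by push_cast; linarith) (by push_cast; linarith) hL2 hr2 ha1 (by linarith)
      (by omega)).complete hC hμδ (hL2.mono (core_sub _ _ _ _ _ _ _)) ha1 p2 (by linarith)
    set C1 := core h u δ g r0 m1 S1 with hC1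
    set C2 := core h u δ g (r0 + m1 + 1) m2 S2 with hC2
    set K := core h u δ g r0 (m1 + 1 + m2) (S1 ∪ S2) with hK
    have hC12 : Disjoint C1 C2 := disjoint_of_subset_left (core_sub _ _ _ _ _ _ _)
        (disjoint_of_subset_right (core_sub _ _ _ _ _ _ _) hd)
    have s1 : C1 ⊆ K := by
      intro i hi
      obtain ⟨k1, k2⟩ := mem_filter.1 hi
      refine mem_filter.2 ⟨mem_union_left _ k1, k2.imp_right fun k => ⟨k.1, ?_⟩⟩
      push_cast
      nlinarith [k.2, mul_nonneg (Nat.cast_nonneg (α := ℝ) m2) hg.le]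
    have s2 : C2 ⊆ K := by
      intro i hi
      obtain ⟨k1, k2⟩ := mem_filter.1 hi
      refine mem_filter.2 ⟨mem_union_right _ k1, k2.imp_right fun k => ?_⟩
      push_cast at k ⊢
      constructor
      · nlinarith [k.1, mul_nonneg (Nat.cast_nonneg (α := ℝ) m1) hg.le]
      · linarith [k.2]
    have hrest : ∀ i ∈ K \ (C1 ∪ C2), ¬ δ < h i ∧ (r0 + m1 : ℝ) * g ≤ u i ∧
        u i + h i ≤ (r0 + m1 + 1 : ℝ) * g := by
      intro i hi
      obtain ⟨hi1, hi2⟩ := mem_sdiff.1 hi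
      rw [mem_union, not_or] at hi2
      obtain ⟨hi3, hi4⟩ := mem_filter.1 hi1
      have hnv : ¬ δ < h i := by
        intro hv
        rcases mem_union.1 hi3 with k | k
        · exact hi2.1 (mem_filter.2 ⟨k, Or.inl hv⟩)
        · exact hi2.2 (mem_filter.2 ⟨k, Or.inl hv⟩)
      have hi4 := hi4.resolve_left hnv
      push_cast at hi4
      refine ⟨hnv, ?_⟩
      obtain ⟨r, hra, hrb⟩ := hrow i hi3 hnv
      have hp := hpos i hi3
      rcases mem_union.1 hi3 with k | k
      · have hb := g1.bounds i k
        have e1 : r < r0 + m1 + 1 := by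
          have : (r : ℝ) * g < (r0 + m1 + 1 : ℝ) * g := by linarith
          exact_mod_cast lt_of_mul_lt_mul_right this hg.le
        have e2 : ¬ r + 1 ≤ r0 + m1 := by
          intro hh
          apply hi2.1
          refine mem_filter.2 ⟨k, Or.inr ⟨hi4.1, ?_⟩⟩
          have : ((r : ℝ) + 1) ≤ (r0 + m1 : ℝ) := by exact_mod_cast hh
          nlinarith
        have e3 : r = r0 + m1 := by omega
        rw [e3] at hra hrb
        push_cast at hra hrb
        exact ⟨hra, hrb⟩
      · have hb := g2.bounds i k
        have e1 : r0 + m1 < r + 1 := by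
          have : (r0 + m1 : ℝ) * g < ((r : ℝ) + 1) * g := by linarith
          exact_mod_cast lt_of_mul_lt_mul_right this hg.le
        have e2 : ¬ r0 + m1 + 1 ≤ r := by
          intro hh
          apply hi2.2
          have : (r0 + m1 + 1 : ℝ) ≤ r := by exact_mod_cast hh
          refine mem_filter.2 ⟨k, Or.inr ⟨?_, ?_⟩⟩
          · push_cast; nlinarith
          · push_cast; linarith [hi4.2]
        have e3 : r = r0 + m1 := by omega
        rw [e3] at hra hrb
        push_cast at hra hrb
        exact ⟨hra, hrb⟩
    have hKT : ∀ i ∈ K \ (C1 ∪ C2), i ∈ S1 ∪ S2 := fun i hi =>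
      core_sub _ _ _ _ _ _ _ (sdiff_subset hi)
    have c3 : AD p q kC η a g' (K \ (C1 ∪ C2)) := by
      have hw0 : ∀ i ∈ S1 ∪ S2, 0 ≤ w i := by
        intro i hi
        obtain ⟨k1, k2, k3, k4⟩ := hL i hi
        rcases k4 with k4 | k4
        · rw [k4.1]; linarith
        · rw [k4.1]; linarith
      obtain ⟨F, f1, f2, f, f3, f4⟩ := hC p q (fun i => u i - (r0 + m1) * g) a g' (K \ (C1 ∪ C2))
        n1 ha1 hg'.le (by linarith)
        (fun i hi => by
          obtain ⟨k1, k2, k3, k4⟩ := hL i (hKT i hi)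
          obtain ⟨r1, r2, r3⟩ := hrest i hi
          rw [(isH hL i (hKT i hi) r1).2] at r3
          exact ⟨k1, k2, k3, by linarith, by linarith⟩)
        (fun y => by
          have lev := (Gy.hcut _ _ _ _ _ _ hd g1 g2).level hw0 (y + (r0 + m1) * g)
          refine le_trans ?_ lev
          have e1 : ∑ i ∈ (K \ (C1 ∪ C2)).filter (fun i => u i - (r0 + m1) * g ≤ y ∧
              y < u i - (r0 + m1) * g + p i), q i =
              ∑ i ∈ (K \ (C1 ∪ C2)).filter (fun i => u i - (r0 + m1) * g ≤ y ∧
              y < u i - (r0 + m1) * g + p i), w i := by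
            refine sum_congr rfl (fun i hi => ?_)
            have hi' := (mem_filter.1 hi).1
            exact (isH hL i (hKT i hi') (hrest i hi').1).1.symm
          rw [e1]
          refine sum_le_sum_of_subset_of_nonneg ?_ (fun i hi _ => hw0 i (mem_filter.1 hi).1)
          intro i hi
          obtain ⟨hi1, hi2, hi3⟩ := mem_filter.1 hi
          rw [← (isH hL i (hKT i hi1) (hrest i hi1).1).2] at hi3
          exact mem_filter.2 ⟨hKT i hi1, by linarith, by linarith⟩)
      exact ⟨_, sdiff_subset, f, f3, f4, by rw [Finset.sdiff_sdiff_eq_self f1]; exact f2⟩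
    have d1 : Disjoint C1 (K \ (C1 ∪ C2)) :=
      disjoint_of_subset_left subset_union_left disjoint_sdiff
    have d2 : Disjoint (C1 ∪ (K \ (C1 ∪ C2))) C2 := by
      rw [disjoint_union_left]
      exact ⟨hC12, (disjoint_of_subset_left subset_union_right disjoint_sdiff).symm⟩
    have hfin := AD.hcut d2 (AD.hcut d1 c1 c3) c2
    have hset := set_aux s1 s2
    rw [hset] at hfin
    refine AC.of_AD n1 (by linarith) (hfin.weak ?_ ?_)
    · simp only [Bk]; omega
    · simp only [Bf]; linarith

end RCP


namespace RCP

open Finset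

theorem sum_bU_le {ι : Type} [DecidableEq ι] (s : Finset ℕ) (X : ℕ → Finset ι) (p : ι → ℝ)
    (hp : ∀ i ∈ s.biUnion X, 0 ≤ p i) : ∑ i ∈ s.biUnion X, p i ≤ ∑ r ∈ s, ∑ i ∈ X r, p i := by
  induction s using Finset.induction_on with
  | empty => simp
  | insert a s ha ih =>
    rw [biUnion_insert] at hp ⊢
    rw [sum_insert ha]
    have := ih (fun i hi => hp i (mem_union_right _ hi))
    have h2 : ∑ i ∈ X a ∪ s.biUnion X, p i + ∑ i ∈ X a ∩ s.biUnion X, p i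
        = ∑ i ∈ X a, p i + ∑ i ∈ s.biUnion X, p i := sum_union_inter
    have h3 : 0 ≤ ∑ i ∈ X a ∩ s.biUnion X, p i :=
      sum_nonneg fun i hi => hp i (mem_union_left _ (mem_inter.1 hi).1)
    linarith

theorem rootA {δ s e : ℝ} (hδ : 0 < δ) (hs : 0 < s) (hs1 : s ≤ 1 / 2) (he : 0 < e) :
    ∃ (K : ℕ) (μ0 : ℝ), 0 < μ0 ∧ ∀ μ, 0 < μ → μ ≤ μ0 → ∀ (ι : Type) [DecidableEq ι]
      (w h p q : ι → ℝ) (T : Finset ι), Lng w h p q δ μ T → Gp w h 1 (1 - s) T →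
      AD p q K e 1 (1 - s / 2) T := by
  obtain ⟨M, hM⟩ := exists_nat_ge ((4 / s + 2) / δ)
  rw [div_le_iff₀ hδ] at hM
  have hMp : (0 : ℝ) < M := by
    have : 0 < (M : ℝ) * δ := lt_of_lt_of_le (by positivity) hM
    exact pos_of_mul_pos_left this hδ.le
  have h1s : 0 < 1 - s := by linarith
  set g : ℝ := (1 - s) / M with hgdef
  set g' : ℝ := (1 - s / 2) / M with hgdef'
  have hMg : M * g = 1 - s := by rw [hgdef]; field_simp
  have hMg' : M * g' = 1 - s / 2 := by rw [hgdef']; field_simp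
  have hg : 0 < g := by positivity
  have hgg : g ≤ g' := by rw [hgdef, hgdef']; gcongr; linarith
  have h4s : 0 < 4 / s := by positivity
  have hgδ : g < δ := by
    rw [hgdef, div_lt_iff₀ hMp]; nlinarith
  have hm : ∀ m : ℕ, δ ≤ (m + 2) * g → (m + 2) * g ≤ m * g' := by
    intro m h
    have h1 : 4 / s ≤ m := by
      have : M * δ ≤ (m + 2) * (M * g) := by nlinarith
      rw [hMg] at this
      have hm0 : (0 : ℝ) ≤ m := Nat.cast_nonneg m
      nlinarith
    rw [div_le_iff₀ hs] at h1
    rw [hgdef, hgdef', mul_div_assoc', mul_div_assoc']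
    refine div_le_div_of_nonneg_right ?_ hMp.le
    nlinarith
  set n := M + ⌊1 / δ⌋₊ with hn
  set η := e / 2 / 5 ^ n with hη'
  have hη : 0 < η := by positivity
  have hBf : Bf η n ≤ e / 2 := by
    refine (Bf_le hη.le n).trans ?_
    have : (5 : ℝ) ^ n * η = e / 2 := by rw [hη']; field_simp
    linarith
  obtain ⟨kC, μC, hμC, hC⟩ := lemC_exists hδ hη
  have hE : 0 < e / 2 * δ / (2 * M) := by positivity
  refine ⟨kC + Bk kC n, min (min μC δ) (min (e / 4 * δ / M) (e / 4)), by positivity, ?_⟩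
  intro μ hμ hμ0 ι _ w h p q T hL gp
  have k1 : μ ≤ μC := hμ0.trans ((min_le_left _ _).trans (min_le_left _ _))
  have k2 : μ ≤ δ := hμ0.trans ((min_le_left _ _).trans (min_le_right _ _))
  have k3 : μ ≤ e / 4 * δ / M := hμ0.trans ((min_le_right _ _).trans (min_le_left _ _))
  rw [le_div_iff₀ hMp] at k3
  have hCP := hC μ hμ k1 ι
  obtain ⟨u, gy⟩ := gp.toGy 0
  rw [zero_add] at gy
  haveI : DecidablePred (fun i => ¬ δ < h i ∧ ¬ ∃ r : ℕ, r * g ≤ u i ∧ u i + h i ≤ (r + 1) * g) :=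
    fun _ => Classical.dec _
  let T0 := T.filter (fun i => ¬ δ < h i ∧ ¬ ∃ r : ℕ, r * g ≤ u i ∧ u i + h i ≤ (r + 1) * g)
  have isH : ∀ i ∈ T, ¬ δ < h i → w i = q i ∧ h i = p i := by
    intro i hi hn
    obtain ⟨l1, l2, l3, l4⟩ := hL i hi
    rcases l4 with l4 | l4
    · exact l4
    · rw [l4.2] at hn; exact absurd l3 hn
  have hw0 : ∀ i ∈ T, 0 ≤ w i := by
    intro i hi
    obtain ⟨k1, k2, k3, k4⟩ := hL i hi
    rcases k4 with k4 | k4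
    · rw [k4.1]; linarith
    · rw [k4.1]; linarith
  -- crossing sets
  let X : ℕ → Finset ι := fun r => (T.filter (fun i => ¬ δ < h i)).filter
    (fun i => u i ≤ (r + 1) * g ∧ (r + 1) * g < u i + h i)
  have hX : ∀ r, ∑ i ∈ X r, p i ≤ μ / δ := by
    intro r
    have lev := gy.level hw0 ((r + 1) * g)
    rw [le_div_iff₀ hδ, sum_mul]
    have h1 : ∑ i ∈ X r, p i * δ ≤ ∑ i ∈ X r, μ * w i := by
      refine sum_le_sum (fun i hi => ?_)
      obtain ⟨hi1, _⟩ := mem_filter.1 hi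
      obtain ⟨hi1, hi2⟩ := mem_filter.1 hi1
      obtain ⟨l1, l2, l3, l4⟩ := hL i hi1
      rw [(isH i hi1 hi2).1]
      exact mul_le_mul l2 l3.le hδ.le hμ.le
    refine h1.trans ?_
    rw [← mul_sum]
    have h2 : ∑ i ∈ X r, w i ≤ 1 := by
      refine le_trans (sum_le_sum_of_subset_of_nonneg ?_ (fun i hi _ => hw0 i (mem_filter.1 hi).1)) lev
      exact filter_subset_filter _ (filter_subset _ _)
    nlinarith
  have hT0 : T0 ⊆ (range M).biUnion X := by
    intro i hi
    obtain ⟨hi1, hi2, hi3⟩ := mem_filter.1 hi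
    have hb := gy.bounds i hi1
    obtain ⟨l1, l2, l3, l4⟩ := hL i hi1
    have hh := isH i hi1 hi2
    have hρ1 : (⌊u i / g⌋₊ : ℝ) * g ≤ u i := by
      rw [← le_div_iff₀ hg]; exact Nat.floor_le (div_nonneg hb.2.1 hg.le)
    have hρ2 : u i < (⌊u i / g⌋₊ + 1 : ℝ) * g := by
      rw [← div_lt_iff₀ hg]; exact Nat.lt_floor_add_one _
    have hr3 : (⌊u i / g⌋₊ + 1 : ℝ) * g < u i + h i := by
      by_contra hcon
      exact hi3 ⟨_, hρ1, not_lt.1 hcon⟩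
    refine mem_biUnion.2 ⟨⌊u i / g⌋₊, ?_, mem_filter.2 ⟨mem_filter.2 ⟨hi1, hi2⟩, hρ2.le, hr3⟩⟩
    rw [mem_range]
    have : (⌊u i / g⌋₊ : ℝ) * g < M * g := by
      rw [hMg]; linarith [hb.2.2, hh.2]
    exact_mod_cast lt_of_mul_lt_mul_right this hg.le
  have hT0s : ∑ i ∈ T0, p i ≤ e / 4 := by
    have h1 : ∑ i ∈ T0, p i ≤ ∑ i ∈ (range M).biUnion X, p i := by
      refine sum_le_sum_of_subset_of_nonneg hT0 (fun i hi _ => ?_)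
      obtain ⟨r, _, hr⟩ := mem_biUnion.1 hi
      exact (hL i (mem_filter.1 (mem_filter.1 hr).1).1).1.le
    have h2 : ∑ i ∈ (range M).biUnion X, p i ≤ ∑ r ∈ range M, ∑ i ∈ X r, p i := by
      refine sum_bU_le _ _ _ (fun i hi => ?_)
      obtain ⟨r, _, hr⟩ := mem_biUnion.1 hi
      exact (hL i (mem_filter.1 (mem_filter.1 hr).1).1).1.le
    have h3 : ∑ r ∈ range M, ∑ i ∈ X r, p i ≤ M * (μ / δ) := by
      have := sum_le_card_nsmul (range M) (fun r => ∑ i ∈ X r, p i) (μ / δ) (fun r _ => hX r)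
      simpa using this
    have h4 : M * (μ / δ) ≤ e / 4 := by
      rw [mul_div_assoc', div_le_iff₀ hδ]; linarith
    linarith
  have hcore : core h u δ g 0 M (T \ T0) = T \ T0 := by
    refine filter_true_of_mem (fun i hi => ?_)
    obtain ⟨hi1, hi2⟩ := mem_sdiff.1 hi
    by_cases hv : δ < h i
    · exact Or.inl hv
    · right
      have hb := gy.bounds i hi1
      simp only [Nat.cast_zero, zero_mul, zero_add]
      rw [hMg]
      exact hb.2
  have hfin := lemA hδ hη k2 hg hgδ hgg hm hCP (gy.subset (sdiff_subset (t := T0))) 0 M n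
    (by simp) (by simp; exact hg.le) (by simp; linarith) (by simp; nlinarith)
    (hL.mono sdiff_subset) (fun i hi hv => by
      obtain ⟨hi1, hi2⟩ := mem_sdiff.1 hi
      by_contra hcon
      exact hi2 (mem_filter.2 ⟨hi1, hv, hcon⟩)) le_rfl (by linarith) le_rfl
  rw [hcore, hMg'] at hfin
  obtain ⟨R, r1, f, r2, r3, r4⟩ := hfin.complete hCP k2 (hL.mono sdiff_subset) le_rfl (by linarith)
    (by linarith)
  refine ⟨R, r1.trans sdiff_subset, f, r2, ?_, ?_⟩
  · have : ∑ i ∈ T \ T0, p i * q i ≤ ∑ i ∈ T, p i * q i := by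
      refine sum_le_sum_of_subset_of_nonneg sdiff_subset (fun i hi _ => ?_)
      obtain ⟨l1, l2, l3, l4⟩ := hL i hi
      nlinarith
    linarith
  · have e1 : ∑ i ∈ T \ R, p i ≤ ∑ i ∈ (T \ T0) \ R, p i + ∑ i ∈ T0, p i := by
      rw [← sum_union (disjoint_of_subset_left sdiff_subset sdiff_disjoint)]
      refine sum_le_sum_of_subset_of_nonneg ?_ (fun i hi _ => ?_)
      · intro i hi
        simp only [mem_sdiff, mem_union] at hi ⊢
        tauto
      · refine (hL i ?_).1.le
        rcases mem_union.1 hi with hi | hi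
        · exact sdiff_subset (sdiff_subset hi)
        · exact filter_subset _ _ hi
    have h5 : (1 : ℝ) ≤ 5 ^ n := one_le_pow₀ (by norm_num)
    have hBf' : η + Bf η n ≤ e / 2 := by
      have := Bf_le hη.le n
      have h6 : (5 : ℝ) ^ n * η = e / 2 := by rw [hη']; field_simp
      linarith
    linarith

section
variable {ι : Type} [DecidableEq ι]

theorem Lp.nonneg_free {p q : ι → ℝ} {k : ℕ} {a b f : ℝ} {S : Finset ι} (g : Lp p q k a b S f) :
    ∃ f', 0 ≤ f' ∧ f ≤ f' ∧ Lp p q k a b S f' := by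
  induction g with
  | free a b ha hb => exact ⟨_, by positivity, le_rfl, .free _ _ ha hb⟩
  | hcont a b S ha hb hq hp => exact ⟨0, le_rfl, le_rfl, .hcont _ _ _ ha hb hq hp⟩
  | vcont a b S ha hb hq hp => exact ⟨0, le_rfl, le_rfl, .vcont _ _ _ ha hb hq hp⟩
  | vcut k1 k2 a1 a2 b f1 f2 S1 S2 hd g1 g2 ih1 ih2 =>
    obtain ⟨x, x1, x2, x3⟩ := ih1
    obtain ⟨y, y1, y2, y3⟩ := ih2
    exact ⟨x + y, by linarith, by linarith, .vcut _ _ _ _ _ _ _ _ _ hd x3 y3⟩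
  | hcut k1 k2 a b1 b2 f1 f2 S1 S2 hd g1 g2 ih1 ih2 =>
    obtain ⟨x, x1, x2, x3⟩ := ih1
    obtain ⟨y, y1, y2, y3⟩ := ih2
    exact ⟨x + y, by linarith, by linarith, .hcut _ _ _ _ _ _ _ _ _ hd x3 y3⟩
  | weaken k k' a b f f' S hk hf g ih =>
    obtain ⟨x, x1, x2, x3⟩ := ih
    exact ⟨x, x1, by linarith, x3.weak hk le_rfl⟩

/-- Adding a strip for the leftovers. -/
theorem strip_step {p q : ι → ℝ} {K : ℕ} {s e : ℝ} {T FB : Finset ι} (he : 0 ≤ e)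
    (hes : 2 * e ≤ s / 4) (H : AD p q K e 1 (1 - s / 2) T) (hd : Disjoint T FB)
    (hp : ∀ i ∈ T ∪ FB, 0 ≤ p i ∧ 0 ≤ q i ∧ q i ≤ 1) (hFB : ∑ i ∈ FB, p i ≤ e) :
    ∃ f, Lp p q (K + 2) 1 1 (T ∪ FB) f ∧ s / 4 ≤ f ∧ 1 - ∑ i ∈ T ∪ FB, p i * q i - 2 * e ≤ f := by
  obtain ⟨R, r1, f, r2, r3, r4⟩ := H
  obtain ⟨f', f1, f2, f3⟩ := r2.nonneg_free
  have hd1 : Disjoint (T \ R) FB := disjoint_of_subset_left sdiff_subset hd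
  have c1 : Lp p q 1 1 (2 * e) ((T \ R) ∪ FB) 0 := by
    refine .hcont _ _ _ (by norm_num) (by linarith) ?_ ?_
    · intro i hi
      exact (hp i (union_subset_union sdiff_subset subset_rfl hi)).2.2
    · rw [sum_union hd1]; linarith
  have c2 := Lp.hcut _ _ _ _ _ _ _ _ _ (disjoint_empty_right _) c1
    (Lp.free (p := p) (q := q) 1 (s / 2 - 2 * e) (by norm_num) (by linarith))
  rw [union_empty] at c2
  have hd2 : Disjoint R ((T \ R) ∪ FB) := by
    rw [disjoint_union_right]
    exact ⟨disjoint_sdiff, disjoint_of_subset_left r1 hd⟩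
  have c3 := Lp.hcut _ _ _ _ _ _ _ _ _ hd2 f3 c2
  rw [← union_assoc, union_sdiff_of_subset r1] at c3
  have e1 : 1 - s / 2 + (2 * e + (s / 2 - 2 * e)) = 1 := by ring
  rw [e1] at c3
  refine ⟨_, c3.weak (by omega) le_rfl, by linarith, ?_⟩
  rw [sum_union hd]
  have : 0 ≤ ∑ i ∈ FB, p i * q i :=
    sum_nonneg fun i hi => mul_nonneg (hp i (mem_union_right _ hi)).1 (hp i (mem_union_right _ hi)).2.1
  linarith

end

end RCP


namespace RCP

open Finset

theorem exists_pos_le (f : ℕ → ℝ) (hf : ∀ j, 0 < f j) (n : ℕ) : ∃ m, 0 < m ∧ ∀ j < n, m ≤ f j := by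
  induction n with
  | zero => exact ⟨1, one_pos, fun j hj => by omega⟩
  | succ n ih =>
    obtain ⟨m, h1, h2⟩ := ih
    refine ⟨min m (f n), lt_min h1 (hf n), fun j hj => ?_⟩
    rcases Nat.lt_succ_iff_lt_or_eq.1 hj with h | h
    · exact (min_le_left _ _).trans (h2 j h)
    · subst h; exact min_le_right _ _

/-- Pigeonhole over disjoint sets. -/
theorem pigeon {ι : Type} [DecidableEq ι] (T : Finset ι) (D : ℕ → Finset ι) {L : ℕ} (hL : 0 < L)
    (hD : ∀ j < L, D j ⊆ T) (hdis : ∀ j < L, ∀ k < L, j ≠ k → Disjoint (D j) (D k)) :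
    ∃ j < L, L * (D j).card ≤ T.card := by
  by_contra hcon
  push Not at hcon
  have h1 : ((range L).biUnion D).card = ∑ j ∈ range L, (D j).card :=
    card_biUnion (fun j hj k hk hjk => hdis j (mem_range.1 hj) k (mem_range.1 hk) hjk)
  have h2 : ((range L).biUnion D).card ≤ T.card :=
    card_le_card (biUnion_subset.2 (fun j hj => hD j (mem_range.1 hj)))
  have h3 : ∑ j ∈ range L, T.card < ∑ j ∈ range L, L * (D j).card :=
    sum_lt_sum_of_nonempty ⟨0, mem_range.2 hL⟩ (fun j hj => hcon j (mem_range.1 hj))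
  rw [← mul_sum, ← h1] at h3
  simp only [sum_const, card_range, smul_eq_mul] at h3
  have := Nat.mul_le_mul_left L h2
  omega

/-- Structural theorem for long items. -/
theorem long_thm {L : ℕ} (hL : 0 < L) {δ : ℝ} (hδ : 0 < δ) (hδ1 : δ ≤ 1) :
    ∃ (K : ℕ) (smin μ0 : ℝ), 0 < smin ∧ 0 < μ0 ∧ ∀ μ, 0 < μ → μ ≤ μ0 → ∀ (ι : Type) [DecidableEq ι]
      (w h p q : ι → ℝ) (T : Finset ι), Lng w h p q δ μ T → Gp w h 1 1 T →
      ∃ T' ⊆ T, L * (T \ T').card ≤ 2 * T.card ∧ ∃ s f, smin ≤ s ∧ Lp p q K 1 1 T' f ∧ s / 4 ≤ f ∧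
        1 - ∑ i ∈ T', p i * q i - s / (32 * L) ≤ f := by
  have hLr : (1 : ℝ) ≤ L := by exact_mod_cast hL
  have hL0 : (0 : ℝ) < L := by linarith
  set c : ℝ := δ ^ 3 / (1024 * L ^ 2) with hc
  have hc0 : 0 < c := by positivity
  have hδ3 : δ ^ 3 ≤ 1 := pow_le_one₀ hδ.le hδ1
  have hc1 : c ≤ 1 := by
    rw [hc, div_le_one (by positivity)]; nlinarith
  let t : ℕ → ℝ := fun j => c ^ j * (δ / 2)
  have ht0 : ∀ j, 0 < t j := fun j => by positivity
  have htle : ∀ j, t j ≤ δ / 2 := fun j => by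
    have : c ^ j ≤ 1 := pow_le_one₀ hc0.le hc1
    show c ^ j * (δ / 2) ≤ δ / 2
    nlinarith
  have htanti : ∀ j k, j ≤ k → t k ≤ t j := fun j k hjk => by
    have : c ^ k ≤ c ^ j := pow_le_pow_of_le_one hc0.le hc1 hjk
    show c ^ k * (δ / 2) ≤ c ^ j * (δ / 2)
    nlinarith
  have htsucc : ∀ j, t (j + 1) = c * t j := fun j => by
    show c ^ (j + 1) * (δ / 2) = c * (c ^ j * (δ / 2)); ring
  let s : ℕ → ℝ := fun j => t j / (8 * L)
  have hs0 : ∀ j, 0 < s j := fun j => div_pos (ht0 j) (by positivity)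
  have hst : ∀ j, 8 * L * s j = t j := fun j => by
    show 8 * L * (t j / (8 * L)) = t j; field_simp
  let e : ℕ → ℝ := fun j => s j / (64 * L)
  have he0 : ∀ j, 0 < e j := fun j => div_pos (hs0 j) (by positivity)
  have hes : ∀ j, 64 * L * e j = s j := fun j => by
    show 64 * L * (s j / (64 * L)) = s j; field_simp
  have hs12 : ∀ j, s j ≤ 1 / 2 := fun j => by
    have h1 := hst j
    have h2 := htle j
    have h3 := hs0 j
    nlinarith
  choose K μr hμr hroot using fun j => rootA hδ (hs0 j) (hs12 j) (he0 j)
  obtain ⟨m1, hm1, hm1'⟩ := exists_pos_le (fun j => min (μr j) (s j)) (fun j => lt_min (hμr j) (hs0 j)) L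
  refine ⟨∑ j ∈ range L, (K j + 2), s L, min m1 δ, hs0 L, lt_min hm1 hδ, ?_⟩
  intro μ hμ hμ0 ι _ w h p q T hLng gp
  have hμδ : μ ≤ δ := hμ0.trans (min_le_right _ _)
  have hμm : μ ≤ m1 := hμ0.trans (min_le_left _ _)
  obtain ⟨Ch, d, hCh, hB1, hB2, hCon⟩ := BC_main hL hδ hμ hμδ gp hLng le_rfl le_rfl
  have hpq : ∀ i ∈ T, 0 ≤ p i ∧ 0 ≤ q i ∧ q i ≤ 1 := by
    intro i hi
    obtain ⟨l1, l2, l3, l4⟩ := hLng i hi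
    have := gp.dims i hi
    refine ⟨l1.le, by linarith, ?_⟩
    rcases l4 with l4 | l4
    · rw [← l4.1]; exact this.1
    · rw [← l4.2]; exact this.2
  let D : ℕ → Finset ι := fun j => T.filter (fun i => t (j + 1) < d i ∧ d i ≤ t j)
  obtain ⟨j, hj, hDj⟩ := pigeon T D hL (fun j _ => filter_subset _ _) (by
    have aux : ∀ j k, j < k → Disjoint (D j) (D k) := by
      intro j k hjk
      rw [Finset.disjoint_left]
      intro i hi hi'
      have h1 := (mem_filter.1 hi).2.1
      have h2 := (mem_filter.1 hi').2.2
      have := htanti (j + 1) k hjk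
      linarith
    intro j _ k _ hjk
    rcases lt_or_gt_of_ne hjk with h | h
    · exact aux _ _ h
    · exact (aux _ _ h).symm)
  have hμj := hm1' j hj
  have hμs : μ ≤ s j := hμm.trans (hμj.trans (min_le_right _ _))
  have hμrj : μ ≤ μr j := hμm.trans (hμj.trans (min_le_left _ _))
  set R := T.filter (fun i => t j < d i) with hR
  set FB := T.filter (fun i => d i ≤ t (j + 1)) with hFBdef
  have hFB : ∑ i ∈ FB, p i ≤ e j := by
    have h1 := hB1 (t (j + 1)) (htle _)
    have h2 := hB2 (t (j + 1)) (htle _)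
    rw [max_eq_left (ht0 _).le] at h1 h2
    have h3 : FB = Ch.filter (fun i => d i ≤ t (j + 1)) ∪ (T \ Ch).filter (fun i => d i ≤ t (j + 1)) := by
      rw [← filter_union, union_sdiff_of_subset hCh]
    have h4 : Disjoint (Ch.filter (fun i => d i ≤ t (j + 1))) ((T \ Ch).filter (fun i => d i ≤ t (j + 1))) :=
      disjoint_filter_filter disjoint_sdiff
    rw [max_eq_left hδ1] at h2
    have h5 : δ * ∑ i ∈ FB, p i ≤ 2 / δ ^ 2 * t (j + 1) := by
      rw [h3, sum_union h4, mul_add]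
      have := ht0 (j + 1)
      have e1 : (2 * (1 * 1) / δ ^ 2 - 2) * t (j + 1) = 2 / δ ^ 2 * t (j + 1) - 2 * t (j + 1) := by ring
      rw [e1] at h2
      linarith
    have h6 : 2 / δ ^ 2 * t (j + 1) = δ * e j := by
      rw [htsucc, hc]
      show _ = δ * (t j / (8 * L) / (64 * L))
      field_simp; ring
    rw [h6] at h5
    exact le_of_mul_le_mul_left h5 hδ
  obtain ⟨E, hE1, hE2, hE3⟩ := hCon 0 0 (t j) (s j) le_rfl le_rfl (htle j) (by simpa using (ht0 j).le)
    (by simpa using hδ1) (by simpa using hδ1) hμs (hst j).le R (filter_subset _ _) (by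
      intro i hi
      simpa using (mem_filter.1 hi).2)
  have hRE : R \ E ⊆ T := sdiff_subset.trans (filter_subset _ _)
  have hAD : AD p q (K j) (e j) 1 (1 - s j / 2) (R \ E) := by
    rcases hE3 with g | g
    · rw [add_zero] at g
      exact hroot j μ hμ hμrj ι h w p q _ (hLng.mono hRE).swap g.swap
    · rw [add_zero] at g
      exact hroot j μ hμ hμrj ι w h p q _ (hLng.mono hRE) g
  have hdj : Disjoint (R \ E) FB := by
    rw [Finset.disjoint_left]
    intro i hi hi'
    have h1 := (mem_filter.1 (mem_sdiff.1 hi).1).2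
    have h2 := (mem_filter.1 hi').2
    have := htanti j (j + 1) (by omega)
    linarith
  have hsub : R \ E ∪ FB ⊆ T := union_subset hRE (filter_subset _ _)
  obtain ⟨f, f1, f2, f3⟩ := strip_step (he0 j).le (by
    have h1 := hes j
    have h2 := he0 j
    nlinarith) hAD hdj (fun i hi => hpq i (hsub hi)) hFB
  refine ⟨R \ E ∪ FB, hsub, ?_, s j, f, ?_, f1.weak ?_ le_rfl, f2, ?_⟩
  · have h1 : T \ (R \ E ∪ FB) ⊆ D j ∪ E := by
      intro i hi
      simp only [mem_sdiff, mem_union, not_or, not_and, not_not] at hi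
      by_cases hiE : i ∈ E
      · exact mem_union_right _ hiE
      · refine mem_union_left _ (mem_filter.2 ⟨hi.1, ?_, ?_⟩)
        · by_contra hcon
          exact hi.2.2 (mem_filter.2 ⟨hi.1, not_lt.1 hcon⟩)
        · by_contra hcon
          exact hiE (hi.2.1 (mem_filter.2 ⟨hi.1, not_le.1 hcon⟩))
    have h2 := (card_le_card h1).trans (card_union_le _ _)
    have h3 := Nat.mul_le_mul_left L h2
    rw [mul_add] at h3
    omega
  · show t L / (8 * L) ≤ t j / (8 * L)
    have := htanti j L hj.le
    gcongr
  · exact single_le_sum (f := fun j => K j + 2) (fun _ _ => Nat.zero_le _) (mem_range.2 hj)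
  · have : s j / (32 * L) = 2 * e j := by
      show s j / (32 * L) = 2 * (s j / (64 * L)); field_simp; ring
    rw [this]; exact f3

end RCP


namespace RCP

open Finset

variable {ι : Type} [DecidableEq ι]

theorem shelf {w h : ι → ℝ} {H : ℝ} (hH : 0 ≤ H) (S : Finset ι) (hS : ∀ i ∈ S, 0 ≤ w i ∧ h i ≤ H) :
    Gp w h (∑ i ∈ S, w i) H S := by
  induction S using Finset.induction_on with
  | empty => simpa using Gp.nil 0 H le_rfl hH
  | insert i S hi ih =>
    rw [sum_insert hi, insert_eq]
    have h1 := hS i (mem_insert_self _ _)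
    exact .vcut _ _ _ _ _ (disjoint_singleton_left.2 hi) (.single _ _ _ h1.1 hH le_rfl h1.2)
      (ih fun j hj => hS j (mem_insert_of_mem hj))

theorem nfdh {w h : ι → ℝ} {a m : ℝ} (hm : 0 ≤ m) (ham : m < a) : ∀ (n : ℕ) (S : Finset ι) (H : ℝ),
    S.card = n → (∀ i ∈ S, 0 ≤ w i ∧ w i ≤ m ∧ 0 ≤ h i ∧ h i ≤ H) → 0 ≤ H →
    Gp w h a (H + (∑ i ∈ S, w i * h i) / (a - m)) S := by
  intro n
  induction n using Nat.strong_induction_on with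
  | _ n ih =>
    intro S H hn hS hH
    have ham' : 0 < a - m := by linarith
    have hA0 : ∀ A ⊆ S, 0 ≤ ∑ i ∈ A, w i * h i := fun A hA =>
      sum_nonneg fun i hi => mul_nonneg (hS i (hA hi)).1 (hS i (hA hi)).2.2.1
    by_cases hle : ∑ i ∈ S, w i ≤ a
    · refine (shelf hH S (fun i hi => ⟨(hS i hi).1, (hS i hi).2.2.2⟩)).mono hle ?_
      have := div_nonneg (hA0 S subset_rfl) ham'.le
      linarith
    push Not at hle
    obtain ⟨A, hA, hA1, hA2, hA3⟩ := prefix_lemma h w hm n S hn (fun i hi => (hS i hi).2.1) (a - m)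
      ham'.le (by linarith)
    have hne : A.Nonempty := by
      rw [nonempty_iff_ne_empty]
      rintro rfl
      rw [sum_empty] at hA2; linarith
    obtain ⟨i0, hi0, hmin⟩ := exists_min_image A h hne
    have hi0' := hS i0 (hA hi0)
    have hareaA : (a - m) * h i0 ≤ ∑ i ∈ A, w i * h i := by
      calc (a - m) * h i0 ≤ (∑ i ∈ A, w i) * h i0 := mul_le_mul_of_nonneg_right hA2 hi0'.2.2.1
        _ = ∑ i ∈ A, w i * h i0 := sum_mul _ _ _
        _ ≤ _ := sum_le_sum fun i hi => mul_le_mul_of_nonneg_left (hmin i hi) (hS i (hA hi)).1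
    have hlt : (S \ A).card < n := by
      rw [← hn]; exact card_lt_card (sdiff_ssubset hA hne)
    have g2 := ih _ hlt (S \ A) (h i0) rfl (fun i hi => by
      have h1 := hS i (sdiff_subset hi)
      exact ⟨h1.1, h1.2.1, h1.2.2.1, hA1 i0 hi0 i hi⟩) hi0'.2.2.1
    have g1 : Gp w h a H A := (shelf hH A (fun i hi => ⟨(hS i (hA hi)).1, (hS i (hA hi)).2.2.2⟩)).mono
      (by linarith) le_rfl
    have g3 := Gp.hcut _ _ _ _ _ disjoint_sdiff g1 g2
    rw [union_sdiff_of_subset hA] at g3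
    refine g3.mono le_rfl ?_
    have e1 : ∑ i ∈ S, w i * h i = ∑ i ∈ A, w i * h i + ∑ i ∈ S \ A, w i * h i := by
      rw [add_comm]; exact (sum_sdiff hA).symm
    rw [e1, add_div]
    have : h i0 ≤ (∑ i ∈ A, w i * h i) / (a - m) := by
      rw [le_div_iff₀ ham']; linarith
    linarith

/-- Recursive container packings. -/
inductive Cp (p q : ι → ℝ) (ε : ℝ) : ℕ → ℝ → ℝ → Finset ι → Prop
  | empty (a b : ℝ) (ha : 0 ≤ a) (hb : 0 ≤ b) : Cp p q ε 0 a b ∅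
  | hcont (a b : ℝ) (S : Finset ι) (ha : 0 ≤ a) (hb : 0 ≤ b) (hq : ∀ i ∈ S, q i ≤ a)
      (hp : ∑ i ∈ S, p i ≤ b) : Cp p q ε 1 a b S
  | vcont (a b : ℝ) (S : Finset ι) (ha : 0 ≤ a) (hb : 0 ≤ b) (hq : ∀ i ∈ S, q i ≤ b)
      (hp : ∑ i ∈ S, p i ≤ a) : Cp p q ε 1 a b S
  | area (a b : ℝ) (S : Finset ι) (g : Gp p q a b S) (hS : ∀ i ∈ S, p i ≤ ε * a ∧ q i ≤ ε * b) :
      Cp p q ε 1 a b S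
  | vcut (k1 k2 : ℕ) (a1 a2 b : ℝ) (S1 S2 : Finset ι) (hd : Disjoint S1 S2)
      (g1 : Cp p q ε k1 a1 b S1) (g2 : Cp p q ε k2 a2 b S2) :
      Cp p q ε (k1 + k2) (a1 + a2) b (S1 ∪ S2)
  | hcut (k1 k2 : ℕ) (a b1 b2 : ℝ) (S1 S2 : Finset ι) (hd : Disjoint S1 S2)
      (g1 : Cp p q ε k1 a b1 S1) (g2 : Cp p q ε k2 a b2 S2) :
      Cp p q ε (k1 + k2) a (b1 + b2) (S1 ∪ S2)

theorem Cp.scale {p q : ι → ℝ} {ε a b c : ℝ} {k : ℕ} {S : Finset ι} (g : Cp p q ε k a b S)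
    (hc : 0 ≤ c) : Cp (fun i => c * p i) (fun i => c * q i) ε k (c * a) (c * b) S := by
  induction g with
  | empty a b ha hb => exact .empty _ _ (by positivity) (by positivity)
  | hcont a b S ha hb hq hp =>
    refine .hcont _ _ _ (by positivity) (by positivity)
      (fun i hi => mul_le_mul_of_nonneg_left (hq i hi) hc) ?_
    rw [← mul_sum]; exact mul_le_mul_of_nonneg_left hp hc
  | vcont a b S ha hb hq hp =>
    refine .vcont _ _ _ (by positivity) (by positivity)
      (fun i hi => mul_le_mul_of_nonneg_left (hq i hi) hc) ?_
    rw [← mul_sum]; exact mul_le_mul_of_nonneg_left hp hc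
  | area a b S g hS =>
    refine .area _ _ _ (g.scale hc) (fun i hi => ?_)
    have h1 := hS i hi
    constructor
    · have := mul_le_mul_of_nonneg_left h1.1 hc
      linarith
    · have := mul_le_mul_of_nonneg_left h1.2 hc
      linarith
  | vcut k1 k2 a1 a2 b S1 S2 hd g1 g2 ih1 ih2 => rw [mul_add]; exact .vcut _ _ _ _ _ _ _ hd ih1 ih2
  | hcut k1 k2 a b1 b2 S1 S2 hd g1 g2 ih1 ih2 => rw [mul_add]; exact .hcut _ _ _ _ _ _ _ hd ih1 ih2

/-- Each item in its own container. -/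
theorem Gp.toCp {w h p q : ι → ℝ} {a b ε : ℝ} {S : Finset ι} (g : Gp w h a b S) :
    (∀ i ∈ S, (w i = q i ∧ h i = p i) ∨ (w i = p i ∧ h i = q i)) → Cp p q ε S.card a b S := by
  induction g with
  | nil a b ha hb => intro _; exact .empty _ _ ha hb
  | single a b i ha hb hw hh =>
    intro H
    rw [card_singleton]
    rcases H i (mem_singleton_self i) with h1 | h1
    · refine .hcont _ _ _ ha hb ?_ ?_
      · intro j hj; rw [mem_singleton.1 hj, ← h1.1]; exact hw
      · rw [sum_singleton, ← h1.2]; exact hh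
    · refine .vcont _ _ _ ha hb ?_ ?_
      · intro j hj; rw [mem_singleton.1 hj, ← h1.2]; exact hh
      · rw [sum_singleton, ← h1.1]; exact hw
  | vcut a1 a2 b S1 S2 hd g1 g2 ih1 ih2 =>
    intro H
    rw [card_union_of_disjoint hd]
    exact .vcut _ _ _ _ _ _ _ hd (ih1 fun i hi => H i (mem_union_left _ hi))
      (ih2 fun i hi => H i (mem_union_right _ hi))
  | hcut a b1 b2 S1 S2 hd g1 g2 ih1 ih2 =>
    intro H
    rw [card_union_of_disjoint hd]
    exact .hcut _ _ _ _ _ _ _ hd (ih1 fun i hi => H i (mem_union_left _ hi))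
      (ih2 fun i hi => H i (mem_union_right _ hi))

/-- Splitting small items between two regions. -/
theorem split_small {g : ι → ℝ} {m c F1 F2 : ℝ} (hm : 0 ≤ m) (hmc : m ≤ c) (S : Finset ι)
    (hg : ∀ i ∈ S, 0 ≤ g i ∧ g i ≤ m)
    (H : S = ∅ ∨ ∑ i ∈ S, g i ≤ F1 + F2 - c) :
    ∃ S1 ⊆ S, (S1 = ∅ ∨ ∑ i ∈ S1, g i ≤ F1) ∧ (S \ S1 = ∅ ∨ ∑ i ∈ S \ S1, g i ≤ F2) := by
  rcases H with rfl | H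
  · exact ⟨∅, subset_rfl, Or.inl rfl, Or.inl (by simp)⟩
  by_cases h1 : F1 - c < 0
  · refine ⟨∅, empty_subset _, Or.inl rfl, Or.inr ?_⟩
    rw [sdiff_empty]; linarith
  by_cases h2 : ∑ i ∈ S, g i ≤ F1
  · exact ⟨S, subset_rfl, Or.inr h2, Or.inl (by simp)⟩
  push Not at h1 h2
  obtain ⟨A, hA, -, hA2, hA3⟩ := prefix_lemma g g hm _ S rfl (fun i hi => (hg i hi).2) (F1 - c)
    h1 (by linarith)
  refine ⟨A, hA, Or.inr (by linarith), Or.inr ?_⟩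
  have := sum_sdiff (f := g) hA
  linarith

theorem fill {p q : ι → ℝ} {ε μ c : ℝ} (hε : 0 < ε) (hε1 : ε < 1) (hμ : 0 < μ) (hμ1 : μ ≤ 1)
    (hc : 2 * μ / ε ≤ c)
    {k : ℕ} {a b f : ℝ} {T : Finset ι} (g : Lp p q k a b T f) :
    a ≤ 1 → b ≤ 1 → ∀ S : Finset ι, Disjoint T S → (∀ i ∈ S, 0 ≤ p i ∧ p i ≤ μ ∧ 0 ≤ q i ∧ q i ≤ μ) →
    (S = ∅ ∨ ∑ i ∈ S, p i * q i ≤ f - (2 * k - 1) * c) →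
    ∃ k' ≤ k, Cp p q ε k' a b (T ∪ S) := by
  have hc0 : 0 < c := lt_of_lt_of_le (by positivity) hc
  have hμε : μ ≤ μ / ε := by rw [le_div_iff₀ hε]; nlinarith
  have hμc : 2 * μ ≤ c := by
    have : 2 * μ / ε = 2 * (μ / ε) := by ring
    linarith
  have hμc' : 2 * (μ / ε) ≤ c := by
    have : 2 * μ / ε = 2 * (μ / ε) := by ring
    linarith
  have hsq : μ * μ ≤ c := by nlinarith
  induction g with
  | free a b ha hb =>
    intro ha1 hb1 S hd hS H
    rcases H with rfl | H
    · exact ⟨0, by omega, by simpa using Cp.empty a b ha hb⟩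
    · refine ⟨1, le_rfl, ?_⟩
      rw [empty_union]
      have h0 : 0 ≤ ∑ i ∈ S, p i * q i := sum_nonneg fun i hi => mul_nonneg (hS i hi).1 (hS i hi).2.2.1
      push_cast at H
      have hab : c ≤ a * b := by linarith
      have ha' : 2 * (μ / ε) ≤ a := by nlinarith
      have hb' : 2 * (μ / ε) ≤ b := by nlinarith
      have hμε0 : 0 < μ / ε := by positivity
      have ham : μ < a := by linarith
      refine .area _ _ _ ((nfdh hμ.le ham _ S μ rfl hS hμ.le).mono le_rfl ?_) ?_
      · have : (∑ i ∈ S, p i * q i) / (a - μ) ≤ b - μ := by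
          rw [div_le_iff₀ (by linarith)]
          nlinarith
        linarith
      · intro i hi
        have e1 : ε * (μ / ε) = μ := by field_simp
        have h1 : ε * (μ / ε) ≤ ε * a := mul_le_mul_of_nonneg_left (by linarith) hε.le
        have h2 : ε * (μ / ε) ≤ ε * b := mul_le_mul_of_nonneg_left (by linarith) hε.le
        have := hS i hi
        constructor <;> linarith
  | hcont a b T ha hb hq hp =>
    intro ha1 hb1 S hd hS H
    have : S = ∅ := by
      rcases H with H | H
      · exact H
      · exfalso
        have h0 : 0 ≤ ∑ i ∈ S, p i * q i := sum_nonneg fun i hi => mul_nonneg (hS i hi).1 (hS i hi).2.2.1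
        push_cast at H
        linarith
    subst this
    rw [union_empty]
    exact ⟨1, le_rfl, .hcont _ _ _ ha hb hq hp⟩
  | vcont a b T ha hb hq hp =>
    intro ha1 hb1 S hd hS H
    have : S = ∅ := by
      rcases H with H | H
      · exact H
      · exfalso
        have h0 : 0 ≤ ∑ i ∈ S, p i * q i := sum_nonneg fun i hi => mul_nonneg (hS i hi).1 (hS i hi).2.2.1
        push_cast at H
        linarith
    subst this
    rw [union_empty]
    exact ⟨1, le_rfl, .vcont _ _ _ ha hb hq hp⟩
  | vcut k1 k2 a1 a2 b f1 f2 T1 T2 hdT g1 g2 ih1 ih2 =>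
    intro ha1 hb1 S hd hS H
    obtain ⟨S1, hS1, c1, c2⟩ := split_small (g := fun i => p i * q i) (m := μ * μ) (c := c)
      (F1 := f1 - (2 * k1 - 1) * c) (F2 := f2 - (2 * k2 - 1) * c) (by positivity) hsq S
      (fun i hi => ⟨mul_nonneg (hS i hi).1 (hS i hi).2.2.1,
        mul_le_mul (hS i hi).2.1 (hS i hi).2.2.2 (hS i hi).2.2.1 hμ.le⟩)
      (H.imp_right fun h => h.trans (by push_cast; linarith))
    rw [disjoint_union_left] at hd
    obtain ⟨k1', hk1, r1⟩ := ih1 (by linarith [g2.nonneg.1]) hb1 S1 (disjoint_of_subset_right hS1 hd.1)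
      (fun i hi => hS i (hS1 hi)) c1
    obtain ⟨k2', hk2, r2⟩ := ih2 (by linarith [g1.nonneg.1]) hb1 (S \ S1)
      (disjoint_of_subset_right sdiff_subset hd.2) (fun i hi => hS i (sdiff_subset hi)) c2
    refine ⟨k1' + k2', by omega, ?_⟩
    have := Cp.vcut _ _ _ _ _ _ _ ?_ r1 r2
    · rwa [union_union_union_comm, union_sdiff_of_subset hS1] at this
    · rw [disjoint_union_left, disjoint_union_right, disjoint_union_right]
      exact ⟨⟨hdT, disjoint_of_subset_right sdiff_subset hd.1⟩,
        (disjoint_of_subset_right hS1 hd.2).symm, disjoint_sdiff⟩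
  | hcut k1 k2 a b1 b2 f1 f2 T1 T2 hdT g1 g2 ih1 ih2 =>
    intro ha1 hb1 S hd hS H
    obtain ⟨S1, hS1, c1, c2⟩ := split_small (g := fun i => p i * q i) (m := μ * μ) (c := c)
      (F1 := f1 - (2 * k1 - 1) * c) (F2 := f2 - (2 * k2 - 1) * c) (by positivity) hsq S
      (fun i hi => ⟨mul_nonneg (hS i hi).1 (hS i hi).2.2.1,
        mul_le_mul (hS i hi).2.1 (hS i hi).2.2.2 (hS i hi).2.2.1 hμ.le⟩)
      (H.imp_right fun h => h.trans (by push_cast; linarith))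
    rw [disjoint_union_left] at hd
    obtain ⟨k1', hk1, r1⟩ := ih1 ha1 (by linarith [g2.nonneg.2]) S1 (disjoint_of_subset_right hS1 hd.1)
      (fun i hi => hS i (hS1 hi)) c1
    obtain ⟨k2', hk2, r2⟩ := ih2 ha1 (by linarith [g1.nonneg.2]) (S \ S1)
      (disjoint_of_subset_right sdiff_subset hd.2) (fun i hi => hS i (sdiff_subset hi)) c2
    refine ⟨k1' + k2', by omega, ?_⟩
    have := Cp.hcut _ _ _ _ _ _ _ ?_ r1 r2
    · rwa [union_union_union_comm, union_sdiff_of_subset hS1] at this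
    · rw [disjoint_union_left, disjoint_union_right, disjoint_union_right]
      exact ⟨⟨hdT, disjoint_of_subset_right sdiff_subset hd.1⟩,
        (disjoint_of_subset_right hS1 hd.2).symm, disjoint_sdiff⟩
  | weaken k k' a b f f' T hk hf g ih =>
    intro ha1 hb1 S hd hS H
    obtain ⟨k1, h1, h2⟩ := ih ha1 hb1 S hd hS (H.imp_right fun h => h.trans (by
      have : (k : ℝ) ≤ k' := by exact_mod_cast hk
      nlinarith))
    exact ⟨k1, h1.trans hk, h2⟩

theorem avg_prefix (g : ι → ℝ) {A S : Finset ι} (hA : A ⊆ S) (h : ∀ i ∈ A, ∀ j ∈ S \ A, g j ≤ g i) :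
    (A.card : ℝ) * ∑ i ∈ S, g i ≤ S.card * ∑ i ∈ A, g i := by
  have h1 : ∑ i ∈ A, ∑ j ∈ S \ A, g j ≤ ∑ i ∈ A, ∑ j ∈ S \ A, g i :=
    sum_le_sum fun i hi => sum_le_sum fun j hj => h i hi j hj
  simp only [sum_const, nsmul_eq_mul] at h1
  rw [← mul_sum] at h1
  have h2 : ((S \ A).card : ℝ) + A.card = S.card := by exact_mod_cast card_sdiff_add_card_eq_card hA
  rw [← h2, ← sum_sdiff hA]
  linarith

/-- Long and small items together. -/
theorem struct_thm {ε : ℝ} (hε : 0 < ε) (hε1 : ε < 1) {L : ℕ} (hL : 0 < L) {δ : ℝ} (hδ : 0 < δ)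
    (hδ1 : δ ≤ 1) : ∃ (K : ℕ) (μ : ℝ), 0 < μ ∧ μ ≤ δ ∧ ∀ (ι : Type) [DecidableEq ι]
      (w h p q : ι → ℝ) (T S : Finset ι), Disjoint T S → Lng w h p q δ μ T →
      (∀ i ∈ S, 0 < p i ∧ p i ≤ q i ∧ q i ≤ μ ∧ ((w i = q i ∧ h i = p i) ∨ (w i = p i ∧ h i = q i))) →
      Gp w h 1 1 (T ∪ S) →
      ∃ A ⊆ T ∪ S, L * ((T ∪ S) \ A).card ≤ 2 * (T ∪ S).card ∧ ∃ k ≤ K, Cp p q ε k 1 1 A := by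
  obtain ⟨K, smin, μ0, hsmin, hμ0, HL⟩ := long_thm hL hδ hδ1
  have hLr : (1 : ℝ) ≤ L := by exact_mod_cast hL
  have hL0 : (0 : ℝ) < L := by linarith
  set B : ℝ := smin / (16 * L) with hB
  have hB0 : 0 < B := by positivity
  set μ : ℝ := min (min μ0 δ) (min B (ε * B / (8 * (K + 1)))) with hμdef
  have hμ : 0 < μ := by positivity
  have m1 : μ ≤ μ0 := (min_le_left _ _).trans (min_le_left _ _)
  have m2 : μ ≤ δ := (min_le_left _ _).trans (min_le_right _ _)
  have m3 : μ ≤ B := (min_le_right _ _).trans (min_le_left _ _)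
  have m4 : μ ≤ ε * B / (8 * (K + 1)) := (min_le_right _ _).trans (min_le_right _ _)
  have hμ1 : μ ≤ 1 := m2.trans hδ1
  refine ⟨K, μ, hμ, m2, ?_⟩
  intro ι _ w h p q T S hd hLng hS gp
  obtain ⟨T', hT', hcard, s, f, hs, lp, f1, f2⟩ := HL μ hμ m1 ι w h p q T hLng (gp.subset subset_union_left)
  have hcK : (2 * (K : ℝ) - 1) * (2 * μ / ε) ≤ B / 2 := by
    rw [le_div_iff₀ (by positivity)] at m4
    have hK : (0 : ℝ) ≤ K := Nat.cast_nonneg K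
    rw [mul_div_assoc', div_le_iff₀ hε]
    nlinarith
  have hBs : B ≤ s / (16 * L) := by rw [hB]; gcongr
  have hs0 : 0 < s := lt_of_lt_of_le hsmin hs
  have hs16 : s / (16 * L) ≤ s / 16 := by
    apply div_le_div_of_nonneg_left hs0.le (by norm_num) (by linarith)
  have e32 : s / (32 * L) = s / (16 * L) / 2 := by field_simp; ring
  have hμμ : μ * μ ≤ s / (16 * L) := by nlinarith
  have harea : ∑ i ∈ T', p i * q i + ∑ i ∈ S, p i * q i ≤ 1 := by
    have h1 := (gp.subset (union_subset_union hT' (subset_refl S))).area_le (by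
      intro i hi
      rcases mem_union.1 hi with hi | hi
      · obtain ⟨l1, l2, l3, l4⟩ := hLng i (hT' hi)
        rcases l4 with l4 | l4 <;> rw [l4.1, l4.2] <;> constructor <;> linarith
      · obtain ⟨l1, l2, l3, l4⟩ := hS i hi
        rcases l4 with l4 | l4 <;> rw [l4.1, l4.2] <;> constructor <;> linarith)
    rw [sum_union (disjoint_of_subset_left hT' hd)] at h1
    have h2 : ∑ i ∈ T', w i * h i = ∑ i ∈ T', p i * q i := sum_congr rfl fun i hi => by
      rcases (hLng i (hT' hi)).2.2.2 with l4 | l4 <;> rw [l4.1, l4.2]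
      ring
    have h3 : ∑ i ∈ S, w i * h i = ∑ i ∈ S, p i * q i := sum_congr rfl fun i hi => by
      rcases (hS i hi).2.2.2 with l4 | l4 <;> rw [l4.1, l4.2]
      ring
    rw [h2, h3] at h1
    linarith
  have hpq : ∀ i ∈ S, 0 ≤ p i ∧ p i ≤ μ ∧ 0 ≤ q i ∧ q i ≤ μ := fun i hi => by
    obtain ⟨l1, l2, l3, l4⟩ := hS i hi
    exact ⟨l1.le, by linarith, by linarith, l3⟩
  -- choose the kept small items
  obtain ⟨D, hD, hDc, hDa⟩ : ∃ D ⊆ S, L * D.card ≤ S.card ∧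
      ∑ i ∈ S \ D, p i * q i ≤ f - (2 * K - 1) * (2 * μ / ε) := by
    by_cases hsm : ∑ i ∈ S, p i * q i ≤ s / 8
    · refine ⟨∅, empty_subset _, by simp, ?_⟩
      rw [sdiff_empty]
      linarith
    · push Not at hsm
      obtain ⟨D, hD, d1, d2, d3⟩ := prefix_lemma (fun i => p i * q i) (fun i => p i * q i)
        (m := μ * μ) (by positivity) _ S rfl (fun i hi => mul_le_mul (hpq i hi).2.1 (hpq i hi).2.2.2
          (hpq i hi).2.2.1 hμ.le) (s / (16 * L)) (by positivity) (by linarith)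
      refine ⟨D, hD, ?_, ?_⟩
      · have h1 := avg_prefix (fun i => p i * q i) hD d1
        have h2 : ∑ i ∈ D, p i * q i ≤ s / (8 * L) := by
          have : s / (8 * L) = 2 * (s / (16 * L)) := by field_simp; ring
          linarith
        have h3 : (D.card : ℝ) * (s / 8) ≤ S.card * (s / (8 * L)) := by
          calc (D.card : ℝ) * (s / 8) ≤ D.card * ∑ i ∈ S, p i * q i := by gcongr
            _ ≤ _ := h1
            _ ≤ _ := by gcongr
        have h4 : (L : ℝ) * D.card ≤ S.card := by
          have e1 : (S.card : ℝ) * (s / (8 * L)) * L = S.card * (s / 8) := by field_simp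
          have h5 := mul_le_mul_of_nonneg_right h3 hL0.le
          rw [e1] at h5
          have h6 : 0 < s / 8 := by positivity
          refine le_of_mul_le_mul_right ?_ h6
          linarith
        exact_mod_cast h4
      · have := sum_sdiff (f := fun i => p i * q i) hD
        linarith
  obtain ⟨k', hk', r⟩ := fill hε hε1 hμ hμ1 le_rfl lp le_rfl le_rfl (S \ D)
    (disjoint_of_subset_left hT' (disjoint_of_subset_right sdiff_subset hd))
    (fun i hi => hpq i (sdiff_subset hi)) (Or.inr hDa)
  refine ⟨T' ∪ S \ D, union_subset_union hT' sdiff_subset, ?_, k', hk', r⟩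
  have h1 : (T ∪ S) \ (T' ∪ S \ D) ⊆ (T \ T') ∪ D := by
    intro i hi
    simp only [mem_sdiff, mem_union, not_or, not_and, not_not] at hi ⊢
    tauto
  have h2 := Nat.mul_le_mul_left L ((card_le_card h1).trans (card_union_le _ _))
  rw [mul_add] at h2
  rw [card_union_of_disjoint hd]
  omega

end RCP


namespace RCP

open Finset

variable {ι : Type} [DecidableEq ι]

theorem sep_toGp {place : ι → Rect} {P : Rect} {S : Finset ι} (g : GuillotineSep place P S) :
    P.x1 ≤ P.x2 → P.y1 ≤ P.y2 → (∀ i ∈ S, (place i).SubRect P) →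
    Gp (fun i => (place i).width) (fun i => (place i).height) P.width P.height S := by
  induction g with
  | base P S hS =>
    intro hx hy hin
    have h1 : 0 ≤ P.width := by unfold Rect.width; linarith
    have h2 : 0 ≤ P.height := by unfold Rect.height; linarith
    rcases Nat.le_one_iff_eq_zero_or_eq_one.1 hS with h | h
    · rw [card_eq_zero] at h; subst h; exact .nil _ _ h1 h2
    · obtain ⟨i, rfl⟩ := card_eq_one.1 h
      obtain ⟨a1, a2, a3, a4⟩ := hin i (mem_singleton_self i)
      refine .single _ _ _ h1 h2 ?_ ?_
      · unfold Rect.width; linarith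
      · unfold Rect.height; linarith
  | vcut P S c h1 h2 hcross hL hR ih1 ih2 =>
    intro hx hy hin
    have g1 := ih1 h1.le hy (fun i hi => by
      obtain ⟨hi, hi'⟩ := mem_filter.1 hi
      obtain ⟨a1, a2, a3, a4⟩ := hin i hi
      exact ⟨a1, hi', a3, a4⟩)
    have g2 := ih2 h2.le hy (fun i hi => by
      obtain ⟨hi, hi'⟩ := mem_filter.1 hi
      obtain ⟨a1, a2, a3, a4⟩ := hin i hi
      exact ⟨(hcross i hi).resolve_left hi', a2, a3, a4⟩)
    have g3 := g1.vcut' g2 (disjoint_filter_filter_not _ _ _) (a := P.width) (by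
      simp only [Rect.width]; linarith)
    rwa [filter_union_filter_not_eq] at g3
  | hcut P S c h1 h2 hcross hL hR ih1 ih2 =>
    intro hx hy hin
    have g1 := ih1 hx h1.le (fun i hi => by
      obtain ⟨hi, hi'⟩ := mem_filter.1 hi
      obtain ⟨a1, a2, a3, a4⟩ := hin i hi
      exact ⟨a1, a2, a3, hi'⟩)
    have g2 := ih2 hx h2.le (fun i hi => by
      obtain ⟨hi, hi'⟩ := mem_filter.1 hi
      obtain ⟨a1, a2, a3, a4⟩ := hin i hi
      exact ⟨a1, a2, (hcross i hi).resolve_left hi', a4⟩)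
    have g3 := g1.hcut' g2 (disjoint_filter_filter_not _ _ _) (b := P.height) (by
      simp only [Rect.height]; linarith)
    rwa [filter_union_filter_not_eq] at g3

theorem sep_congr {pl pl' : ι → Rect} {P : Rect} {S : Finset ι} (g : GuillotineSep pl P S) :
    (∀ i ∈ S, pl' i = pl i) → GuillotineSep pl' P S := by
  induction g with
  | base P S hS => intro _; exact .base _ _ hS
  | vcut P S c h1 h2 hcross hL hR ih1 ih2 =>
    intro H
    refine .vcut _ _ c h1 h2 (fun i hi => by rw [H i hi]; exact hcross i hi) ?_ ?_
    · rw [filter_congr (q := fun i => (pl i).x2 ≤ c) (fun i hi => by rw [H i hi])]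
      exact ih1 fun i hi => H i (mem_filter.1 hi).1
    · rw [filter_congr (q := fun i => ¬ (pl i).x2 ≤ c) (fun i hi => by rw [H i hi])]
      exact ih2 fun i hi => H i (mem_filter.1 hi).1
  | hcut P S c h1 h2 hcross hL hR ih1 ih2 =>
    intro H
    refine .hcut _ _ c h1 h2 (fun i hi => by rw [H i hi]; exact hcross i hi) ?_ ?_
    · rw [filter_congr (q := fun i => (pl i).y2 ≤ c) (fun i hi => by rw [H i hi])]
      exact ih1 fun i hi => H i (mem_filter.1 hi).1
    · rw [filter_congr (q := fun i => ¬ (pl i).y2 ≤ c) (fun i hi => by rw [H i hi])]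
      exact ih2 fun i hi => H i (mem_filter.1 hi).1

structure Placed (pl : ι → Rect) (P : Rect) (S : Finset ι) : Prop where
  pos : ∀ i ∈ S, (pl i).x1 < (pl i).x2 ∧ (pl i).y1 < (pl i).y2
  hin : ∀ i ∈ S, (pl i).SubRect P
  hdisj : ∀ i ∈ S, ∀ j ∈ S, i ≠ j → Disjoint (pl i).toSet (pl j).toSet
  sep : GuillotineSep pl P S

def comb (pl1 pl2 : ι → Rect) (S1 : Finset ι) : ι → Rect := fun i => if i ∈ S1 then pl1 i else pl2 i

theorem comb_l {pl1 pl2 : ι → Rect} {S1 : Finset ι} {i : ι} (hi : i ∈ S1) :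
    comb pl1 pl2 S1 i = pl1 i := if_pos hi

theorem comb_r {pl1 pl2 : ι → Rect} {S1 : Finset ι} {i : ι} (hi : i ∉ S1) :
    comb pl1 pl2 S1 i = pl2 i := if_neg hi

theorem toSet_mono {r s : Rect} (h : r.SubRect s) : r.toSet ⊆ s.toSet := by
  obtain ⟨a1, a2, a3, a4⟩ := h
  rintro ⟨x, y⟩ ⟨b1, b2, b3, b4⟩
  exact ⟨by linarith, by linarith, by linarith, by linarith⟩

theorem SubRect_trans {r s t : Rect} (h : r.SubRect s) (h' : s.SubRect t) : r.SubRect t := by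
  obtain ⟨a1, a2, a3, a4⟩ := h
  obtain ⟨b1, b2, b3, b4⟩ := h'
  exact ⟨by linarith, by linarith, by linarith, by linarith⟩

theorem disj_x {r s : Rect} (h : r.x2 ≤ s.x1) : Disjoint r.toSet s.toSet := by
  rw [Set.disjoint_left]
  rintro ⟨x, y⟩ ⟨b1, b2, b3, b4⟩ ⟨c1, c2, c3, c4⟩
  dsimp at *
  linarith

theorem disj_y {r s : Rect} (h : r.y2 ≤ s.y1) : Disjoint r.toSet s.toSet := by
  rw [Set.disjoint_left]
  rintro ⟨x, y⟩ ⟨b1, b2, b3, b4⟩ ⟨c1, c2, c3, c4⟩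
  dsimp at *
  linarith

/-- Everything except separability when combining. -/
theorem Placed.combine {pl1 pl2 : ι → Rect} {P1 P2 P : Rect} {S1 S2 : Finset ι}
    (A : Placed pl1 P1 S1) (B : Placed pl2 P2 S2) (hd : Disjoint S1 S2) (h1 : P1.SubRect P)
    (h2 : P2.SubRect P) (hP : Disjoint P1.toSet P2.toSet)
    (hs : GuillotineSep (comb pl1 pl2 S1) P (S1 ∪ S2)) : Placed (comb pl1 pl2 S1) P (S1 ∪ S2) := by
  have key : ∀ i ∈ S1 ∪ S2, (i ∈ S1 ∧ comb pl1 pl2 S1 i = pl1 i) ∨ (i ∈ S2 ∧ comb pl1 pl2 S1 i = pl2 i) := by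
    intro i hi
    by_cases h : i ∈ S1
    · exact Or.inl ⟨h, comb_l h⟩
    · exact Or.inr ⟨(mem_union.1 hi).resolve_left h, comb_r h⟩
  refine ⟨?_, ?_, ?_, hs⟩
  · intro i hi
    rcases key i hi with ⟨h, e⟩ | ⟨h, e⟩ <;> rw [e]
    · exact A.pos i h
    · exact B.pos i h
  · intro i hi
    rcases key i hi with ⟨h, e⟩ | ⟨h, e⟩ <;> rw [e]
    · exact SubRect_trans (A.hin i h) h1
    · exact SubRect_trans (B.hin i h) h2
  · intro i hi j hj hij
    rcases key i hi with ⟨h, e⟩ | ⟨h, e⟩ <;> rcases key j hj with ⟨h', e'⟩ | ⟨h', e'⟩ <;> rw [e, e']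
    · exact A.hdisj i h j h' hij
    · exact hP.mono (toSet_mono (A.hin i h)) (toSet_mono (B.hin j h'))
    · exact hP.symm.mono (toSet_mono (B.hin i h)) (toSet_mono (A.hin j h'))
    · exact B.hdisj i h j h' hij

theorem Placed.vcomb {pl1 pl2 : ι → Rect} {x c x' y y' : ℝ} {S1 S2 : Finset ι}
    (hx : x ≤ c) (hx' : c ≤ x') (A : Placed pl1 ⟨x, c, y, y'⟩ S1) (B : Placed pl2 ⟨c, x', y, y'⟩ S2)
    (hd : Disjoint S1 S2) : Placed (comb pl1 pl2 S1) ⟨x, x', y, y'⟩ (S1 ∪ S2) := by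
  have hr : ∀ i ∈ S2, comb pl1 pl2 S1 i = pl2 i := fun i hi => comb_r (Finset.disjoint_right.1 hd hi)
  refine A.combine B hd ⟨le_rfl, hx', le_rfl, le_rfl⟩ ⟨hx, le_rfl, le_rfl, le_rfl⟩ (disj_x le_rfl) ?_
  rcases hx.eq_or_lt with e | hx
  · subst e
    have : S1 = ∅ := by
      rw [eq_empty_iff_forall_notMem]
      intro i hi
      have h1 := (A.pos i hi).1
      obtain ⟨a1, a2, -, -⟩ := A.hin i hi
      dsimp at a1 a2
      linarith
    subst this
    rw [empty_union]
    exact sep_congr B.sep hr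
  rcases hx'.eq_or_lt with e | hx'
  · subst e
    have : S2 = ∅ := by
      rw [eq_empty_iff_forall_notMem]
      intro i hi
      have h1 := (B.pos i hi).1
      obtain ⟨a1, a2, -, -⟩ := B.hin i hi
      dsimp at a1 a2
      linarith
    subst this
    rw [union_empty]
    exact sep_congr A.sep fun i hi => comb_l hi
  have k1 : ∀ i ∈ S1, (comb pl1 pl2 S1 i).x2 ≤ c := fun i hi => by
    rw [comb_l hi]; exact (A.hin i hi).2.1
  have k2 : ∀ i ∈ S2, c ≤ (comb pl1 pl2 S1 i).x1 ∧ ¬ (comb pl1 pl2 S1 i).x2 ≤ c := fun i hi => by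
    rw [hr i hi]
    have h1 : c ≤ (pl2 i).x1 := (B.hin i hi).1
    have := (B.pos i hi).1
    exact ⟨h1, by linarith⟩
  refine .vcut _ _ c hx hx' ?_ ?_ ?_
  · intro i hi
    rcases mem_union.1 hi with h | h
    · exact Or.inl (k1 i h)
    · exact Or.inr (k2 i h).1
  · rw [filter_union, filter_true_of_mem k1, filter_false_of_mem (fun i hi => (k2 i hi).2), union_empty]
    exact sep_congr A.sep fun i hi => comb_l hi
  · rw [filter_union, filter_false_of_mem (fun i hi => not_not.2 (k1 i hi)),
      filter_true_of_mem (fun i hi => (k2 i hi).2), empty_union]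
    exact sep_congr B.sep hr

theorem Placed.hcomb {pl1 pl2 : ι → Rect} {x x' y c y' : ℝ} {S1 S2 : Finset ι}
    (hx : y ≤ c) (hx' : c ≤ y') (A : Placed pl1 ⟨x, x', y, c⟩ S1) (B : Placed pl2 ⟨x, x', c, y'⟩ S2)
    (hd : Disjoint S1 S2) : Placed (comb pl1 pl2 S1) ⟨x, x', y, y'⟩ (S1 ∪ S2) := by
  have hr : ∀ i ∈ S2, comb pl1 pl2 S1 i = pl2 i := fun i hi => comb_r (Finset.disjoint_right.1 hd hi)
  refine A.combine B hd ⟨le_rfl, le_rfl, le_rfl, hx'⟩ ⟨le_rfl, le_rfl, hx, le_rfl⟩ (disj_y le_rfl) ?_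
  rcases hx.eq_or_lt with e | hx
  · subst e
    have : S1 = ∅ := by
      rw [eq_empty_iff_forall_notMem]
      intro i hi
      have h1 := (A.pos i hi).2
      obtain ⟨-, -, a1, a2⟩ := A.hin i hi
      dsimp at a1 a2
      linarith
    subst this
    rw [empty_union]
    exact sep_congr B.sep hr
  rcases hx'.eq_or_lt with e | hx'
  · subst e
    have : S2 = ∅ := by
      rw [eq_empty_iff_forall_notMem]
      intro i hi
      have h1 := (B.pos i hi).2
      obtain ⟨-, -, a1, a2⟩ := B.hin i hi
      dsimp at a1 a2
      linarith
    subst this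
    rw [union_empty]
    exact sep_congr A.sep fun i hi => comb_l hi
  have k1 : ∀ i ∈ S1, (comb pl1 pl2 S1 i).y2 ≤ c := fun i hi => by
    rw [comb_l hi]; exact (A.hin i hi).2.2.2
  have k2 : ∀ i ∈ S2, c ≤ (comb pl1 pl2 S1 i).y1 ∧ ¬ (comb pl1 pl2 S1 i).y2 ≤ c := fun i hi => by
    rw [hr i hi]
    have h1 : c ≤ (pl2 i).y1 := (B.hin i hi).2.2.1
    have := (B.pos i hi).2
    exact ⟨h1, by linarith⟩
  refine .hcut _ _ c hx hx' ?_ ?_ ?_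
  · intro i hi
    rcases mem_union.1 hi with h | h
    · exact Or.inl (k1 i h)
    · exact Or.inr (k2 i h).1
  · rw [filter_union, filter_true_of_mem k1, filter_false_of_mem (fun i hi => (k2 i hi).2), union_empty]
    exact sep_congr A.sep fun i hi => comb_l hi
  · rw [filter_union, filter_false_of_mem (fun i hi => not_not.2 (k1 i hi)),
      filter_true_of_mem (fun i hi => (k2 i hi).2), empty_union]
    exact sep_congr B.sep hr

theorem Placed.empty (pl : ι → Rect) (P : Rect) : Placed pl P ∅ :=
  ⟨by simp, by simp, by simp, .base _ _ (by simp)⟩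

theorem Placed.single {w h x x' y y' : ℝ} (i : ι) (hw : 0 < w) (hh : 0 < h) (hx : w ≤ x' - x)
    (hy : h ≤ y' - y) : Placed (fun _ => ⟨x, x + w, y, y + h⟩) ⟨x, x', y, y'⟩ ({i} : Finset ι) := by
  refine ⟨?_, ?_, ?_, .base _ _ (by simp)⟩
  · intro j _; dsimp; constructor <;> linarith
  · intro j _
    exact ⟨le_rfl, by dsimp; linarith, le_rfl, by dsimp; linarith⟩
  · intro j hj k hk hjk
    rw [mem_singleton] at hj hk
    exact absurd (hj.trans hk.symm) hjk

theorem Gp.realize {w h : ι → ℝ} {a b : ℝ} {S : Finset ι} (g : Gp w h a b S) :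
    (∀ i ∈ S, 0 < w i ∧ 0 < h i) → ∀ x x' y y' : ℝ, x' - x = a → y' - y = b →
    ∃ pl : ι → Rect, Placed pl ⟨x, x', y, y'⟩ S ∧ ∀ i ∈ S, (pl i).width = w i ∧ (pl i).height = h i := by
  induction g with
  | nil a b ha hb =>
    intro _ x x' y y' _ _
    exact ⟨fun _ => ⟨0, 0, 0, 0⟩, Placed.empty _ _, by simp⟩
  | single a b i ha hb hw hh =>
    intro hpos x x' y y' hx hy
    have := hpos i (mem_singleton_self i)
    refine ⟨_, Placed.single i this.1 this.2 (by linarith) (by linarith), ?_⟩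
    intro j hj
    rw [mem_singleton] at hj
    subst hj
    simp [Rect.width, Rect.height]
  | vcut a1 a2 b S1 S2 hd g1 g2 ih1 ih2 =>
    intro hpos x x' y y' hx hy
    obtain ⟨pl1, A1, B1⟩ := ih1 (fun i hi => hpos i (mem_union_left _ hi)) x (x + a1) y y' (by ring) hy
    obtain ⟨pl2, A2, B2⟩ := ih2 (fun i hi => hpos i (mem_union_right _ hi)) (x + a1) x' y y'
      (by linarith) hy
    refine ⟨_, A1.vcomb (by linarith [g1.nonneg.1]) (by linarith [g2.nonneg.1]) A2 hd, ?_⟩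
    intro i hi
    by_cases h : i ∈ S1
    · rw [comb_l h]; exact B1 i h
    · rw [comb_r h]; exact B2 i ((mem_union.1 hi).resolve_left h)
  | hcut a b1 b2 S1 S2 hd g1 g2 ih1 ih2 =>
    intro hpos x x' y y' hx hy
    obtain ⟨pl1, A1, B1⟩ := ih1 (fun i hi => hpos i (mem_union_left _ hi)) x x' y (y + b1) hx (by ring)
    obtain ⟨pl2, A2, B2⟩ := ih2 (fun i hi => hpos i (mem_union_right _ hi)) x x' (y + b1) y' hx
      (by linarith)
    refine ⟨_, A1.hcomb (by linarith [g1.nonneg.2]) (by linarith [g2.nonneg.2]) A2 hd, ?_⟩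
    intro i hi
    by_cases h : i ∈ S1
    · rw [comb_l h]; exact B1 i h
    · rw [comb_r h]; exact B2 i ((mem_union.1 hi).resolve_left h)

theorem stackY {p q : ι → ℝ} (S : Finset ι) : (∀ i ∈ S, 0 < p i ∧ 0 < q i) → ∀ x x' y y' : ℝ,
    (∀ i ∈ S, q i ≤ x' - x) → ∑ i ∈ S, p i ≤ y' - y →
    ∃ pl : ι → Rect, Placed pl ⟨x, x', y, y'⟩ S ∧ (∀ i ∈ S, (pl i).width = q i ∧ (pl i).height = p i) ∧
      ∀ i ∈ S, ∀ j ∈ S, i ≠ j → (pl i).y2 ≤ (pl j).y1 ∨ (pl j).y2 ≤ (pl i).y1 := by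
  induction S using Finset.induction_on with
  | empty =>
    intro _ x x' y y' _ _
    exact ⟨fun _ => ⟨0, 0, 0, 0⟩, Placed.empty _ _, by simp, by simp⟩
  | insert i S hi ih =>
    intro hpos x x' y y' hq hp
    rw [sum_insert hi] at hp
    have h0 := hpos i (mem_insert_self _ _)
    have hq0 := hq i (mem_insert_self _ _)
    have hnn : 0 ≤ ∑ i ∈ S, p i := sum_nonneg fun j hj => (hpos j (mem_insert_of_mem hj)).1.le
    obtain ⟨pl, A, B, C⟩ := ih (fun j hj => hpos j (mem_insert_of_mem hj)) x x' (y + p i) y'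
      (fun j hj => hq j (mem_insert_of_mem hj)) (by linarith)
    have A0 := Placed.single (x := x) (x' := x') (y := y) (y' := y + p i) i h0.2 h0.1 hq0 (by linarith)
    have hres := A0.hcomb (by linarith) (by linarith) A (disjoint_singleton_left.2 hi)
    rw [← insert_eq] at hres
    have key : ∀ j ∈ insert i S, j ≠ i → j ∈ S ∧
        comb (fun _ => ⟨x, x + q i, y, y + p i⟩) pl {i} j = pl j := fun j hj hji =>
      ⟨(mem_insert.1 hj).resolve_left hji, comb_r (by simpa using hji)⟩
    have keyi : comb (fun _ => ⟨x, x + q i, y, y + p i⟩) pl {i} i = ⟨x, x + q i, y, y + p i⟩ :=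
      comb_l (mem_singleton_self i)
    refine ⟨_, hres, ?_, ?_⟩
    · intro j hj
      by_cases h : j = i
      · subst h; rw [keyi]; simp [Rect.width, Rect.height]
      · rw [(key j hj h).2]; exact B j (key j hj h).1
    · intro j hj k hk hjk
      by_cases h : j = i
      · subst h
        have hk' := key k hk (Ne.symm hjk)
        rw [keyi, hk'.2]
        exact Or.inl (A.hin k hk'.1).2.2.1
      · by_cases h' : k = i
        · subst h'
          rw [keyi, (key j hj h).2]
          exact Or.inr (A.hin j (key j hj h).1).2.2.1
        · rw [(key j hj h).2, (key k hk h').2]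
          exact C j (key j hj h).1 k (key k hk h').1 hjk

theorem stackX {p q : ι → ℝ} (S : Finset ι) : (∀ i ∈ S, 0 < p i ∧ 0 < q i) → ∀ x x' y y' : ℝ,
    (∀ i ∈ S, q i ≤ y' - y) → ∑ i ∈ S, p i ≤ x' - x →
    ∃ pl : ι → Rect, Placed pl ⟨x, x', y, y'⟩ S ∧ (∀ i ∈ S, (pl i).width = p i ∧ (pl i).height = q i) ∧
      ∀ i ∈ S, ∀ j ∈ S, i ≠ j → (pl i).x2 ≤ (pl j).x1 ∨ (pl j).x2 ≤ (pl i).x1 := by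
  induction S using Finset.induction_on with
  | empty =>
    intro _ x x' y y' _ _
    exact ⟨fun _ => ⟨0, 0, 0, 0⟩, Placed.empty _ _, by simp, by simp⟩
  | insert i S hi ih =>
    intro hpos x x' y y' hq hp
    rw [sum_insert hi] at hp
    have h0 := hpos i (mem_insert_self _ _)
    have hq0 := hq i (mem_insert_self _ _)
    have hnn : 0 ≤ ∑ i ∈ S, p i := sum_nonneg fun j hj => (hpos j (mem_insert_of_mem hj)).1.le
    obtain ⟨pl, A, B, C⟩ := ih (fun j hj => hpos j (mem_insert_of_mem hj)) (x + p i) x' y y'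
      (fun j hj => hq j (mem_insert_of_mem hj)) (by linarith)
    have A0 := Placed.single (x := x) (x' := x + p i) (y := y) (y' := y') i h0.1 h0.2 (by linarith) hq0
    have hres := A0.vcomb (by linarith) (by linarith) A (disjoint_singleton_left.2 hi)
    rw [← insert_eq] at hres
    have key : ∀ j ∈ insert i S, j ≠ i → j ∈ S ∧
        comb (fun _ => ⟨x, x + p i, y, y + q i⟩) pl {i} j = pl j := fun j hj hji =>
      ⟨(mem_insert.1 hj).resolve_left hji, comb_r (by simpa using hji)⟩
    have keyi : comb (fun _ => ⟨x, x + p i, y, y + q i⟩) pl {i} i = ⟨x, x + p i, y, y + q i⟩ :=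
      comb_l (mem_singleton_self i)
    refine ⟨_, hres, ?_, ?_⟩
    · intro j hj
      by_cases h : j = i
      · subst h; rw [keyi]; simp [Rect.width, Rect.height]
      · rw [(key j hj h).2]; exact B j (key j hj h).1
    · intro j hj k hk hjk
      by_cases h : j = i
      · subst h
        have hk' := key k hk (Ne.symm hjk)
        rw [keyi, hk'.2]
        exact Or.inl (A.hin k hk'.1).1
      · by_cases h' : k = i
        · subst h'
          rw [keyi, (key j hj h).2]
          exact Or.inr (A.hin j (key j hj h).1).1
        · rw [(key j hj h).2, (key k hk h').2]
          exact C j (key j hj h).1 k (key k hk h').1 hjk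

end RCP


namespace RCP

open Finset

section
variable {ι : Type} [DecidableEq ι]

structure CR (ε : ℝ) (S : Finset ι) (pl : ι → Rect) (P : Rect) (k : ℕ) (cont : ℕ → Rect)
    (lab : ℕ → CLabel) (asg : ι → ℕ) : Prop where
  cin : ∀ j < k, (cont j).SubRect P
  cdisj : ∀ j < k, ∀ j' < k, j ≠ j' → Disjoint (cont j).toSet (cont j').toSet
  casg : ∀ i ∈ S, asg i < k ∧ (pl i).SubRect (cont (asg i))
  clab : ContainerLabelOK S pl k cont lab asg ε

theorem CR.combine {ε : ℝ} {S1 S2 : Finset ι} {pl1 pl2 : ι → Rect} {P1 P2 P : Rect} {k1 k2 : ℕ}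
    {cont1 cont2 : ℕ → Rect} {lab1 lab2 : ℕ → CLabel} {asg1 asg2 : ι → ℕ}
    (A : CR ε S1 pl1 P1 k1 cont1 lab1 asg1) (B : CR ε S2 pl2 P2 k2 cont2 lab2 asg2)
    (h1 : P1.SubRect P) (h2 : P2.SubRect P) (hP : Disjoint P1.toSet P2.toSet) :
    CR ε (S1 ∪ S2) (comb pl1 pl2 S1) P (k1 + k2) (fun j => if j < k1 then cont1 j else cont2 (j - k1))
      (fun j => if j < k1 then lab1 j else lab2 (j - k1))
      (fun i => if i ∈ S1 then asg1 i else k1 + asg2 i) := by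
  have keyL : ∀ i ∈ S1 ∪ S2, ∀ j < k1, (if i ∈ S1 then asg1 i else k1 + asg2 i) = j →
      i ∈ S1 ∧ asg1 i = j ∧ comb pl1 pl2 S1 i = pl1 i := by
    intro i hi j hj h
    by_cases hS : i ∈ S1
    · rw [if_pos hS] at h; exact ⟨hS, h, comb_l hS⟩
    · rw [if_neg hS] at h; omega
  have keyR : ∀ i ∈ S1 ∪ S2, ∀ j, ¬ j < k1 → (if i ∈ S1 then asg1 i else k1 + asg2 i) = j →
      i ∈ S2 ∧ asg2 i = j - k1 ∧ comb pl1 pl2 S1 i = pl2 i := by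
    intro i hi j hj h
    by_cases hS : i ∈ S1
    · rw [if_pos hS] at h; have := (A.casg i hS).1; omega
    · rw [if_neg hS] at h
      exact ⟨(mem_union.1 hi).resolve_left hS, by omega, comb_r hS⟩
  refine ⟨?_, ?_, ?_, ?_, ?_, ?_, ?_⟩
  · intro j hj
    split_ifs with h
    · exact SubRect_trans (A.cin j h) h1
    · exact SubRect_trans (B.cin _ (by omega)) h2
  · intro j hj j' hj' hne
    split_ifs with h h' h'
    · exact A.cdisj j h j' h' hne
    · exact hP.mono (toSet_mono (A.cin j h)) (toSet_mono (B.cin _ (by omega)))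
    · exact hP.symm.mono (toSet_mono (B.cin _ (by omega))) (toSet_mono (A.cin _ h'))
    · exact B.cdisj _ (by omega) _ (by omega) (by omega)
  · intro i hi
    by_cases hS : i ∈ S1
    · have := A.casg i hS
      rw [if_pos hS, if_pos this.1, comb_l hS]
      exact ⟨by omega, this.2⟩
    · have := B.casg i ((mem_union.1 hi).resolve_left hS)
      rw [if_neg hS, if_neg (by omega), comb_r hS]
      refine ⟨by omega, ?_⟩
      rw [Nat.add_sub_cancel_left]; exact this.2
  · intro j hj hl i hi i' hi' e e'
    dsimp only at hl e e'
    by_cases h : j < k1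
    · rw [if_pos h] at hl
      obtain ⟨a1, a2, -⟩ := keyL i hi j h e
      obtain ⟨b1, b2, -⟩ := keyL i' hi' j h e'
      exact A.clab.1 j h hl i a1 i' b1 a2 b2
    · rw [if_neg h] at hl
      obtain ⟨a1, a2, -⟩ := keyR i hi j h e
      obtain ⟨b1, b2, -⟩ := keyR i' hi' j h e'
      exact B.clab.1 _ (by omega) hl i a1 i' b1 a2 b2
  · intro j hj hl i hi i' hi' e e' hne
    dsimp only at hl e e'
    by_cases h : j < k1
    · rw [if_pos h] at hl
      obtain ⟨a1, a2, a3⟩ := keyL i hi j h e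
      obtain ⟨b1, b2, b3⟩ := keyL i' hi' j h e'
      rw [a3, b3]
      exact A.clab.2.1 j h hl i a1 i' b1 a2 b2 hne
    · rw [if_neg h] at hl
      obtain ⟨a1, a2, a3⟩ := keyR i hi j h e
      obtain ⟨b1, b2, b3⟩ := keyR i' hi' j h e'
      rw [a3, b3]
      exact B.clab.2.1 _ (by omega) hl i a1 i' b1 a2 b2 hne
  · intro j hj hl i hi i' hi' e e' hne
    dsimp only at hl e e'
    by_cases h : j < k1
    · rw [if_pos h] at hl
      obtain ⟨a1, a2, a3⟩ := keyL i hi j h e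
      obtain ⟨b1, b2, b3⟩ := keyL i' hi' j h e'
      rw [a3, b3]
      exact A.clab.2.2.1 j h hl i a1 i' b1 a2 b2 hne
    · rw [if_neg h] at hl
      obtain ⟨a1, a2, a3⟩ := keyR i hi j h e
      obtain ⟨b1, b2, b3⟩ := keyR i' hi' j h e'
      rw [a3, b3]
      exact B.clab.2.2.1 _ (by omega) hl i a1 i' b1 a2 b2 hne
  · intro j hj hl i hi e
    dsimp only at hl e ⊢
    by_cases h : j < k1
    · rw [if_pos h] at hl ⊢
      obtain ⟨a1, a2, a3⟩ := keyL i hi j h e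
      rw [a3]
      exact A.clab.2.2.2 j h hl i a1 a2
    · rw [if_neg h] at hl ⊢
      obtain ⟨a1, a2, a3⟩ := keyR i hi j h e
      rw [a3]
      exact B.clab.2.2.2 _ (by omega) hl i a1 a2

theorem SubRect_refl (P : Rect) : P.SubRect P := ⟨le_rfl, le_rfl, le_rfl, le_rfl⟩

/-- A single container. -/
theorem CR.one {ε : ℝ} {S : Finset ι} {pl : ι → Rect} {P : Rect} (hin : ∀ i ∈ S, (pl i).SubRect P)
    (l : CLabel)
    (hlab : ContainerLabelOK S pl 1 (fun _ => P) (fun _ => l) (fun _ => 0) ε) :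
    CR ε S pl P 1 (fun _ => P) (fun _ => l) (fun _ => 0) :=
  ⟨fun _ _ => SubRect_refl _, fun j hj j' hj' h => by omega, fun i hi => ⟨one_pos, hin i hi⟩, hlab⟩

theorem Cp.nonneg {p q : ι → ℝ} {ε a b : ℝ} {k : ℕ} {S : Finset ι} (g : Cp p q ε k a b S) :
    0 ≤ a ∧ 0 ≤ b := by
  induction g with
  | empty a b ha hb => exact ⟨ha, hb⟩
  | hcont a b S ha hb hq hp => exact ⟨ha, hb⟩
  | vcont a b S ha hb hq hp => exact ⟨ha, hb⟩
  | area a b S g hS => exact g.nonneg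
  | vcut k1 k2 a1 a2 b S1 S2 hd g1 g2 ih1 ih2 => exact ⟨by linarith [ih1.1, ih2.1], ih1.2⟩
  | hcut k1 k2 a b1 b2 S1 S2 hd g1 g2 ih1 ih2 => exact ⟨ih1.1, by linarith [ih1.2, ih2.2]⟩

theorem Cp.realize {p q : ι → ℝ} {ε a b : ℝ} {k : ℕ} {S : Finset ι} (g : Cp p q ε k a b S) :
    (∀ i ∈ S, 0 < p i ∧ 0 < q i) → ∀ x x' y y' : ℝ, x' - x = a → y' - y = b →
    ∃ pl : ι → Rect, Placed pl ⟨x, x', y, y'⟩ S ∧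
      (∀ i ∈ S, ((pl i).width = p i ∧ (pl i).height = q i) ∨ ((pl i).width = q i ∧ (pl i).height = p i)) ∧
      ∃ cont lab asg, CR ε S pl ⟨x, x', y, y'⟩ k cont lab asg := by
  induction g with
  | empty a b ha hb =>
    intro _ x x' y y' _ _
    refine ⟨fun _ => ⟨0, 0, 0, 0⟩, Placed.empty _ _, by simp, fun _ => ⟨0, 0, 0, 0⟩, fun _ => .large,
      fun _ => 0, ?_, ?_, ?_, ?_, ?_, ?_, ?_⟩ <;> simp
  | hcont a b S ha hb hq hp =>
    intro hpos x x' y y' hx hy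
    obtain ⟨pl, A, B, C⟩ := stackY S hpos x x' y y' (by rw [hx]; exact hq) (by rw [hy]; exact hp)
    refine ⟨pl, A, fun i hi => Or.inr (B i hi), _, _, _, CR.one A.hin .horizontal ⟨?_, ?_, ?_, ?_⟩⟩
    · intro j _ h; cases h
    · intro j _ _ i hi i' hi' _ _ hne; exact C i hi i' hi' hne
    · intro j _ h; cases h
    · intro j _ h; cases h
  | vcont a b S ha hb hq hp =>
    intro hpos x x' y y' hx hy
    obtain ⟨pl, A, B, C⟩ := stackX S hpos x x' y y' (by rw [hy]; exact hq) (by rw [hx]; exact hp)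
    refine ⟨pl, A, fun i hi => Or.inl (B i hi), _, _, _, CR.one A.hin .vertical ⟨?_, ?_, ?_, ?_⟩⟩
    · intro j _ h; cases h
    · intro j _ h; cases h
    · intro j _ _ i hi i' hi' _ _ hne; exact C i hi i' hi' hne
    · intro j _ h; cases h
  | area a b S g hS =>
    intro hpos x x' y y' hx hy
    obtain ⟨pl, A, B⟩ := g.realize hpos x x' y y' hx hy
    refine ⟨pl, A, fun i hi => Or.inl (B i hi), _, _, _, CR.one A.hin .area ⟨?_, ?_, ?_, ?_⟩⟩
    · intro j _ h; cases h
    · intro j _ h; cases h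
    · intro j _ h; cases h
    · intro j _ _ i hi _
      rw [(B i hi).1, (B i hi).2]
      simp only [Rect.width, Rect.height, hx, hy]
      exact hS i hi
  | vcut k1 k2 a1 a2 b S1 S2 hd g1 g2 ih1 ih2 =>
    intro hpos x x' y y' hx hy
    obtain ⟨pl1, A1, B1, c1, l1, s1, C1⟩ :=
      ih1 (fun i hi => hpos i (mem_union_left _ hi)) x (x + a1) y y' (by ring) hy
    obtain ⟨pl2, A2, B2, c2, l2, s2, C2⟩ := ih2 (fun i hi => hpos i (mem_union_right _ hi)) (x + a1) x' y y'
      (by linarith) hy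
    have n1 := g1.nonneg.1
    have n2 := g2.nonneg.1
    refine ⟨_, A1.vcomb (by linarith) (by linarith) A2 hd, ?_, _, _, _,
      C1.combine C2 ⟨le_rfl, by dsimp; linarith, le_rfl, le_rfl⟩ ⟨by dsimp; linarith, le_rfl, le_rfl, le_rfl⟩
        (disj_x le_rfl)⟩
    intro i hi
    by_cases h : i ∈ S1
    · rw [comb_l h]; exact B1 i h
    · rw [comb_r h]; exact B2 i ((mem_union.1 hi).resolve_left h)
  | hcut k1 k2 a b1 b2 S1 S2 hd g1 g2 ih1 ih2 =>
    intro hpos x x' y y' hx hy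
    obtain ⟨pl1, A1, B1, c1, l1, s1, C1⟩ :=
      ih1 (fun i hi => hpos i (mem_union_left _ hi)) x x' y (y + b1) hx (by ring)
    obtain ⟨pl2, A2, B2, c2, l2, s2, C2⟩ := ih2 (fun i hi => hpos i (mem_union_right _ hi)) x x' (y + b1) y'
      hx (by linarith)
    have n1 := g1.nonneg.2
    have n2 := g2.nonneg.2
    refine ⟨_, A1.hcomb (by linarith) (by linarith) A2 hd, ?_, _, _, _,
      C1.combine C2 ⟨le_rfl, le_rfl, le_rfl, by dsimp; linarith⟩ ⟨le_rfl, le_rfl, by dsimp; linarith, le_rfl⟩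
        (disj_y le_rfl)⟩
    intro i hi
    by_cases h : i ∈ S1
    · rw [comb_l h]; exact B1 i h
    · rw [comb_r h]; exact B2 i ((mem_union.1 hi).resolve_left h)

end

theorem scaled_thm {ε : ℝ} (hε : 0 < ε) (hε1 : ε < 1) : ∃ kb : ℕ, ∀ (ι : Type) [DecidableEq ι]
    (w h p q : ι → ℝ) (U : Finset ι), Gp w h 1 1 U →
    (∀ i ∈ U, 0 < p i ∧ p i ≤ q i ∧ ((w i = q i ∧ h i = p i) ∨ (w i = p i ∧ h i = q i))) →
    ∃ A ⊆ U, ∃ k ≤ kb, Cp p q ε k 1 1 A ∧ (1 - 4 * ε) * (U.card : ℝ) ≤ A.card := by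
  obtain ⟨L, hLε⟩ := exists_nat_ge (1 / ε)
  rw [div_le_iff₀ hε] at hLε
  have hL0 : (0 : ℝ) < L := pos_of_mul_pos_left (lt_of_lt_of_le one_pos hLε) hε.le
  have hL : 0 < L := by exact_mod_cast hL0
  have hst : ∀ δ : ℝ, ∃ (K : ℕ) (μ : ℝ), 0 < δ → δ ≤ 1 → 0 < μ ∧ μ ≤ δ ∧ ∀ (ι : Type) [DecidableEq ι]
      (w h p q : ι → ℝ) (T S : Finset ι), Disjoint T S → Lng w h p q δ μ T →
      (∀ i ∈ S, 0 < p i ∧ p i ≤ q i ∧ q i ≤ μ ∧ ((w i = q i ∧ h i = p i) ∨ (w i = p i ∧ h i = q i))) →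
      Gp w h 1 1 (T ∪ S) →
      ∃ A ⊆ T ∪ S, L * ((T ∪ S) \ A).card ≤ 2 * (T ∪ S).card ∧ ∃ k ≤ K, Cp p q ε k 1 1 A := by
    intro δ
    by_cases hd : 0 < δ ∧ δ ≤ 1
    · obtain ⟨K, μ, H⟩ := struct_thm hε hε1 hL hd.1 hd.2
      exact ⟨K, μ, fun _ _ => H⟩
    · exact ⟨0, 0, fun h1 h2 => absurd ⟨h1, h2⟩ hd⟩
  choose K μ HS using hst
  let d : ℕ → ℝ := fun n => Nat.rec (motive := fun _ => ℝ) 1 (fun _ x => μ x) n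
  have dsucc : ∀ n, d (n + 1) = μ (d n) := fun n => rfl
  have d01 : ∀ n, 0 < d n ∧ d n ≤ 1 := by
    intro n
    induction n with
    | zero => exact ⟨one_pos, le_rfl⟩
    | succ n ih =>
      rw [dsucc]
      obtain ⟨h1, h2, -⟩ := HS (d n) ih.1 ih.2
      exact ⟨h1, h2.trans ih.2⟩
  have danti : Antitone d := antitone_nat_of_succ_le fun n => by
    rw [dsucc]; exact (HS (d n) (d01 n).1 (d01 n).2).2.1
  obtain ⟨n0, hn0⟩ := exists_nat_ge (L / (d L * d L))
  have hdL := (d01 L).1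
  rw [div_le_iff₀ (by positivity)] at hn0
  refine ⟨n0 + ∑ j ∈ range L, K (d j), ?_⟩
  intro ι _ w h p q U gp hU
  by_cases hsmall : U.card ≤ n0
  · refine ⟨U, subset_rfl, U.card, by omega, gp.toCp fun i hi => (hU i hi).2.2, ?_⟩
    have : (0 : ℝ) ≤ U.card := Nat.cast_nonneg _
    nlinarith
  push Not at hsmall
  let D : ℕ → Finset ι := fun j => U.filter (fun i => d (j + 1) < q i ∧ q i ≤ d j)
  obtain ⟨j, hj, hDj⟩ := pigeon U D hL (fun j _ => filter_subset _ _) (by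
    have aux : ∀ j k, j < k → Disjoint (D j) (D k) := by
      intro j k hjk
      rw [Finset.disjoint_left]
      intro i hi hi'
      have h1 := (mem_filter.1 hi).2.1
      have h2 := (mem_filter.1 hi').2.2
      have := danti (show j + 1 ≤ k from hjk)
      linarith
    intro j _ k _ hjk
    rcases lt_or_gt_of_ne hjk with h | h
    · exact aux _ _ h
    · exact (aux _ _ h).symm)
  obtain ⟨hμ0, hμd, HH⟩ := HS (d j) (d01 j).1 (d01 j).2
  rw [← dsucc] at hμ0 hμd HH
  set T := U.filter (fun i => d j < q i ∧ p i ≤ d (j + 1)) with hT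
  set S := U.filter (fun i => q i ≤ d (j + 1)) with hS
  set Bg := U.filter (fun i => d (j + 1) < p i) with hBg
  have hTS : Disjoint T S := by
    rw [Finset.disjoint_left]
    intro i hi hi'
    have h1 := (mem_filter.1 hi).2.1
    have h2 := (mem_filter.1 hi').2
    linarith
  have hTSU : T ∪ S ⊆ U := union_subset (filter_subset _ _) (filter_subset _ _)
  obtain ⟨A, hA, hAc, k, hk, cp⟩ := HH ι w h p q T S hTS (by
      intro i hi
      obtain ⟨hi, h1, h2⟩ := mem_filter.1 hi
      exact ⟨(hU i hi).1, h2, h1, (hU i hi).2.2⟩) (by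
      intro i hi
      obtain ⟨hi, h1⟩ := mem_filter.1 hi
      exact ⟨(hU i hi).1, (hU i hi).2.1, h1, (hU i hi).2.2⟩) (gp.subset hTSU)
  have hk' : K (d j) ≤ ∑ j ∈ range L, K (d j) :=
    single_le_sum (f := fun j => K (d j)) (fun _ _ => Nat.zero_le _) (mem_range.2 hj)
  refine ⟨A, hA.trans hTSU, k, by omega, cp, ?_⟩
  have hBgc : L * Bg.card ≤ U.card := by
    have h1 := (gp.subset (filter_subset (fun i => d (j + 1) < p i) U)).area_le (by
      intro i hi
      obtain ⟨l1, l2, l3⟩ := hU i (mem_filter.1 hi).1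
      rcases l3 with l3 | l3 <;> rw [l3.1, l3.2] <;> constructor <;> linarith)
    have h2 : (Bg.card : ℝ) * (d L * d L) ≤ ∑ i ∈ Bg, w i * h i := by
      rw [← nsmul_eq_mul]
      refine card_nsmul_le_sum _ _ _ (fun i hi => ?_)
      obtain ⟨hi, hi'⟩ := mem_filter.1 hi
      obtain ⟨l1, l2, l3⟩ := hU i hi
      have h3 : d L ≤ p i := (danti (show j + 1 ≤ L from hj)).trans hi'.le
      have h4 : d L * d L ≤ p i * q i := mul_le_mul h3 (h3.trans l2) hdL.le l1.le
      rcases l3 with l3 | l3 <;> rw [l3.1, l3.2]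
      · linarith [h4, mul_comm (p i) (q i)]
      · exact h4
    have h3 : (Bg.card : ℝ) * (d L * d L) ≤ 1 := by linarith
    have h4 : (L * Bg.card : ℝ) ≤ n0 := by
      refine le_of_mul_le_mul_right ?_ (mul_pos hdL hdL)
      calc (L * Bg.card : ℝ) * (d L * d L) = L * (Bg.card * (d L * d L)) := by ring
        _ ≤ L * 1 := by gcongr
        _ ≤ _ := by linarith
    have h5 : L * Bg.card ≤ n0 := by exact_mod_cast h4
    omega
  have hsub : U \ A ⊆ (D j ∪ Bg) ∪ ((T ∪ S) \ A) := by
    intro i hi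
    obtain ⟨hi, hiA⟩ := mem_sdiff.1 hi
    by_cases h1 : q i ≤ d (j + 1)
    · exact mem_union_right _ (mem_sdiff.2 ⟨mem_union_right _ (mem_filter.2 ⟨hi, h1⟩), hiA⟩)
    by_cases h2 : q i ≤ d j
    · exact mem_union_left _ (mem_union_left _ (mem_filter.2 ⟨hi, not_le.1 h1, h2⟩))
    by_cases h3 : p i ≤ d (j + 1)
    · exact mem_union_right _ (mem_sdiff.2 ⟨mem_union_left _ (mem_filter.2 ⟨hi, not_le.1 h2, h3⟩), hiA⟩)
    · exact mem_union_left _ (mem_union_right _ (mem_filter.2 ⟨hi, not_le.1 h3⟩))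
  have hc1 : (U \ A).card ≤ (D j).card + Bg.card + ((T ∪ S) \ A).card :=
    (card_le_card hsub).trans ((card_union_le _ _).trans (Nat.add_le_add_right (card_union_le _ _) _))
  have hc2 : (T ∪ S).card ≤ U.card := card_le_card hTSU
  have hc3 : L * (U \ A).card ≤ 4 * U.card := by
    have := Nat.mul_le_mul_left L hc1
    rw [mul_add, mul_add] at this
    omega
  have hc4 : (L : ℝ) * (U \ A).card ≤ 4 * U.card := by exact_mod_cast hc3
  have hc5 : ((U \ A).card : ℝ) + A.card = U.card := by
    exact_mod_cast card_sdiff_add_card_eq_card (hA.trans hTSU)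
  have hx : (0 : ℝ) ≤ (U \ A).card := Nat.cast_nonneg _
  have : ((U \ A).card : ℝ) ≤ 4 * ε * U.card := by
    calc ((U \ A).card : ℝ) ≤ (L * ε) * (U \ A).card := by nlinarith
      _ = ε * (L * (U \ A).card) := by ring
      _ ≤ ε * (4 * U.card) := by gcongr
      _ = _ := by ring
  linarith

end RCP


/-- For cardinality 2GGK with guillotine cuts and 90 degree rotations
allowed, there is a guillotine-separable container packing with a constant (depending
only on `ε`) number of containers whose cardinality is at least `(4/5 - O(ε))` times
the optimum. -/
theorem rotated_container_packing_four_fifths_cardinality :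
    ∃ C : ℝ, 0 < C ∧
    ∀ ε : ℝ, 0 < ε → ε < 1 →
    ∃ kb : ℕ,
    ∀ (ι : Type) (items : Finset ι) (wd ht : ι → ℕ) (N : ℕ),
      0 < N →
      (∀ i ∈ items, 0 < wd i ∧ 0 < ht i) →
      ∀ OPT : Finset ι, OPT ⊆ items →
        (∃ place, IsPackingRot (fun i => (wd i : ℝ)) (fun i => (ht i : ℝ))
            OPT place (knapsack (N : ℝ)) ∧
          GuillotineSep place (knapsack (N : ℝ)) OPT) →
        (∀ T : Finset ι, T ⊆ items →
          (∃ place, IsPackingRot (fun i => (wd i : ℝ)) (fun i => (ht i : ℝ))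
              T place (knapsack (N : ℝ)) ∧
            GuillotineSep place (knapsack (N : ℝ)) T) →
          T.card ≤ OPT.card) →
        ∃ (APX : Finset ι) (place : ι → Rect) (k : ℕ),
          APX ⊆ items ∧ k ≤ kb ∧
          IsContainerPackingRot (fun i => (wd i : ℝ)) (fun i => (ht i : ℝ)) ε
            APX place (knapsack (N : ℝ)) k ∧
          GuillotineSep place (knapsack (N : ℝ)) APX ∧
          (4 / 5 - C * ε) * (OPT.card : ℝ) ≤ (APX.card : ℝ) := by
  refine ⟨4, by norm_num, ?_⟩
  intro ε hε hε1
  obtain ⟨kb, H⟩ := RCP.scaled_thm hε hε1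
  refine ⟨kb, ?_⟩
  intro ι items wd ht N hN hpos OPT hOPT hplace _
  classical
  obtain ⟨place, hpack, hsep⟩ := hplace
  have hN0 : (0 : ℝ) < N := by exact_mod_cast hN
  have gp := RCP.sep_toGp hsep hN0.le hN0.le hpack.hin
  have gp1 := gp.scale (c := (N : ℝ)⁻¹) (by positivity)
  have e1 : (N : ℝ)⁻¹ * (knapsack (N : ℝ)).width = 1 := by
    simp only [knapsack, Rect.width, sub_zero]; field_simp
  have e2 : (N : ℝ)⁻¹ * (knapsack (N : ℝ)).height = 1 := by
    simp only [knapsack, Rect.height, sub_zero]; field_simp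
  rw [e1, e2] at gp1
  let p0 : ι → ℝ := fun i => min (wd i : ℝ) (ht i : ℝ)
  let q0 : ι → ℝ := fun i => max (wd i : ℝ) (ht i : ℝ)
  have hor : ∀ i, (p0 i = wd i ∧ q0 i = ht i) ∨ (p0 i = ht i ∧ q0 i = wd i) := by
    intro i
    rcases le_total (wd i : ℝ) (ht i) with h | h
    · exact Or.inl ⟨min_eq_left h, max_eq_right h⟩
    · exact Or.inr ⟨min_eq_right h, max_eq_left h⟩
  have hp0 : ∀ i ∈ OPT, 0 < p0 i ∧ 0 < q0 i := by
    intro i hi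
    have h1 : (0 : ℝ) < wd i := by exact_mod_cast (hpos i (hOPT hi)).1
    have h2 : (0 : ℝ) < ht i := by exact_mod_cast (hpos i (hOPT hi)).2
    exact ⟨lt_min h1 h2, lt_max_of_lt_left h1⟩
  obtain ⟨A, hA, k, hk, cp, hcard⟩ := H ι _ _ (fun i => (N : ℝ)⁻¹ * p0 i) (fun i => (N : ℝ)⁻¹ * q0 i) OPT gp1 (by
    intro i hi
    refine ⟨mul_pos (by positivity) (hp0 i hi).1,
      mul_le_mul_of_nonneg_left min_le_max (by positivity), ?_⟩
    rcases hpack.hdims i hi with h | h <;> rcases hor i with h' | h' <;>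
      simp only [h.1, h.2, h'.1, h'.2, and_self, or_true, true_or])
  have cp1 := cp.scale (c := (N : ℝ)) hN0.le
  have e3 : (fun i => (N : ℝ) * ((N : ℝ)⁻¹ * p0 i)) = p0 := by
    funext i; field_simp
  have e4 : (fun i => (N : ℝ) * ((N : ℝ)⁻¹ * q0 i)) = q0 := by
    funext i; field_simp
  rw [e3, e4, mul_one] at cp1
  obtain ⟨pl, hPl, hdim, cont, lab, asg, hC⟩ := cp1.realize (fun i hi => hp0 i (hA hi)) 0 N 0 N
    (sub_zero _) (sub_zero _)
  refine ⟨A, pl, k, hA.trans hOPT, hk, ⟨⟨?_, hPl.hin, hPl.hdisj⟩, cont, lab, asg, hC.cin, hC.cdisj,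
    hC.casg, hC.clab⟩, hPl.sep, ?_⟩
  · intro i hi
    rcases hdim i hi with h | h <;> rcases hor i with h' | h' <;> simp only [h.1, h.2, h'.1, h'.2]
    · exact Or.inl ⟨trivial, trivial⟩
    · exact Or.inr ⟨trivial, trivial⟩
    · exact Or.inr ⟨trivial, trivial⟩
    · exact Or.inl ⟨trivial, trivial⟩
  · have : (0 : ℝ) ≤ OPT.card := Nat.cast_nonneg _
    linarith
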